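/- arXiv:1902.07426 — 2 statements merged into one kernel-verified Lean document; each statement's English description precedes it below -/
import Mathlib

section
/- For every ε ∈ (0,1/2] there exist a constant C_ε > 0 and n_0 such that the following holds. For every n ≥ n_0, every integer r with 1 ≤ r < (log* n)/5, every product probability measure μ = μ_1 × ... × μ_r on ({0,1}^n)^r, and every (n,r) coin-flipping protocol f : ({0,1}^n)^r → {0,1}, there exist b ∈ {0,1} and a coalition B ⊆ [n] with |B| ≤ C_ε·n·r·4^r/log^{(4r)} n such that I_B^b(f) ≥ 1 − ε. In particular, no such protocol is ε-resilient against coalitions of size ⌈C_ε·n·r·4^r/log^{(4r)} n⌉. -/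
open MeasureTheory
open scoped ENNReal

/-- An `(n,r)`-strategy for a coalition `B`: in round `i`, given the bits broadcast by the
players outside `B` in the first `i+1` rounds, it chooses the bits of the players in `B`
(coordinates outside `B` of the output are irrelevant). -/
def Strategy (n r : ℕ) (B : Finset (Fin n)) : Type :=
  (i : Fin r) → (Fin (i.val + 1) → ({j : Fin n // j ∉ B} → Bool)) → (Fin n → Bool)

/-- The transcript of the protocol when the good players broadcast according to `α` and the
coalition `B` follows strategy `π` (with rushing: in round `i` the coalition sees the good
players' round-`i` bits). -/
def execP {n r : ℕ} (B : Finset (Fin n)) (π : Strategy n r B)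
    (α : Fin r → Fin n → Bool) : Fin r → Fin n → Bool :=
  fun i j =>
    if j ∈ B then
      π i (fun k => fun j' =>
        α ⟨k.val, by have hk := k.isLt; have hi := i.isLt; omega⟩ j'.val) j
    else α i j

/-- `I_{π,B}^b(f)`: the probability that the output is `b` when the coalition `B` follows `π`.
The good players' bits are sampled from the product measure `⨂_i ⨂_j μs i j`; since the
transcript and the strategy only depend on the coordinates outside `B`, this agrees with
sampling only the coordinates outside `B`. -/
noncomputable def IPi {n r : ℕ} (μs : Fin r → Fin n → Measure Bool)
    (f : (Fin r → Fin n → Bool) → Bool) (B : Finset (Fin n)) (π : Strategy n r B)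
    (b : Bool) : ℝ≥0∞ :=
  (Measure.pi fun i => Measure.pi fun j => μs i j) {α | f (execP B π α) = b}

/-- `I_B^b(f)`: the influence of coalition `B` towards `b`, i.e. the supremum over strategies
of the probability that the output is `b`. -/
noncomputable def IB {n r : ℕ} (μs : Fin r → Fin n → Measure Bool)
    (f : (Fin r → Fin n → Bool) → Bool) (B : Finset (Fin n)) (b : Bool) : ℝ :=
  (⨆ π : Strategy n r B, IPi μs f B π b).toReal

/-- The `j`-times iterated base-2 logarithm. -/
noncomputable def iterLog : ℕ → ℝ → ℝ
  | 0, x => x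
  | (j+1), x => Real.logb 2 (iterLog j x)

/-- `log* x`: the least `j` with `log^{(j)} x ≤ 1`. -/
noncomputable def logStar (x : ℝ) : ℕ := sInf {j : ℕ | iterLog j x ≤ 1}

namespace MRB

/-- Expectation for a product weight. -/
noncomputable def Ex {n : ℕ} (p : Fin n → Bool → ℝ) (F : (Fin n → Bool) → ℝ) : ℝ :=
  ∑ x, (∏ j, p j (x j)) * F x

/-- Product probability weights. -/
def IsPD {n : ℕ} (p : Fin n → Bool → ℝ) : Prop :=
  (∀ j b, 0 ≤ p j b) ∧ ∀ j, p j true + p j false = 1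

theorem Ex_add {n : ℕ} (p : Fin n → Bool → ℝ) (F G : (Fin n → Bool) → ℝ) :
    Ex p (fun x => F x + G x) = Ex p F + Ex p G := by
  simp only [Ex, mul_add, Finset.sum_add_distrib]

theorem Ex_sub {n : ℕ} (p : Fin n → Bool → ℝ) (F G : (Fin n → Bool) → ℝ) :
    Ex p (fun x => F x - G x) = Ex p F - Ex p G := by
  simp only [Ex, mul_sub, Finset.sum_sub_distrib]

theorem Ex_mul {n : ℕ} (p : Fin n → Bool → ℝ) (c : ℝ) (F : (Fin n → Bool) → ℝ) :
    Ex p (fun x => c * F x) = c * Ex p F := by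
  simp only [Ex, Finset.mul_sum]
  exact Finset.sum_congr rfl fun x _ => by ring

theorem Ex_mono {n : ℕ} {p : Fin n → Bool → ℝ} (hp : IsPD p) {F G : (Fin n → Bool) → ℝ}
    (h : ∀ x, F x ≤ G x) : Ex p F ≤ Ex p G := by
  unfold Ex
  refine Finset.sum_le_sum fun x _ => mul_le_mul_of_nonneg_left (h x) ?_
  exact Finset.prod_nonneg fun j _ => hp.1 j _

theorem Ex_const {n : ℕ} {p : Fin n → Bool → ℝ} (hp : IsPD p) (c : ℝ) :
    Ex p (fun _ => c) = c := by
  unfold Ex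
  rw [← Finset.sum_mul]
  have : ∑ x : Fin n → Bool, ∏ j, p j (x j) = 1 := by
    have h := (Finset.prod_univ_sum (fun _ : Fin n => (Finset.univ : Finset Bool)) p).symm
    rw [Fintype.piFinset_univ] at h
    rw [h]
    apply Finset.prod_eq_one
    intro j _
    simpa using hp.2 j
  rw [this, one_mul]

theorem Ex_nonneg {n : ℕ} {p : Fin n → Bool → ℝ} (hp : IsPD p) {F : (Fin n → Bool) → ℝ}
    (h : ∀ x, 0 ≤ F x) : 0 ≤ Ex p F := by
  rw [← Ex_const hp 0]; exact Ex_mono hp h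

theorem Ex_cons {n : ℕ} (p : Fin (n+1) → Bool → ℝ) (F : (Fin (n+1) → Bool) → ℝ) :
    Ex p F = p 0 true * Ex (fun j => p j.succ) (fun x => F (Fin.cons true x))
      + p 0 false * Ex (fun j => p j.succ) (fun x => F (Fin.cons false x)) := by
  unfold Ex
  rw [← (Fin.consEquiv (fun _ => Bool)).sum_comp, Fintype.sum_prod_type]
  simp only [Fin.consEquiv, Equiv.coe_fn_mk, Fin.prod_univ_succ, Fin.cons_zero, Fin.cons_succ,
    Fintype.sum_bool, Finset.mul_sum]
  congr 1 <;> exact Finset.sum_congr rfl fun x _ => by ring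

theorem IsPD.succ {n : ℕ} {p : Fin (n+1) → Bool → ℝ} (hp : IsPD p) :
    IsPD (fun j => p j.succ) := ⟨fun j b => hp.1 _ b, fun j => hp.2 _⟩

/-- discrete derivative -/
def Df {n : ℕ} (j : Fin n) (F : (Fin n → Bool) → ℝ) : (Fin n → Bool) → ℝ :=
  fun x => F (Function.update x j true) - F (Function.update x j false)

theorem Df_cons_zero {n : ℕ} (F : (Fin (n+1) → Bool) → ℝ) (b : Bool) (x : Fin n → Bool) :
    Df 0 F (Fin.cons b x) = F (Fin.cons true x) - F (Fin.cons false x) := by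
  simp [Df, Fin.update_cons_zero]

theorem Df_cons_succ {n : ℕ} (F : (Fin (n+1) → Bool) → ℝ) (j : Fin n) (b : Bool)
    (x : Fin n → Bool) :
    Df j.succ F (Fin.cons b x) = Df j (fun x => F (Fin.cons b x)) x := by
  simp [Df, Fin.cons_update]

theorem Ex_CS {n : ℕ} {p : Fin n → Bool → ℝ} (hp : IsPD p) (F G : (Fin n → Bool) → ℝ) :
    Ex p (fun x => F x * G x) ≤
      Real.sqrt (Ex p (fun x => F x ^ 2)) * Real.sqrt (Ex p (fun x => G x ^ 2)) := by
  unfold Ex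
  have hw : ∀ x : Fin n → Bool, 0 ≤ ∏ j, p j (x j) :=
    fun x => Finset.prod_nonneg fun j _ => hp.1 j _
  have := Real.sum_mul_le_sqrt_mul_sqrt Finset.univ
    (fun x : Fin n → Bool => Real.sqrt (∏ j, p j (x j)) * F x)
    (fun x => Real.sqrt (∏ j, p j (x j)) * G x)
  have e1 : ∀ (H : (Fin n → Bool) → ℝ) x, (Real.sqrt (∏ j, p j (x j)) * H x)^2
      = (∏ j, p j (x j)) * H x ^ 2 := by
    intro H x; rw [mul_pow, Real.sq_sqrt (hw x)]
  have e2 : ∀ x, (Real.sqrt (∏ j, p j (x j)) * F x) * (Real.sqrt (∏ j, p j (x j)) * G x)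
      = (∏ j, p j (x j)) * (F x * G x) := by
    intro x
    have := Real.mul_self_sqrt (hw x)
    calc _ = (Real.sqrt (∏ j, p j (x j)) * Real.sqrt (∏ j, p j (x j))) * (F x * G x) := by ring
      _ = _ := by rw [this]
  simp only [e1, e2] at this
  exact this

theorem two_point {p q a b : ℝ} (hp : 0 ≤ p) (hq : 0 ≤ q) (hpq : p + q = 1)
    (ha : 0 ≤ a) (hb : 0 ≤ b) :
    p * (a^2 * Real.log (a^2)) + q * (b^2 * Real.log (b^2))
      - (p * a^2 + q * b^2) * Real.log (p * a^2 + q * b^2) ≤ (a - b)^2 := by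
  set v := p * a^2 + q * b^2 with hv
  rcases (by positivity : 0 ≤ v).eq_or_lt with h0 | hpos
  · have h1 : p * a^2 = 0 := by nlinarith [mul_nonneg hp (sq_nonneg a), mul_nonneg hq (sq_nonneg b)]
    have h2 : q * b^2 = 0 := by nlinarith [mul_nonneg hp (sq_nonneg a), mul_nonneg hq (sq_nonneg b)]
    rw [← mul_assoc, ← mul_assoc, h1, h2, ← h0]
    simp; positivity
  have key : ∀ c : ℝ, c^2 * Real.log (c^2) ≤ c^2 * Real.log v + c^2 * (c^2 / v - 1) := by
    intro c
    rcases eq_or_ne c 0 with rfl | hc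
    · simp
    have hc2 : 0 < c^2 := by positivity
    have := Real.log_le_sub_one_of_pos (div_pos hc2 hpos)
    rw [Real.log_div hc2.ne' hpos.ne'] at this
    nlinarith
  have ka := mul_le_mul_of_nonneg_left (key a) hp
  have kb := mul_le_mul_of_nonneg_left (key b) hq
  have e : p * (a^2 * (a^2 / v - 1)) + q * (b^2 * (b^2/v - 1)) ≤ (a-b)^2 := by
    have : p * (a^2 * (a^2 / v - 1)) + q * (b^2 * (b^2/v - 1)) = (p * a^4 + q * b^4 - v^2) / v := by
      field_simp
      rw [hv]; ring
    rw [this, div_le_iff₀ hpos]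
    have hq' : q = 1 - p := by linarith
    have : (a-b)^2 * v - (p * a^4 + q * b^4 - v^2) = (a-b)^2 * (p * a - q * b)^2 := by
      rw [hv, hq']; ring
    nlinarith [mul_nonneg (sq_nonneg (a-b)) (sq_nonneg (p*a-q*b))]
  nlinarith

theorem logSob {n : ℕ} {p : Fin n → Bool → ℝ} (hp : IsPD p) (F : (Fin n → Bool) → ℝ) :
    Ex p (fun x => F x ^ 2 * Real.log (F x ^ 2))
      - Ex p (fun x => F x ^ 2) * Real.log (Ex p (fun x => F x ^ 2))
      ≤ ∑ j, Ex p (fun x => (Df j F x)^2) := by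
  induction n with
  | zero => simp [Ex]
  | succ n ih =>
    have hps := hp.succ
    have i1 := ih hps (fun x => F (Fin.cons true x))
    have i0 := ih hps (fun x => F (Fin.cons false x))
    rw [Ex_cons p, Ex_cons p, Fin.sum_univ_succ]
    simp only [Ex_cons p (fun x => (Df _ F x)^2), Df_cons_zero, Df_cons_succ]
    rw [Finset.sum_add_distrib, ← Finset.mul_sum, ← Finset.mul_sum]
    set E1 := Ex (fun j => p j.succ) (fun x => F (Fin.cons true x) ^ 2) with hE1
    set E0 := Ex (fun j => p j.succ) (fun x => F (Fin.cons false x) ^ 2) with hE0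
    have n1 : 0 ≤ E1 := Ex_nonneg hps fun x => sq_nonneg _
    have n0 : 0 ≤ E0 := Ex_nonneg hps fun x => sq_nonneg _
    have tp := two_point (hp.1 0 true) (hp.1 0 false) (hp.2 0) (Real.sqrt_nonneg E1)
      (Real.sqrt_nonneg E0)
    rw [Real.sq_sqrt n1, Real.sq_sqrt n0] at tp
    have cs := Ex_CS hps (fun x => F (Fin.cons true x)) (fun x => F (Fin.cons false x))
    have ed : Ex (fun j => p j.succ) (fun x => (F (Fin.cons true x) - F (Fin.cons false x))^2)
        = E1 + E0 - 2 * Ex (fun j => p j.succ)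
            (fun x => F (Fin.cons true x) * F (Fin.cons false x)) := by
      rw [← Ex_mul, hE1, hE0, ← Ex_add, ← Ex_sub]
      congr 1; funext x; ring
    have hs : (Real.sqrt E1 - Real.sqrt E0)^2 = E1 + E0 - 2 * (Real.sqrt E1 * Real.sqrt E0) := by
      nlinarith [Real.sq_sqrt n1, Real.sq_sqrt n0]
    rw [← add_mul, hp.2 0, one_mul, ed]
    have m1 := mul_le_mul_of_nonneg_left i1 (hp.1 0 true)
    have m0 := mul_le_mul_of_nonneg_left i0 (hp.1 0 false)
    nlinarith

theorem ent_lower {n : ℕ} {p : Fin n → Bool → ℝ} (hp : IsPD p) (F : (Fin n → Bool) → ℝ)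
    {s : ℝ} (hs : 0 < s) :
    (1 + Real.log s) * Ex p (fun x => F x ^ 2) - s * (Ex p (fun x => |F x|))^2 ≤
    Ex p (fun x => F x ^ 2 * Real.log (F x ^ 2))
      - Ex p (fun x => F x ^ 2) * Real.log (Ex p (fun x => F x ^ 2)) := by
  set v := Ex p (fun x => F x ^ 2) with hv
  set m := Ex p (fun x => |F x|) with hm
  have v0 : 0 ≤ v := Ex_nonneg hp fun x => sq_nonneg _
  have m0 : 0 ≤ m := Ex_nonneg hp fun x => abs_nonneg _
  have key : ∀ c : ℝ, 0 < c → 2 * (1 - Real.log c) * v - 2 / c * m ≤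
      Ex p (fun x => F x ^ 2 * Real.log (F x ^ 2)) := by
    intro c hc
    rw [hv, hm, ← Ex_mul, ← Ex_mul, ← Ex_sub]
    apply Ex_mono hp
    intro x
    rcases eq_or_ne (F x) 0 with h | h
    · simp [h]
    have ha : 0 < |F x| := abs_pos.mpr h
    have := Real.one_sub_inv_le_log_of_pos (mul_pos hc ha)
    rw [Real.log_mul hc.ne' ha.ne'] at this
    have e2 : Real.log (F x ^ 2) = 2 * Real.log |F x| := by
      rw [← sq_abs, Real.log_pow]; norm_num
    rw [e2, ← sq_abs]
    have : |F x|^2 * (1 - (c * |F x|)⁻¹) ≤ |F x|^2 * (Real.log c + Real.log |F x|) :=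
      mul_le_mul_of_nonneg_left this (by positivity)
    have e3 : |F x|^2 * (1 - (c * |F x|)⁻¹) = |F x|^2 - 1 / c * |F x| := by
      field_simp
    rw [e3] at this
    have e4 : 2 / c = 2 * (1/c) := by ring
    rw [e4]
    nlinarith
  rcases v0.eq_or_lt with h0 | vpos
  · rw [← h0]
    have h1 := key 1 one_pos
    have hm0 : m = 0 := by
      have h2 : ∀ x, 0 ≤ (∏ j, p j (x j)) * F x ^2 := fun x =>
        mul_nonneg (Finset.prod_nonneg fun j _ => hp.1 j _) (sq_nonneg _)
      have h3 : ∑ x, (∏ j, p j (x j)) * F x ^2 = 0 := by rw [h0, hv]; rfl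
      rw [Finset.sum_eq_zero_iff_of_nonneg (fun x _ => h2 x)] at h3
      rw [hm]; unfold Ex
      apply Finset.sum_eq_zero
      intro x hx
      rcases mul_eq_zero.mp (h3 x hx) with h | h
      · rw [h, zero_mul]
      · rw [pow_eq_zero_iff (by norm_num)] at h; simp [h]
    rw [hm0, ← h0] at h1
    rw [hm0]
    simp at h1 ⊢
    exact h1
  have mpos : 0 < m := by
    rcases m0.eq_or_lt with h | h
    · exfalso
      have h2 : ∀ x, 0 ≤ (∏ j, p j (x j)) * |F x| := fun x =>
        mul_nonneg (Finset.prod_nonneg fun j _ => hp.1 j _) (abs_nonneg _)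
      have h3 : ∑ x, (∏ j, p j (x j)) * |F x| = 0 := by rw [h, hm]; rfl
      rw [Finset.sum_eq_zero_iff_of_nonneg (fun x _ => h2 x)] at h3
      have : v = 0 := by
        rw [hv]; unfold Ex
        apply Finset.sum_eq_zero
        intro x hx
        rcases mul_eq_zero.mp (h3 x hx) with h | h
        · rw [h, zero_mul]
        · rw [abs_eq_zero] at h; simp [h]
      linarith
    · exact h
  have k := key (m / v) (div_pos mpos vpos)
  rw [Real.log_div mpos.ne' vpos.ne'] at k
  have e : 2 / (m / v) * m = 2 * v := by field_simp
  rw [e] at k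
  -- need v(1+log s) - s m² ≤ v log v - 2 v log m
  have hl := Real.log_le_sub_one_of_pos (show 0 < s * m^2 / v by positivity)
  rw [Real.log_div (by positivity) vpos.ne', Real.log_mul hs.ne' (by positivity),
    Real.log_pow] at hl
  have := mul_le_mul_of_nonneg_left hl v0
  have e5 : v * (s * m^2 / v - 1) = s * m^2 - v := by field_simp
  rw [e5] at this
  push_cast at this
  nlinarith

theorem abs_Ex_le {n : ℕ} {p : Fin n → Bool → ℝ} (hp : IsPD p) (F : (Fin n → Bool) → ℝ) :
    |Ex p F| ≤ Ex p (fun x => |F x|) := by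
  rw [abs_le]
  constructor
  · have := Ex_mono hp (F := fun x => (-1) * |F x|) (G := F) (fun x => by
      have := neg_abs_le (F x); linarith)
    rw [Ex_mul] at this; linarith
  · exact Ex_mono hp fun x => le_abs_self _

theorem kkl {n : ℕ} {p : Fin n → Bool → ℝ} (hp : IsPD p) (F : (Fin n → Bool) → ℝ)
    {s : ℝ} (hs : 0 < s) :
    (1 + Real.log s) * (Ex p (fun x => F x ^ 2) - (Ex p F)^2) ≤
      ∑ j, Ex p (fun x => (Df j F x)^2) + s * ∑ j, (Ex p (fun x => |Df j F x|))^2 := by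
  induction n with
  | zero => simp [Ex]
  | succ n ih =>
    have hps := hp.succ
    set q := fun j : Fin n => p j.succ with hq
    set a := p 0 true with ha
    set c := p 0 false with hc
    have a0 : 0 ≤ a := hp.1 0 true
    have c0 : 0 ≤ c := hp.1 0 false
    have hac : a + c = 1 := hp.2 0
    have hce : c = 1 - a := by linarith
    set f1 := fun x : Fin n → Bool => F (Fin.cons true x) with hf1
    set f0 := fun x : Fin n → Bool => F (Fin.cons false x) with hf0
    set fb := fun x => a * f1 x + c * f0 x with hfb
    set G : (Fin (n+1) → Bool) → ℝ := fun x => F x - fb (fun j => x j.succ) with hG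
    have G1 : ∀ x : Fin n → Bool, G (Fin.cons true x) = c * (f1 x - f0 x) := by
      intro x; simp only [hG, Fin.cons_succ, hfb, hf1]; rw [hce]; ring
    have G0 : ∀ x : Fin n → Bool, G (Fin.cons false x) = - a * (f1 x - f0 x) := by
      intro x; simp only [hG, Fin.cons_succ, hfb, hf0]; rw [hce]; ring
    have i := ih hps fb
    have l := (ent_lower hp G hs).trans (logSob hp G)
    rw [Fin.sum_univ_succ] at l
    simp only [Ex_cons p, Df_cons_zero, Df_cons_succ, G1, G0] at l
    rw [Fin.sum_univ_succ, Fin.sum_univ_succ]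
    simp only [Ex_cons p, Df_cons_zero, Df_cons_succ]
    simp only [← ha, ← hc, ← hq] at l ⊢
    change _ ≤ a * Ex q (fun x => (f1 x - f0 x)^2) + c * Ex q (fun x => (f1 x - f0 x)^2) +
      ∑ j : Fin n, (a * Ex q (fun x => (Df j f1 x)^2) + c * Ex q (fun x => (Df j f0 x)^2)) +
      s * ((a * Ex q (fun x => |f1 x - f0 x|) + c * Ex q (fun x => |f1 x - f0 x|))^2 +
      ∑ j : Fin n, (a * Ex q (fun x => |Df j f1 x|) + c * Ex q (fun x => |Df j f0 x|))^2)
    change (1 + Real.log s) * (a * Ex q (fun x => f1 x ^ 2) + c * Ex q (fun x => f0 x ^2) -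
      (a * Ex q f1 + c * Ex q f0)^2) ≤ _
    -- energy identity
    have hen : ∀ j : Fin n, a * Ex q (fun x => (Df j f1 x)^2) + c * Ex q (fun x => (Df j f0 x)^2)
        = Ex q (fun x => (Df j fb x)^2) +
          (a * Ex q (fun x => (Df j (fun x => c * (f1 x - f0 x)) x)^2)
          + c * Ex q (fun x => (Df j (fun x => -a * (f1 x - f0 x)) x)^2)) := by
      intro j
      rw [← Ex_mul, ← Ex_mul, ← Ex_mul, ← Ex_mul, ← Ex_add, ← Ex_add, ← Ex_add]
      congr 1; funext x
      simp only [Df, hfb]; rw [hce]; ring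
    have hvar : a * Ex q (fun x => f1 x ^ 2) + c * Ex q (fun x => f0 x ^2)
        = Ex q (fun x => fb x ^ 2) + (a * Ex q (fun x => (c * (f1 x - f0 x))^2)
          + c * Ex q (fun x => (-a * (f1 x - f0 x))^2)) := by
      rw [← Ex_mul, ← Ex_mul, ← Ex_mul, ← Ex_mul, ← Ex_add, ← Ex_add, ← Ex_add]
      congr 1; funext x
      simp only [hfb]; rw [hce]; ring
    have hmean : a * Ex q f1 + c * Ex q f0 = Ex q fb := by
      rw [← Ex_mul, ← Ex_mul, ← Ex_add]
    have hl1 : ∀ j : Fin n, (Ex q (fun x => |Df j fb x|))^2 ≤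
        (a * Ex q (fun x => |Df j f1 x|) + c * Ex q (fun x => |Df j f0 x|))^2 := by
      intro j
      apply pow_le_pow_left₀ (Ex_nonneg hps fun x => abs_nonneg _)
      rw [← Ex_mul, ← Ex_mul, ← Ex_add]
      apply Ex_mono hps
      intro x
      have : Df j fb x = a * Df j f1 x + c * Df j f0 x := by simp only [Df, hfb]; ring
      rw [this]
      calc _ ≤ |a * Df j f1 x| + |c * Df j f0 x| := abs_add_le _ _
        _ = _ := by rw [abs_mul, abs_mul, abs_of_nonneg a0, abs_of_nonneg c0]
    have hsum := Finset.sum_le_sum fun j (_ : j ∈ Finset.univ) => hl1 j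
    rw [Finset.sum_congr rfl fun j _ => hen j, Finset.sum_add_distrib, hvar, hmean]
    -- L1 of G
    set Z := Ex q (fun x => |f1 x - f0 x|) with hZ
    have Z0 : 0 ≤ Z := Ex_nonneg hps fun x => abs_nonneg _
    have e1 : Ex q (fun x => |c * (f1 x - f0 x)|) = c * Z := by
      rw [hZ, ← Ex_mul]; congr 1; funext x; rw [abs_mul, abs_of_nonneg c0]
    have e0 : Ex q (fun x => |-a * (f1 x - f0 x)|) = a * Z := by
      rw [hZ, ← Ex_mul]; congr 1; funext x; rw [abs_mul, abs_neg, abs_of_nonneg a0]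
    rw [e1, e0] at l
    have eD : Ex q (fun x => (c * (f1 x - f0 x) - -a * (f1 x - f0 x))^2) =
        Ex q (fun x => (f1 x - f0 x)^2) := by
      congr 1; funext x; rw [hce]; ring
    rw [eD] at l
    have hZ2 : (a * (c * Z) + c * (a * Z))^2 ≤ (a * Z + c * Z)^2 := by
      apply pow_le_pow_left₀ (by positivity)
      have : c ≤ 1 := by linarith
      have : a ≤ 1 := by linarith
      nlinarith [mul_nonneg a0 Z0, mul_nonneg c0 Z0]
    have hZ3 := mul_le_mul_of_nonneg_left hZ2 hs.le
    have hsum2 := mul_le_mul_of_nonneg_left hsum hs.le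
    linarith
end MRB
namespace MRB

open Classical in
/-- indicator -/
noncomputable def ind (P : Prop) : ℝ := if P then 1 else 0

theorem ind_nonneg (P : Prop) : 0 ≤ ind P := by unfold ind; split_ifs <;> norm_num
theorem ind_le_one (P : Prop) : ind P ≤ 1 := by unfold ind; split_ifs <;> norm_num
theorem ind_true {P : Prop} (h : P) : ind P = 1 := by simp [ind, h]
theorem ind_false {P : Prop} (h : ¬ P) : ind P = 0 := by simp [ind, h]
theorem ind_mono {P Q : Prop} (h : P → Q) : ind P ≤ ind Q := by
  by_cases hp : P
  · rw [ind_true hp, ind_true (h hp)]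
  · rw [ind_false hp]; exact ind_nonneg _

/-- probability of a set -/
noncomputable def Pr {n : ℕ} (p : Fin n → Bool → ℝ) (A : Set (Fin n → Bool)) : ℝ :=
  Ex p (fun x => ind (x ∈ A))

/-- expansion of a set by a coalition -/
def xt {n : ℕ} (A : Set (Fin n → Bool)) (D : Finset (Fin n)) : Set (Fin n → Bool) :=
  {x | ∃ y ∈ A, ∀ j, j ∉ D → y j = x j}

theorem Pr_mono {n : ℕ} {p : Fin n → Bool → ℝ} (hp : IsPD p) {A B : Set (Fin n → Bool)}
    (h : A ⊆ B) : Pr p A ≤ Pr p B := Ex_mono hp fun _ => ind_mono fun hx => h hx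

theorem Pr_le_one {n : ℕ} {p : Fin n → Bool → ℝ} (hp : IsPD p) (A : Set (Fin n → Bool)) :
    Pr p A ≤ 1 := by
  rw [← Ex_const hp 1]; exact Ex_mono hp fun _ => ind_le_one _

theorem Pr_nonneg {n : ℕ} {p : Fin n → Bool → ℝ} (hp : IsPD p) (A : Set (Fin n → Bool)) :
    0 ≤ Pr p A := Ex_nonneg hp fun _ => ind_nonneg _

theorem xt_mono {n : ℕ} (A : Set (Fin n → Bool)) {D E : Finset (Fin n)} (h : D ⊆ E) :
    xt A D ⊆ xt A E := by
  rintro x ⟨y, hy, hj⟩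
  exact ⟨y, hy, fun j hjE => hj j fun hD => hjE (h hD)⟩

theorem xt_empty {n : ℕ} (A : Set (Fin n → Bool)) : xt A ∅ = A := by
  ext x
  constructor
  · rintro ⟨y, hy, hj⟩
    have : y = x := funext fun j => hj j (by simp)
    rwa [← this]
  · intro h; exact ⟨x, h, fun _ _ => rfl⟩

theorem xt_union {n : ℕ} (A : Set (Fin n → Bool)) (D E : Finset (Fin n)) :
    xt A (D ∪ E) = xt (xt A D) E := by
  ext x
  constructor
  · rintro ⟨y, hy, hj⟩
    refine ⟨fun j => if j ∈ E then y j else x j, ⟨y, hy, ?_⟩, ?_⟩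
    · intro j hjD
      by_cases hE : j ∈ E
      · simp [hE]
      · simp only [hE, if_false]; exact hj j (by simp [hjD, hE])
    · intro j hE; simp [hE]
  · rintro ⟨z, ⟨y, hy, h1⟩, h2⟩
    refine ⟨y, hy, fun j hj => ?_⟩
    simp only [Finset.mem_union, not_or] at hj
    rw [h1 j hj.1, h2 j hj.2]

/-- one-coordinate averaging -/
theorem Ex_avg {n : ℕ} (p : Fin n → Bool → ℝ) (hp : IsPD p) (j : Fin n)
    (F : (Fin n → Bool) → ℝ) :
    Ex p F = Ex p (fun x => p j true * F (Function.update x j true)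
      + p j false * F (Function.update x j false)) := by
  induction n with
  | zero => exact j.elim0
  | succ n ih =>
    rw [Ex_cons, Ex_cons]
    refine Fin.cases ?_ (fun k => ?_) j
    · simp only [Fin.update_cons_zero, ← add_mul, hp.2 0, one_mul]
      rw [Ex_add, Ex_mul, Ex_mul]
    · simp only [← Fin.cons_update]
      rw [ih _ hp.succ k (fun x => F (Fin.cons true x)), ih _ hp.succ k (fun x => F (Fin.cons false x))]

theorem gain_ge {n : ℕ} {p : Fin n → Bool → ℝ} (hp : IsPD p) {δ : ℝ}
    (hδ : ∀ j b, δ ≤ p j b) (A : Set (Fin n → Bool)) (j : Fin n) :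
    δ * Ex p (fun x => |Df j (fun x => ind (x ∈ A)) x|) ≤ Pr p (xt A {j}) - Pr p A := by
  have hA := Ex_avg p hp j (fun x => ind (x ∈ A))
  unfold Pr
  rw [hA, ← Ex_sub, ← Ex_mul]
  apply Ex_mono hp
  intro x
  have h1 := hδ j true
  have h0 := hδ j false
  have hs := hp.2 j
  have n1 := hp.1 j true
  have n0 := hp.1 j false
  have hu : ∀ b, Function.update x j b ∈ A → x ∈ xt A {j} := by
    intro b hb
    refine ⟨_, hb, fun i hi => ?_⟩
    simp only [Finset.mem_singleton] at hi
    exact Function.update_of_ne hi _ _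
  simp only [Df]
  by_cases ht : Function.update x j true ∈ A <;> by_cases hf : Function.update x j false ∈ A
  · rw [ind_true ht, ind_true hf, ind_true (hu _ ht)]; simp; linarith
  · rw [ind_true ht, ind_false hf, ind_true (hu _ ht)]; simp; linarith
  · rw [ind_false ht, ind_true hf, ind_true (hu _ hf)]; simp; linarith
  · rw [ind_false ht, ind_false hf]; simp; exact ind_nonneg _

/-- low influences imply large total gain -/
theorem total_gain {n : ℕ} {p : Fin n → Bool → ℝ} (hp : IsPD p) {δ τ η ε L : ℝ} (hδ0 : 0 < δ)
    (hδ : ∀ j b, δ ≤ p j b) (hτ : 0 < τ) (hη : 0 < η) (hε : 0 < ε)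
    (hL0 : 0 ≤ Real.log (δ / τ)) (hL : 2 * L / (δ * η * ε) ≤ Real.log (δ / τ))
    (A : Set (Fin n → Bool)) (h1 : η ≤ Pr p A) (h2 : Pr p A ≤ 1 - ε)
    (h3 : ∀ j, Pr p (xt A {j}) - Pr p A ≤ τ) :
    L ≤ ∑ j, (Pr p (xt A {j}) - Pr p A) := by
  set f : (Fin n → Bool) → ℝ := fun x => ind (x ∈ A) with hf
  have k := kkl hp f (div_pos hδ0 hτ)
  have e1 : Ex p (fun x => f x ^ 2) = Pr p A := by
    unfold Pr; congr 1; funext x; simp only [hf, ind]; split_ifs <;> norm_num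
  have e2 : ∀ j, Ex p (fun x => (Df j f x)^2) = Ex p (fun x => |Df j f x|) := by
    intro j; congr 1; funext x; simp only [hf, Df, ind]
    split_ifs <;> norm_num
  have e3 : Ex p f = Pr p A := rfl
  simp only [e1, e2, e3] at k
  set I := fun j => Ex p (fun x => |Df j f x|) with hI
  have hI0 : ∀ j, 0 ≤ I j := fun j => Ex_nonneg hp fun x => abs_nonneg _
  have hg : ∀ j, δ * I j ≤ Pr p (xt A {j}) - Pr p A := fun j => gain_ge hp hδ A j
  have hIb : ∀ j, δ / τ * (I j)^2 ≤ I j := by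
    intro j
    have : δ * I j ≤ τ := (hg j).trans (h3 j)
    have h4 : δ / τ * I j ≤ 1 := by
      rw [div_mul_eq_mul_div, div_le_one hτ]; exact this
    nlinarith [hI0 j]
  have hs : δ / τ * ∑ j, (I j)^2 ≤ ∑ j, I j := by
    rw [Finset.mul_sum]; exact Finset.sum_le_sum fun j _ => hIb j
  have hs2 : δ * ∑ j, I j ≤ ∑ j, (Pr p (xt A {j}) - Pr p A) := by
    rw [Finset.mul_sum]; exact Finset.sum_le_sum fun j _ => hg j
  have hV : η * ε ≤ Pr p A - Pr p A ^ 2 := by nlinarith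
  rw [div_le_iff₀ (by positivity)] at hL
  have hk : Real.log (δ / τ) * (η * ε) ≤ 2 * ∑ j, I j := by
    have : Real.log (δ/τ) * (η * ε) ≤ (1 + Real.log (δ/τ)) * (Pr p A - Pr p A ^ 2) := by
      apply mul_le_mul (by linarith) hV (by positivity) (by linarith)
    have k' : (1 + Real.log (δ/τ)) * (Pr p A - Pr p A ^ 2) ≤ ∑ j, I j + δ/τ * ∑ j, (I j)^2 := k
    linarith
  nlinarith

/-- A random coalition of size at most `s`, as a positive normalised functional. -/
structure RC (n s : ℕ) where
  T : (Finset (Fin n) → ℝ) → ℝ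
  add : ∀ F G, T (fun E => F E + G E) = T F + T G
  smul : ∀ (c : ℝ) F, T (fun E => c * F E) = c * T F
  mono : ∀ F G, (∀ E : Finset (Fin n), E.card ≤ s → F E ≤ G E) → T F ≤ T G
  one : T (fun _ => 1) = 1

theorem RC.const {n s : ℕ} (R : RC n s) (c : ℝ) : R.T (fun _ => c) = c := by
  have := R.smul c (fun _ => 1)
  simpa [R.one] using this

theorem RC.sub {n s : ℕ} (R : RC n s) (F G : Finset (Fin n) → ℝ) :
    R.T (fun E => F E - G E) = R.T F - R.T G := by
  have := R.add F (fun E => (-1) * G E)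
  rw [R.smul] at this
  have e : (fun E => F E - G E) = (fun E => F E + -1 * G E) := by funext E; ring
  rw [e, this]; ring

theorem RC.mono' {n s : ℕ} (R : RC n s) {F G : Finset (Fin n) → ℝ} (h : ∀ E, F E ≤ G E) :
    R.T F ≤ R.T G := R.mono F G fun E _ => h E

/-- enlarge the size bound -/
def RC.weak {n s t : ℕ} (R : RC n s) (h : s ≤ t) : RC n t where
  T := R.T
  add := R.add
  smul := R.smul
  mono F G hFG := R.mono F G fun E hE => hFG E (hE.trans h)
  one := R.one

/-- union of independent coalitions -/
def RC.conv {n s t : ℕ} (R : RC n s) (S : RC n t) : RC n (s + t) where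
  T F := R.T (fun E => S.T (fun E' => F (E ∪ E')))
  add F G := by
    rw [← R.add]; congr 1; funext E; exact S.add _ _
  smul c F := by
    rw [← R.smul]; congr 1; funext E; exact S.smul _ _
  mono F G h := by
    apply R.mono; intro E hE; apply S.mono; intro E' hE'
    exact h _ ((Finset.card_union_le _ _).trans (by omega))
  one := by simp only [S.one, R.one]

/-- empty coalition -/
def RC.nil (n : ℕ) : RC n 0 where
  T F := F ∅
  add _ _ := rfl
  smul _ _ := rfl
  mono F G h := h ∅ (by simp)
  one := rfl

/-- weighted average over a finite family -/
def RC.fam {n s : ℕ} {ι : Type} [Fintype ι] (w : ι → ℝ) (D : ι → Finset (Fin n))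
    (hw : ∀ i, 0 ≤ w i) (h1 : ∑ i, w i = 1) (hD : ∀ i, (D i).card ≤ s) : RC n s where
  T F := ∑ i, w i * F (D i)
  add F G := by simp only [mul_add, Finset.sum_add_distrib]
  smul c F := by rw [Finset.mul_sum]; exact Finset.sum_congr rfl fun i _ => by ring
  mono F G h := Finset.sum_le_sum fun i _ => mul_le_mul_of_nonneg_left (h _ (hD i)) (hw i)
  one := by simpa using h1

/-- uniformly random player -/
noncomputable def RC.uni (n : ℕ) (hn : 0 < n) : RC n 1 :=
  RC.fam (ι := Fin n) (fun _ => (1 / n : ℝ)) (fun j => {j}) (fun _ => by positivity)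
    (by simp; field_simp) (fun _ => by simp)

theorem block_card (n M u : ℕ) (hM : 0 < M) :
    (Finset.univ.filter (fun j : Fin n => j.val % M = u)).card ≤ n / M + 1 := by
  have h : ((Finset.univ.filter (fun j : Fin n => j.val % M = u))).card
      ≤ (Finset.range (n / M + 1)).card := by
    apply Finset.card_le_card_of_injOn (fun j => j.val / M)
    · intro j _
      simp only [Finset.coe_range, Set.mem_Iio]
      have := Nat.div_le_div_right (c := M) j.isLt.le
      omega
    · intro a ha b hb hab
      simp only [Finset.coe_filter, Finset.mem_univ, true_and, Set.mem_ofPred_eq] at ha hb hab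
      apply Fin.ext
      rw [← Nat.div_add_mod a.val M, ← Nat.div_add_mod b.val M, ha, hb, hab]
  simpa using h

/-- uniformly random residue block -/
noncomputable def RC.blk (n M : ℕ) (hM : 0 < M) : RC n (n / M + 1) :=
  RC.fam (ι := Fin M) (fun _ => (1 / M : ℝ))
    (fun u => Finset.univ.filter (fun j : Fin n => j.val % M = u.val)) (fun _ => by positivity)
    (by simp; field_simp) (fun u => block_card n M u hM)

theorem RC.blk_ge {n M : ℕ} (hM : 0 < M) (j : Fin n) (F : Finset (Fin n) → ℝ)
    (h0 : ∀ E, 0 ≤ F E) (h1 : ∀ E, j ∈ E → 1 ≤ F E) : 1 / (M:ℝ) ≤ (RC.blk n M hM).T F := by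
  unfold RC.blk RC.fam
  simp only
  have hlt : j.val % M < M := Nat.mod_lt _ hM
  have := Finset.single_le_sum (f := fun u : Fin M => (1 / M : ℝ) *
    F (Finset.univ.filter (fun j : Fin n => j.val % M = u.val)))
    (fun u _ => mul_nonneg (by positivity) (h0 _)) (Finset.mem_univ (⟨j.val % M, hlt⟩ : Fin M))
  refine le_trans ?_ this
  have h := h1 (Finset.univ.filter (fun i : Fin n => i.val % M = (⟨j.val % M, hlt⟩ : Fin M).val))
    (by simp)
  have hp : 0 ≤ (1 / M : ℝ) := by positivity
  nlinarith

/-- m uniformly random players -/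
noncomputable def RC.sq (n : ℕ) (hn : 0 < n) : (m : ℕ) → RC n m
  | 0 => RC.nil n
  | m+1 => (RC.sq n hn m).conv (RC.uni n hn)

/-- K-fold union -/
noncomputable def RC.pw {n s : ℕ} (R : RC n s) : (K : ℕ) → RC n (K * s)
  | 0 => (RC.nil n).weak (by omega)
  | K+1 => ((RC.pw R K).conv R).weak (by rw [Nat.succ_mul])

theorem sq_growth {n : ℕ} (hn : 0 < n) (G h : Finset (Fin n) → ℝ) {L : ℝ} (hL : 0 ≤ L)
    (hanti : ∀ E E', E ⊆ E' → h E' ≤ h E)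
    (hstep : ∀ E, L * h E ≤ ∑ j, (G (E ∪ {j}) - G E)) (m : ℕ) :
    G ∅ + m * (L / n) * (RC.sq n hn m).T h ≤ (RC.sq n hn m).T G := by
  have hn' : (0:ℝ) < n := by exact_mod_cast hn
  induction m with
  | zero => simp [RC.sq, RC.nil]
  | succ m ih =>
    have hT : ∀ F, (RC.sq n hn (m+1)).T F =
      (RC.sq n hn m).T (fun E => ∑ j : Fin n, (1 / n : ℝ) * F (E ∪ {j})) := fun F => rfl
    have a1 : (RC.sq n hn (m+1)).T h ≤ (RC.sq n hn m).T h := by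
      rw [hT]
      apply RC.mono'
      intro E
      calc _ ≤ ∑ j : Fin n, (1 / n : ℝ) * h E :=
            Finset.sum_le_sum fun j _ => mul_le_mul_of_nonneg_left
              (hanti _ _ Finset.subset_union_left) (by positivity)
        _ = h E := by simp; field_simp
    have a2 : (RC.sq n hn m).T G + (L / n) * (RC.sq n hn m).T h ≤ (RC.sq n hn (m+1)).T G := by
      rw [hT, ← RC.smul, ← RC.add]
      apply RC.mono'
      intro E
      have := hstep E
      rw [Finset.sum_sub_distrib] at this
      simp only [Finset.sum_const, Finset.card_univ, Fintype.card_fin, nsmul_eq_mul] at this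
      rw [← Finset.mul_sum]
      have h2 := mul_le_mul_of_nonneg_left this (show 0 ≤ (1 / n : ℝ) by positivity)
      have e : (1 / n : ℝ) * (∑ j, G (E ∪ {j}) - n * G E) =
        (1/n:ℝ) * ∑ j, G (E ∪ {j}) - G E := by field_simp
      rw [e] at h2
      have e2 : (1/n:ℝ) * (L * h E) = L / n * h E := by ring
      rw [e2] at h2
      linarith
    push_cast
    have a3 : 0 ≤ ((m:ℝ)+1) * (L / n) := by positivity
    nlinarith [mul_le_mul_of_nonneg_left a1 a3]

/-- stage -/
noncomputable def RC.stage (n : ℕ) (hn : 0 < n) (M : ℕ) (hM : 0 < M) :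
    RC n (n / M + (n / M + 1)) := (RC.sq n hn (n / M)).conv (RC.blk n M hM)

theorem stage_lemma {n : ℕ} (hn : 0 < n) {K Q : ℕ} (hK : 0 < K) (hQ : 0 < Q)
    (hKQ : 0 < K * Q) (hnK : K * Q ≤ n)
    {p : Fin n → Bool → ℝ} (hp : IsPD p) (hδ : ∀ j b, 1 / (Q:ℝ) ≤ p j b) {η ε : ℝ}
    (hη : 0 < η) (hε : 0 < ε) (hL : 8 * (Q:ℝ)^2 / (η * ε) ≤ Real.log (K / Q))
    (A : Set (Fin n → Bool)) (hA : η ≤ Pr p A) :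
    1 / (3 * (K:ℝ)^2 * Q) ≤ (RC.stage n hn (K * Q) hKQ).T
      (fun D => ind (min (Pr p A + 1 / K) (1 - ε) ≤ Pr p (xt A D))) := by
  have hK' : (0:ℝ) < K := by exact_mod_cast hK
  have hQ' : (0:ℝ) < Q := by exact_mod_cast hQ
  have hK1 : (1:ℝ) ≤ K := by exact_mod_cast hK
  have hn' : (0:ℝ) < n := by exact_mod_cast hn
  set t := min (Pr p A + 1 / (K:ℝ)) (1 - ε) with ht
  set G : Finset (Fin n) → ℝ := fun E => Pr p (xt A E) with hG
  set h : Finset (Fin n) → ℝ := fun E => ind (∀ j, Pr p (xt A (E ∪ {j})) < t) with hh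
  have g1 := sq_growth hn G h (L := 4 * Q) (by positivity)
    (by
      intro E E' hE
      apply ind_mono
      intro hj j
      exact lt_of_le_of_lt (Pr_mono hp (xt_mono A (Finset.union_subset_union_left hE))) (hj j))
    (by
      intro E
      by_cases hE : ∀ j, Pr p (xt A (E ∪ {j})) < t
      · simp only [hh]
        rw [ind_true hE, mul_one]
        have mA : Pr p A ≤ Pr p (xt A E) := by
          conv_lhs => rw [← xt_empty A]
          exact Pr_mono hp (xt_mono A (Finset.empty_subset _))
        have mE : ∀ j, Pr p (xt A E) ≤ Pr p (xt A (E ∪ {j})) := fun j =>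
          Pr_mono hp (xt_mono A Finset.subset_union_left)
        have htl : t ≤ Pr p A + 1 / (K:ℝ) := min_le_left _ _
        have htr : t ≤ 1 - ε := min_le_right _ _
        have := total_gain hp (δ := 1 / (Q:ℝ)) (τ := 1 / (K:ℝ)) (η := η) (ε := ε) (L := 4 * Q)
          (by positivity) hδ (by positivity) hη hε
          (by
            have e : (1 / (Q:ℝ)) / (1 / (K:ℝ)) = K / Q := by field_simp
            rw [e]; exact le_trans (by positivity) hL)
          (by
            have e : (1 / (Q:ℝ)) / (1 / (K:ℝ)) = K / Q := by field_simp
            rw [e]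
            refine le_trans (le_of_eq ?_) hL
            field_simp; norm_num)
          (xt A E) (hA.trans mA) ((mE ⟨0, hn⟩).trans ((hE ⟨0, hn⟩).le.trans htr))
          (by
            intro j
            rw [← xt_union]
            have := hE j
            linarith)
        simp only [← xt_union] at this
        exact this
      · simp only [hh]
        rw [ind_false hE, mul_zero]
        exact Finset.sum_nonneg fun j _ =>
          sub_nonneg.mpr (Pr_mono hp (xt_mono A Finset.subset_union_left)))
    (n / (K * Q))
  set S := RC.sq n hn (n / (K * Q)) with hS
  have g2 : S.T G ≤ (Pr p A + 1 / K) + (1 - S.T h) := by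
    have e : (Pr p A + 1 / (K:ℝ)) + (1 - S.T h) = S.T (fun E => (Pr p A + 1 / (K:ℝ)) + (1 - h E)) := by
      rw [S.add, S.const, S.sub, S.const]
    rw [e]
    apply S.mono'
    intro E
    by_cases hE : ∀ j, Pr p (xt A (E ∪ {j})) < t
    · simp only [hh]
      rw [ind_true hE]
      have h1 : Pr p (xt A E) ≤ Pr p (xt A (E ∪ {⟨0, hn⟩})) :=
        Pr_mono hp (xt_mono A Finset.subset_union_left)
      have h2 := hE ⟨0, hn⟩
      have htl : t ≤ Pr p A + 1 / (K:ℝ) := min_le_left _ _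
      simp only [hG]; linarith
    · simp only [hh, hG]
      rw [ind_false hE]
      have := Pr_le_one hp (xt A E)
      have := Pr_nonneg hp A
      have : 0 ≤ 1 / (K:ℝ) := by positivity
      linarith
  have hG0 : G ∅ = Pr p A := by simp only [hG, xt_empty]
  rw [hG0] at g1
  have hm : 2 * (1 / (K:ℝ)) ≤ ((n / (K * Q) : ℕ) : ℝ) * (4 * Q / n) := by
    have h1 : n < (n / (K*Q)) * (K * Q) + K * Q := by
      have := Nat.div_add_mod n (K*Q)
      have := Nat.mod_lt n hKQ
      nlinarith
    have h2 : 1 ≤ n / (K*Q) := (Nat.one_le_div_iff hKQ).mpr hnK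
    have h3 : n ≤ 2 * ((n / (K*Q)) * (K * Q)) := by nlinarith
    have h4 : (n:ℝ) ≤ 2 * (((n / (K*Q) : ℕ) : ℝ) * (K * Q)) := by exact_mod_cast h3
    have e : ((n / (K * Q) : ℕ) : ℝ) * (4 * Q / n) = ((n / (K * Q) : ℕ) : ℝ) * (4 * Q) / n := by ring
    rw [e, le_div_iff₀ hn', mul_one_div, div_mul_eq_mul_div, div_le_iff₀ hK']
    nlinarith
  have hT0 : 0 ≤ S.T h := by
    rw [← S.const 0]; exact S.mono' fun E => ind_nonneg _
  have g3 : 1 / (3 * (K:ℝ)) ≤ S.T (fun E => 1 - h E) := by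
    rw [S.sub, S.const]
    have h1 := mul_le_mul_of_nonneg_right hm hT0
    have hτ0 : 0 < 1 / (K:ℝ) := by positivity
    have hτ1 : 1 / (K:ℝ) ≤ 1 := by rw [div_le_one hK']; exact hK1
    have e : 1 / (3 * (K:ℝ)) = (1 / (K:ℝ)) / 3 := by field_simp
    rw [e]
    set τ := 1 / (K:ℝ)
    nlinarith
  have g4 : 1 / (K * Q : ℝ) * S.T (fun E => 1 - h E) ≤ (RC.stage n hn (K * Q) hKQ).T
      (fun D => ind (t ≤ Pr p (xt A D))) := by
    rw [← S.smul]
    apply S.mono'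
    intro E
    by_cases hE : ∀ j, Pr p (xt A (E ∪ {j})) < t
    · simp only [hh]
      rw [ind_true hE]
      simp only [sub_self, mul_zero]
      rw [← (RC.blk n (K*Q) hKQ).const 0]
      exact RC.mono' _ fun E => ind_nonneg _
    · simp only [hh]
      rw [ind_false hE]
      push Not at hE
      obtain ⟨j, hj⟩ := hE
      have := RC.blk_ge hKQ j (fun E' => ind (t ≤ Pr p (xt A (E ∪ E')))) (fun _ => ind_nonneg _)
        (by
          intro E' hjE
          rw [ind_true]
          refine hj.trans (Pr_mono hp (xt_mono A ?_))
          exact Finset.union_subset_union_right (by simpa using hjE))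
      push_cast at this
      simpa using this
  refine le_trans ?_ g4
  have h5 := mul_le_mul_of_nonneg_left g3 (show 0 ≤ 1 / (K * Q : ℝ) by positivity)
  refine le_trans (le_of_eq ?_) h5
  field_simp

theorem pw_lemma {n s : ℕ} (R : RC n s) {p : Fin n → Bool → ℝ} (hp : IsPD p) {η τ κ t : ℝ}
    (hκ : 0 ≤ κ) (ht : 0 ≤ τ)
    (hR : ∀ A : Set (Fin n → Bool), η ≤ Pr p A →
      κ ≤ R.T (fun D => ind (min (Pr p A + τ) t ≤ Pr p (xt A D))))
    (A : Set (Fin n → Bool)) (hA : η ≤ Pr p A) (K : ℕ) :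
    κ ^ K ≤ (R.pw K).T (fun D => ind (min (Pr p A + K * τ) t ≤ Pr p (xt A D))) := by
  induction K with
  | zero =>
    simp only [RC.pw, RC.weak, RC.nil, xt_empty]
    rw [ind_true (by simp)]; simp
  | succ K ih =>
    have hT : ∀ F, (R.pw (K+1)).T F = (R.pw K).T (fun E => R.T (fun E' => F (E ∪ E'))) :=
      fun F => rfl
    rw [hT, pow_succ]
    have : κ ^ K * κ ≤ κ * (R.pw K).T
        (fun D => ind (min (Pr p A + K * τ) t ≤ Pr p (xt A D))) := by
      rw [mul_comm]; exact mul_le_mul_of_nonneg_left ih hκ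
    refine this.trans ?_
    rw [← RC.smul]
    apply RC.mono'
    intro E
    by_cases hE : min (Pr p A + K * τ) t ≤ Pr p (xt A E)
    · rw [ind_true hE, mul_one]
      have mA : Pr p A ≤ Pr p (xt A E) := by
        conv_lhs => rw [← xt_empty A]
        exact Pr_mono hp (xt_mono A (Finset.empty_subset _))
      refine (hR (xt A E) (hA.trans mA)).trans ?_
      apply RC.mono'
      intro E'
      apply ind_mono
      rw [← xt_union]
      intro h
      refine le_trans ?_ h
      push_cast
      rcases le_total (Pr p A + K * τ) t with h1 | h1
      · rw [min_eq_left h1] at hE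
        exact min_le_min (by linarith) le_rfl
      · rw [min_eq_right h1] at hE
        rw [le_min_iff]
        exact ⟨(min_le_right _ _).trans (by linarith), min_le_right _ _⟩
    · rw [ind_false hE, mul_zero, ← R.const 0]
      exact RC.mono' _ fun E => ind_nonneg _

theorem one_round {n : ℕ} {K Q : ℕ} (hK : 0 < K) (hQ : 0 < Q)
    (hnK : K * Q ≤ n) {η ε : ℝ}
    (hη : 0 < η) (hε : 0 < ε) (hL : 8 * (Q:ℝ)^2 / (η * ε) ≤ Real.log (K / Q)) :
    ∃ R : RC n (3 * (n / Q)), ∀ p : Fin n → Bool → ℝ, IsPD p → (∀ j b, 1 / (Q:ℝ) ≤ p j b) →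
      ∀ A : Set (Fin n → Bool), η ≤ Pr p A →
      (1 / (3 * (K:ℝ)^2 * Q)) ^ K ≤ R.T (fun D => ind (1 - ε ≤ Pr p (xt A D))) := by
  have hKQ : 0 < K * Q := Nat.mul_pos hK hQ
  have hn : 0 < n := by omega
  have hK' : (0:ℝ) < K := by exact_mod_cast hK
  refine ⟨((RC.stage n hn (K * Q) hKQ).pw K).weak ?_, ?_⟩
  · have h1 : K * (n / (K * Q)) ≤ n / Q := by
      rw [mul_comm K Q, ← Nat.div_div_eq_div_mul]; exact Nat.mul_div_le _ _
    have h2 : K ≤ n / Q := (Nat.le_div_iff_mul_le hQ).mpr hnK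
    nlinarith
  · intro p hp hδ A hA
    have := pw_lemma (RC.stage n hn (K * Q) hKQ) hp (η := η) (τ := 1 / K) (t := 1 - ε)
      (κ := 1 / (3 * (K:ℝ)^2 * Q)) (by positivity) (by positivity)
      (fun A hA => stage_lemma hn hK hQ hKQ hnK hp hδ hη hε hL A hA) A hA K
    refine this.trans ?_
    change _ ≤ ((RC.stage n hn (K * Q) hKQ).pw K).T _
    apply RC.mono'
    intro E
    apply ind_mono
    intro h
    refine le_trans ?_ h
    rw [mul_one_div_cancel hK'.ne']
    rw [le_min_iff]
    exact ⟨by have := Pr_nonneg hp A; linarith, le_rfl⟩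

end MRB
namespace MRB

/-- transcripts reachable by the coalition -/
noncomputable def nb {n : ℕ} (B : Finset (Fin n)) (x : Fin n → Bool) : Finset (Fin n → Bool) :=
  Finset.univ.filter (fun y => ∀ j, j ∉ B → y j = x j)

theorem mem_nb {n : ℕ} {B : Finset (Fin n)} {x y : Fin n → Bool} :
    y ∈ nb B x ↔ ∀ j, j ∉ B → y j = x j := by simp [nb]

theorem self_mem_nb {n : ℕ} (B : Finset (Fin n)) (x : Fin n → Bool) : x ∈ nb B x :=
  mem_nb.mpr fun _ _ => rfl

/-- best response -/
noncomputable def Mx {n : ℕ} (B : Finset (Fin n)) (F : (Fin n → Bool) → ℝ) (x : Fin n → Bool) : ℝ :=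
  (nb B x).sup' ⟨x, self_mem_nb B x⟩ F

theorem le_Mx {n : ℕ} {B : Finset (Fin n)} (F : (Fin n → Bool) → ℝ) {x y : Fin n → Bool}
    (h : y ∈ nb B x) : F y ≤ Mx B F x := Finset.le_sup' F h

theorem Mx_le {n : ℕ} {B : Finset (Fin n)} {F : (Fin n → Bool) → ℝ} {x : Fin n → Bool} {c : ℝ}
    (h : ∀ y ∈ nb B x, F y ≤ c) : Mx B F x ≤ c := Finset.sup'_le _ _ h

theorem exists_Mx {n : ℕ} (B : Finset (Fin n)) (F : (Fin n → Bool) → ℝ) (x : Fin n → Bool) :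
    ∃ y ∈ nb B x, Mx B F x = F y := Finset.exists_mem_eq_sup' _ F

/-- value of the game -/
noncomputable def W {n : ℕ} (B : Finset (Fin n)) (b : Bool) :
    (r : ℕ) → (Fin r → Fin n → Bool → ℝ) → ((Fin r → Fin n → Bool) → Bool) → ℝ
  | 0, _, f => ind (f (fun i => i.elim0) = b)
  | r+1, p, f => Ex (p 0) (Mx B (fun y => W B b r (fun i => p i.succ)
      (fun α => f (Fin.cons y α))))

theorem W_le_one {n : ℕ} (B : Finset (Fin n)) (b : Bool) (r : ℕ) (p : Fin r → Fin n → Bool → ℝ)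
    (hp : ∀ i, IsPD (p i)) (f : (Fin r → Fin n → Bool) → Bool) : W B b r p f ≤ 1 := by
  induction r with
  | zero => exact ind_le_one _
  | succ r ih =>
    rw [W, ← Ex_const (hp 0) 1]
    exact Ex_mono (hp 0) fun x => Mx_le fun y _ => ih _ (fun i => hp i.succ) _

theorem W_nonneg {n : ℕ} (B : Finset (Fin n)) (b : Bool) (r : ℕ) (p : Fin r → Fin n → Bool → ℝ)
    (hp : ∀ i, IsPD (p i)) (f : (Fin r → Fin n → Bool) → Bool) : 0 ≤ W B b r p f := by
  induction r with
  | zero => exact ind_nonneg _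
  | succ r ih =>
    rw [W, ← Ex_const (hp 0) 0]
    exact Ex_mono (hp 0) fun x => (ih _ (fun i => hp i.succ) _).trans
      (le_Mx (fun y => W B b r (fun i => p i.succ) (fun α => f (Fin.cons y α))) (self_mem_nb B x))

theorem nb_mono {n : ℕ} {B B' : Finset (Fin n)} (h : B ⊆ B') {x y : Fin n → Bool}
    (hy : y ∈ nb B x) : y ∈ nb B' x :=
  mem_nb.mpr fun j hj => mem_nb.mp hy j fun hB => hj (h hB)

theorem Mx_mono {n : ℕ} {B B' : Finset (Fin n)} (h : B ⊆ B') {F G : (Fin n → Bool) → ℝ}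
    (hFG : ∀ y, F y ≤ G y) (x : Fin n → Bool) : Mx B F x ≤ Mx B' G x :=
  Mx_le fun y hy => (hFG y).trans (le_Mx G (nb_mono h hy))

theorem W_mono {n : ℕ} {B B' : Finset (Fin n)} (h : B ⊆ B') (b : Bool) (r : ℕ)
    (p : Fin r → Fin n → Bool → ℝ)
    (hp : ∀ i, IsPD (p i)) (f : (Fin r → Fin n → Bool) → Bool) : W B b r p f ≤ W B' b r p f := by
  induction r with
  | zero => exact le_rfl
  | succ r ih =>
    rw [W, W]
    exact Ex_mono (hp 0) fun x => Mx_mono h (fun y => ih _ (fun i => hp i.succ) _) x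

/-- parameters -/
noncomputable def Kf (Q : ℕ) (ε η : ℝ) : ℕ := ⌈(Q:ℝ) * Real.exp (32 * (Q:ℝ)^2 / (η * ε))⌉₊

noncomputable def et (Q : ℕ) (ε : ℝ) : ℕ → ℝ
  | 0 => 1
  | r+1 => et Q ε r / 2 * (1 / (3 * (Kf Q ε (et Q ε r) : ℝ)^2 * Q)) ^ (Kf Q ε (et Q ε r))

theorem Kf_pos {Q : ℕ} (hQ : 0 < Q) (ε η : ℝ) : 0 < Kf Q ε η := by
  have : (0:ℝ) < Q := by exact_mod_cast hQ
  exact Nat.ceil_pos.mpr (by positivity)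

theorem et_pos {Q : ℕ} (hQ : 0 < Q) (ε : ℝ) (r : ℕ) : 0 < et Q ε r := by
  have hQ' : (0:ℝ) < Q := by exact_mod_cast hQ
  induction r with
  | zero => simp [et]
  | succ r ih =>
    rw [et]
    have : (0:ℝ) < Kf Q ε (et Q ε r) := by exact_mod_cast Kf_pos hQ _ _
    positivity

theorem multi {n Q : ℕ} (hQ : 0 < Q) {ε : ℝ} (hε : 0 < ε) (hε1 : ε ≤ 1) (r : ℕ)
    (hn : ∀ i < r, Kf Q ε (et Q ε i) * Q ≤ n) :
    ∃ R : RC n (r * (3 * (n / Q))), ∀ p : Fin r → Fin n → Bool → ℝ, (∀ i, IsPD (p i)) →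
      (∀ i j b, 1 / (Q:ℝ) ≤ p i j b) → ∀ f : (Fin r → Fin n → Bool) → Bool,
      et Q ε r ≤ R.T (fun D => ind (1 - r * ε ≤ W D true r p f))
        + R.T (fun D => ind (1 - r * ε ≤ W D false r p f)) := by
  have hQ' : (0:ℝ) < Q := by exact_mod_cast hQ
  induction r with
  | zero =>
    refine ⟨(RC.nil n).weak (by omega), ?_⟩
    intro p _ _ f
    simp only [RC.weak, RC.nil, W, et]
    cases hf : f (fun i => i.elim0)
    · rw [ind_true (P := 1 - ((0:ℕ):ℝ) * ε ≤ ind (false = false)) (by rw [ind_true rfl]; simp)]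
      have := ind_nonneg (1 - ((0:ℕ):ℝ) * ε ≤ ind (false = true))
      linarith
    · rw [ind_true (P := 1 - ((0:ℕ):ℝ) * ε ≤ ind (true = true)) (by rw [ind_true rfl]; simp)]
      have := ind_nonneg (1 - ((0:ℕ):ℝ) * ε ≤ ind (true = false))
      linarith
  | succ r ih =>
    obtain ⟨R, hR⟩ := ih (fun i hi => hn i (by omega))
    set η := et Q ε r with hη
    have ηpos : 0 < η := et_pos hQ ε r
    set K := Kf Q ε η with hK
    have Kpos : 0 < K := Kf_pos hQ _ _
    have Kpos' : (0:ℝ) < K := by exact_mod_cast Kpos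
    obtain ⟨S, hS⟩ := one_round (n := n) (η := η / 4) (ε := ε) Kpos hQ (hn r (by omega))
      (by positivity) hε (by
        rw [Real.le_log_iff_exp_le (by positivity), le_div_iff₀ hQ']
        have h1 : (Q:ℝ) * Real.exp (32 * (Q:ℝ)^2 / (η * ε)) ≤ K := Nat.le_ceil _
        have e : 8 * (Q:ℝ)^2 / (η / 4 * ε) = 32 * (Q:ℝ)^2 / (η * ε) := by field_simp; norm_num
        rw [e]; linarith)
    refine ⟨(R.conv S).weak (Nat.succ_mul r (3 * (n / Q))).ge, ?_⟩
    intro p hp hδ f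
    set fy := fun (y : Fin n → Bool) (α : Fin r → Fin n → Bool) => f (Fin.cons y α) with hfy
    set p' := fun i : Fin r => p i.succ with hp'
    set Ab := fun (b : Bool) (D : Finset (Fin n)) =>
      {y : Fin n → Bool | 1 - r * ε ≤ W D b r p' (fy y)} with hAb
    -- averaging
    have h1 : η ≤ R.T (fun D => Pr (p 0) (Ab true D)) + R.T (fun D => Pr (p 0) (Ab false D)) := by
      have hsw : ∀ b, R.T (fun D => Pr (p 0) (Ab b D)) =
          Ex (p 0) (fun y => R.T (fun D => ind (1 - r * ε ≤ W D b r p' (fy y)))) := by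
        intro b
        unfold Pr Ex
        have hsum : ∀ (s : Finset (Fin n → Bool)) (g : (Fin n → Bool) → Finset (Fin n) → ℝ),
            R.T (fun D => ∑ x ∈ s, g x D) = ∑ x ∈ s, R.T (g x) := by
          intro s g
          induction s using Finset.induction_on with
          | empty => simpa using R.const 0
          | insert a s ha ih2 =>
            simp only [Finset.sum_insert ha]
            rw [R.add, ih2]
        rw [hsum]
        exact Finset.sum_congr rfl fun x _ => R.smul _ _
      rw [hsw, hsw, ← Ex_add, ← Ex_const (hp 0) η]
      exact Ex_mono (hp 0) fun y => hR p' (fun i => hp i.succ) (fun i => hδ i.succ) (fy y)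
    have h2 : ∀ b, R.T (fun D => Pr (p 0) (Ab b D)) ≤
        η / 4 + R.T (fun D => ind (η / 4 ≤ Pr (p 0) (Ab b D))) := by
      intro b
      rw [← R.const (η/4), ← R.add]
      apply R.mono'
      intro D
      rw [R.const]
      by_cases h : η / 4 ≤ Pr (p 0) (Ab b D)
      · rw [ind_true h]; have := Pr_le_one (hp 0) (Ab b D); linarith
      · rw [ind_false h]; push Not at h; linarith
    set κ := (1 / (3 * (K:ℝ)^2 * Q)) ^ K with hκ
    have κ0 : 0 ≤ κ := by positivity
    have h3 : ∀ b, κ * R.T (fun D => ind (η / 4 ≤ Pr (p 0) (Ab b D))) ≤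
        (R.conv S).T (fun D => ind (1 - ((r+1 : ℕ):ℝ) * ε ≤ W D b (r+1) p f)) := by
      intro b
      rw [← R.smul]
      apply R.mono'
      intro D
      by_cases h : η / 4 ≤ Pr (p 0) (Ab b D)
      · rw [ind_true h, mul_one]
        refine (hS (p 0) (hp 0) (hδ 0) (Ab b D) h).trans ?_
        apply S.mono'
        intro D'
        apply ind_mono
        intro hD'
        rw [W]
        have h4 : (1 - ε) - r * ε ≤ Ex (p 0) (fun x => ind (x ∈ xt (Ab b D) D') - r * ε) := by
          rw [Ex_sub, Ex_const (hp 0)]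
          have : Ex (p 0) (fun x => ind (x ∈ xt (Ab b D) D')) = Pr (p 0) (xt (Ab b D) D') := rfl
          linarith
        push_cast
        refine le_trans (by linarith) (h4.trans ?_)
        apply Ex_mono (hp 0)
        intro x
        have hr : 0 ≤ (r:ℝ) * ε := by positivity
        by_cases hx : x ∈ xt (Ab b D) D'
        · rw [ind_true hx]
          obtain ⟨y, hy, hyx⟩ := hx
          have h5 : 1 - r * ε ≤ W D b r p' (fy y) := hy
          refine h5.trans ((W_mono (B' := D ∪ D') Finset.subset_union_left b r p'
            (fun i => hp i.succ) (fy y)).trans ?_)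
          apply le_Mx (fun y => W (D ∪ D') b r (fun i => p i.succ) (fun α => f (Fin.cons y α)))
          rw [mem_nb]
          intro j hj
          exact hyx j fun h => hj (Finset.mem_union_right _ h)
        · rw [ind_false hx]
          have := le_Mx (fun y => W (D ∪ D') b r (fun i => p i.succ)
            (fun α => f (Fin.cons y α))) (self_mem_nb (D ∪ D') x)
          have h6 := W_nonneg (D ∪ D') b r p' (fun i => hp i.succ) (fy x)
          have h7 := h6.trans this
          linarith
      · rw [ind_false h, mul_zero, ← S.const 0]
        exact S.mono' fun _ => ind_nonneg _
    have h4 : et Q ε (r+1) = η / 2 * κ := rfl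
    rw [h4]
    have a1 := h3 true
    have a2 := h3 false
    have b1 := h2 true
    have b2 := h2 false
    change η / 2 * κ ≤
      (R.conv S).T (fun D => ind (1 - ((r+1 : ℕ):ℝ) * ε ≤ W D true (r+1) p f))
      + (R.conv S).T (fun D => ind (1 - ((r+1 : ℕ):ℝ) * ε ≤ W D false (r+1) p f))
    have b3 : η / 2 ≤ R.T (fun D => ind (η / 4 ≤ Pr (p 0) (Ab true D))) +
      R.T (fun D => ind (η / 4 ≤ Pr (p 0) (Ab false D))) := by linarith
    have b4 := mul_le_mul_of_nonneg_left b3 κ0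
    linarith

/-! noise -/

/-- override -/
def ov : Option Bool → Bool → Bool
  | none, x => x
  | some b, _ => b

/-- noise weight -/
def nw (δ : ℝ) : Option Bool → ℝ
  | none => 1 - 2 * δ
  | some _ => δ

theorem nw_none (δ : ℝ) : nw δ none = 1 - 2 * δ := rfl
theorem nw_some (δ : ℝ) (b : Bool) : nw δ (some b) = δ := rfl
theorem ov_none (x : Bool) : ov none x = x := rfl
theorem ov_some (b x : Bool) : ov (some b) x = b := rfl

/-- noisy measure -/
def nz (δ : ℝ) {n : ℕ} (p : Fin n → Bool → ℝ) : Fin n → Bool → ℝ :=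
  fun j b => (1 - 2 * δ) * p j b + δ

theorem nz_PD {δ : ℝ} (h0 : 0 ≤ δ) (h1 : 2 * δ ≤ 1) {n : ℕ} {p : Fin n → Bool → ℝ} (hp : IsPD p) :
    IsPD (nz δ p) := by
  refine ⟨fun j b => ?_, fun j => ?_⟩
  · have := hp.1 j b
    unfold nz
    have : 0 ≤ 1 - 2 * δ := by linarith
    positivity
  · have := hp.2 j
    unfold nz
    linear_combination (1 - 2 * δ) * this

theorem nz_ge {δ : ℝ} (h1 : 2 * δ ≤ 1) {n : ℕ} {p : Fin n → Bool → ℝ} (hp : IsPD p)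
    (j : Fin n) (b : Bool) : δ ≤ nz δ p j b := by
  have := hp.1 j b
  unfold nz
  have : 0 ≤ 1 - 2 * δ := by linarith
  nlinarith

theorem Ex_nz (δ : ℝ) {n : ℕ} {p : Fin n → Bool → ℝ} (hp : IsPD p) (F : (Fin n → Bool) → ℝ) :
    Ex (nz δ p) F = ∑ c : Fin n → Option Bool, (∏ j, nw δ (c j)) *
      Ex p (fun x => F (fun j => ov (c j) (x j))) := by
  induction n with
  | zero =>
    simp [Ex]
    exact congrArg F (Subsingleton.elim _ _)
  | succ n ih =>
    rw [Ex_cons]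
    have e := fun b => ih hp.succ (fun x => F (Fin.cons b x))
    have e' : (fun j => nz δ p (Fin.succ j)) = nz δ (fun j => p (Fin.succ j)) := rfl
    rw [e', e, e]
    rw [← (Fin.consEquiv (fun _ => Option Bool)).sum_comp, Fintype.sum_prod_type]
    simp only [Fin.consEquiv, Equiv.coe_fn_mk, Fin.prod_univ_succ, Fin.cons_zero, Fin.cons_succ,
      Fintype.sum_option, Fintype.sum_bool, Ex_cons p]
    rw [Finset.mul_sum, Finset.mul_sum, ← Finset.sum_add_distrib, ← Finset.sum_add_distrib,
      ← Finset.sum_add_distrib]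
    apply Finset.sum_congr rfl
    intro c _
    have hc : ∀ (o : Option Bool) (b : Bool) (x : Fin n → Bool),
        (fun j => ov ((Fin.cons o c : Fin (n+1) → Option Bool) j) ((Fin.cons b x : Fin (n+1) → Bool) j))
        = (Fin.cons (ov o b) (fun j => ov (c j) (x j)) : Fin (n+1) → Bool) := by
      intro o b x
      funext j
      refine Fin.cases ?_ (fun k => ?_) j <;> simp
    simp only [hc, ov_none, ov_some, nw_none, nw_some, nz]
    have := hp.2 0
    have hf : p 0 false = 1 - p 0 true := by linarith
    rw [hf]; ring

/-- support of noise -/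
def sp {n : ℕ} (c : Fin n → Option Bool) : Finset (Fin n) :=
  Finset.univ.filter (fun j => c j ≠ none)

theorem nw_sum (δ : ℝ) (n : ℕ) : ∑ c : Fin n → Option Bool, ∏ j, nw δ (c j) = 1 := by
  have h := (Finset.prod_univ_sum (fun _ : Fin n => (Finset.univ : Finset (Option Bool)))
    (fun _ => nw δ)).symm
  rw [Fintype.piFinset_univ] at h
  rw [h]
  apply Finset.prod_eq_one
  intro j _
  simp [Fintype.sum_option, nw_none, nw_some]

theorem nw_nonneg {δ : ℝ} (h0 : 0 ≤ δ) (h1 : 2 * δ ≤ 1) (o : Option Bool) : 0 ≤ nw δ o := by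
  cases o <;> simp [nw] <;> linarith

/-- noise coalition for one round -/
noncomputable def noise1 (δ : ℝ) (h0 : 0 ≤ δ) (h1 : 2 * δ ≤ 1) (n : ℕ) : RC n n :=
  RC.fam (ι := Fin n → Option Bool) (fun c => ∏ j, nw δ (c j)) sp
    (fun c => Finset.prod_nonneg fun j _ => nw_nonneg h0 h1 _) (nw_sum δ n)
    (fun c => (Finset.card_le_univ _).trans (by simp))

theorem noise1_card (δ : ℝ) (h0 : 0 ≤ δ) (h1 : 2 * δ ≤ 1) (n : ℕ) :
    (noise1 δ h0 h1 n).T (fun D => (D.card : ℝ)) = n * (2 * δ) := by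
  change ∑ c : Fin n → Option Bool, (∏ j, nw δ (c j)) * ((sp c).card : ℝ) = _
  induction n with
  | zero => simp [sp]
  | succ n ih =>
    have hs := nw_sum δ n
    rw [← (Fin.consEquiv (fun _ => Option Bool)).sum_comp, Fintype.sum_prod_type]
    have hc : ∀ (o : Option Bool) (c : Fin n → Option Bool),
        ((sp (Fin.cons o c : Fin (n+1) → Option Bool)).card : ℝ)
        = (if o ≠ none then 1 else 0) + ((sp c).card : ℝ) := by
      intro o c
      unfold sp
      simp only [Finset.card_filter, Fin.sum_univ_succ, Fin.cons_zero, Fin.cons_succ]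
      push_cast; rfl
    simp only [Fin.consEquiv, Equiv.coe_fn_mk, Fin.prod_univ_succ, Fin.cons_zero, Fin.cons_succ,
      Fintype.sum_option, Fintype.sum_bool, hc, nw_none, nw_some]
    simp only [mul_assoc, ← Finset.mul_sum, mul_add, Finset.sum_add_distrib]
    rw [ih, ← Finset.sum_mul, ← Finset.sum_mul, hs]
    push_cast
    simp [hs]
    ring

/-- noise coalition for r rounds -/
noncomputable def noise (δ : ℝ) (h0 : 0 ≤ δ) (h1 : 2 * δ ≤ 1) (n : ℕ) : (r : ℕ) → RC n (r * n)
  | 0 => (RC.nil n).weak (by omega)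
  | r+1 => ((noise1 δ h0 h1 n).conv (noise δ h0 h1 n r)).weak (by rw [Nat.succ_mul]; omega)

theorem noise_card (δ : ℝ) (h0 : 0 ≤ δ) (h1 : 2 * δ ≤ 1) (n r : ℕ) :
    (noise δ h0 h1 n r).T (fun D => (D.card : ℝ)) ≤ r * n * (2 * δ) := by
  induction r with
  | zero => simp [noise, RC.weak, RC.nil]
  | succ r ih =>
    change (noise1 δ h0 h1 n).T (fun E => (noise δ h0 h1 n r).T
      (fun E' => ((E ∪ E').card : ℝ))) ≤ _
    have : (noise1 δ h0 h1 n).T (fun E => (noise δ h0 h1 n r).T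
      (fun E' => ((E ∪ E').card : ℝ))) ≤ (noise1 δ h0 h1 n).T (fun E => (E.card:ℝ) +
        (noise δ h0 h1 n r).T (fun E' => (E'.card : ℝ))) := by
      apply RC.mono'
      intro E
      rw [← (noise δ h0 h1 n r).const (E.card : ℝ), ← RC.add]
      apply RC.mono'
      intro E'
      exact_mod_cast Finset.card_union_le _ _
    rw [RC.add, RC.const, noise1_card] at this
    push_cast
    linarith

theorem noise_W (δ : ℝ) (h0 : 0 ≤ δ) (h1 : 2 * δ ≤ 1) {n r : ℕ} (b : Bool)
    (p : Fin r → Fin n → Bool → ℝ) (hp : ∀ i, IsPD (p i))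
    (B : Finset (Fin n)) (f : (Fin r → Fin n → Bool) → Bool) :
    W B b r (fun i => nz δ (p i)) f ≤ (noise δ h0 h1 n r).T (fun C => W (B ∪ C) b r p f) := by
  induction r generalizing B with
  | zero => simp [noise, RC.weak, RC.nil, W]
  | succ r ih =>
    change _ ≤ ∑ c : Fin n → Option Bool, (∏ j, nw δ (c j)) * (noise δ h0 h1 n r).T
      (fun E' => W (B ∪ (sp c ∪ E')) b (r+1) p f)
    rw [W, Ex_nz δ (hp 0)]
    apply Finset.sum_le_sum
    intro c _
    apply mul_le_mul_of_nonneg_left _ (Finset.prod_nonneg fun j _ => nw_nonneg h0 h1 _)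
    set N := noise δ h0 h1 n r with hN
    have hsum : ∀ (s : Finset (Fin n → Bool)) (g : (Fin n → Bool) → Finset (Fin n) → ℝ),
        N.T (fun D => ∑ x ∈ s, g x D) = ∑ x ∈ s, N.T (g x) := by
      intro s g
      induction s using Finset.induction_on with
      | empty => simpa using N.const 0
      | insert a s ha ih2 =>
        simp only [Finset.sum_insert ha]
        rw [N.add, ih2]
    have hsw : ∀ g : Finset (Fin n) → (Fin n → Bool) → ℝ, N.T (fun D => Ex (p 0) (g D)) =
        Ex (p 0) (fun x => N.T (fun D => g D x)) := by
      intro g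
      unfold Ex
      rw [hsum]
      exact Finset.sum_congr rfl fun x _ => N.smul _ _
    simp only [W]
    rw [hsw]
    apply Ex_mono (hp 0)
    intro x
    apply Mx_le
    intro y hy
    refine (ih (fun i => p i.succ) (fun i => hp i.succ) B (fun α => f (Fin.cons y α))).trans ?_
    apply N.mono'
    intro C
    have hy' : y ∈ nb (B ∪ (sp c ∪ C)) x := by
      rw [mem_nb] at hy ⊢
      intro j hj
      simp only [Finset.mem_union, not_or] at hj
      rw [hy j hj.1]
      have : c j = none := by
        by_contra h
        exact hj.2.1 (by simp [sp, h])
      rw [this]; rfl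
    refine (W_mono ?_ b r _ (fun i => hp i.succ) _).trans (le_Mx (fun y => W (B ∪ (sp c ∪ C)) b r
      (fun i => p i.succ) (fun α => f (Fin.cons y α))) hy')
    exact Finset.union_subset_union_right Finset.subset_union_right

/-- combination -/
theorem combine {n Q r : ℕ} (hQ : 2 ≤ Q) (hr : 1 ≤ r) (hn0 : 0 < n) {ε : ℝ} (hε : 0 < ε)
    (hε1 : ε ≤ 1)
    (hn : ∀ i < r, Kf Q (ε / (3 * r)) (et Q (ε / (3 * r)) i) * Q ≤ n)
    (p : Fin r → Fin n → Bool → ℝ) (hp : ∀ i, IsPD (p i)) (f : (Fin r → Fin n → Bool) → Bool) :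
    ∃ (b : Bool) (B : Finset (Fin n)), (B.card : ℝ) ≤ 7 * r * n / Q ∧ 1 - ε ≤ W B b r p f := by
  have hQ0 : 0 < Q := by omega
  have hQ' : (2:ℝ) ≤ Q := by exact_mod_cast hQ
  have hr' : (1:ℝ) ≤ r := by exact_mod_cast hr
  have hn' : (0:ℝ) < n := by exact_mod_cast hn0
  set δ := 1 / (Q:ℝ) with hδ
  have d0 : 0 < δ := by positivity
  have d1 : 2 * δ ≤ 1 := by rw [hδ, mul_one_div, div_le_one (by linarith)]; exact hQ'
  set ε' := ε / (3 * r) with hε'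
  have e0 : 0 < ε' := by positivity
  have e1 : ε' ≤ 1 := by rw [hε', div_le_one (by positivity)]; linarith
  obtain ⟨R, hR⟩ := multi (n := n) hQ0 e0 e1 r hn
  have key := hR (fun i => nz δ (p i)) (fun i => nz_PD d0.le d1 (hp i))
    (fun i j b => nz_ge d1 (hp i) j b) f
  have ηpos := et_pos hQ0 ε' r
  have hex : ∃ b, ∃ D : Finset (Fin n), D.card ≤ r * (3 * (n / Q)) ∧
      1 - r * ε' ≤ W D b r (fun i => nz δ (p i)) f := by
    by_contra hcon
    push Not at hcon
    have : ∀ b, R.T (fun D => ind (1 - r * ε' ≤ W D b r (fun i => nz δ (p i)) f)) ≤ 0 := by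
      intro b
      conv_rhs => rw [← R.const 0]
      apply R.mono
      intro D hD
      rw [ind_false (not_le.mpr (hcon b D hD))]
    have t1 := this true
    have t2 := this false
    linarith
  obtain ⟨b, D, hD, hW⟩ := hex
  have hre : r * ε' = ε / 3 := by rw [hε']; field_simp
  rw [hre] at hW
  set N := noise δ d0.le d1 n r with hN
  have hWN := noise_W δ d0.le d1 b p hp D f
  have hcard := noise_card δ d0.le d1 n r
  by_contra hcon
  push Not at hcon
  have hbig : ∀ C : Finset (Fin n), 1 ≤ (1/ε) * (1 - W (D ∪ C) b r p f)
      + (1 / (4 * δ * r * n)) * (C.card : ℝ) := by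
    intro C
    have w1 := W_le_one (D ∪ C) b r p hp f
    have t1 : 0 ≤ (1/ε) * (1 - W (D ∪ C) b r p f) := mul_nonneg (by positivity) (by linarith)
    have t2 : 0 ≤ (1 / (4 * δ * r * n)) * (C.card : ℝ) := by positivity
    by_cases hC : (C.card : ℝ) ≤ 4 * δ * r * n
    · have h3 := hcon b (D ∪ C) (by
        have c1 : ((D ∪ C).card : ℝ) ≤ D.card + C.card := by exact_mod_cast Finset.card_union_le _ _
        have c2 : (D.card : ℝ) ≤ r * (3 * ((n / Q : ℕ) : ℝ)) := by exact_mod_cast hD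
        have c3 : ((n / Q : ℕ) : ℝ) ≤ n / Q := Nat.cast_div_le
        have c4 : (r:ℝ) * (3 * ((n / Q : ℕ) : ℝ)) ≤ r * (3 * (n / Q)) := by gcongr
        have c5 : 4 * δ * r * n = 4 * r * n / Q := by rw [hδ]; field_simp
        have c6 : 7 * r * n / (Q:ℝ) = r * (3 * (n / Q)) + 4 * r * n / Q := by field_simp; norm_num
        linarith)
      have : 1 ≤ (1/ε) * (1 - W (D ∪ C) b r p f) := by
        rw [one_div, ← div_eq_inv_mul, le_div_iff₀ hε]; linarith
      linarith
    · push Not at hC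
      have : 1 ≤ (1 / (4 * δ * r * n)) * (C.card : ℝ) := by
        rw [one_div, ← div_eq_inv_mul, le_div_iff₀ (by positivity)]; linarith
      linarith
  have hT := N.mono' hbig
  rw [N.const, N.add, N.smul, N.smul, N.sub, N.const] at hT
  have u1 : (1/ε) * (1 - N.T (fun C => W (D ∪ C) b r p f)) ≤ (1/ε) * (ε/3) :=
    mul_le_mul_of_nonneg_left (by linarith) (by positivity)
  have u2 : (1 / (4 * δ * r * n)) * N.T (fun C => (C.card : ℝ)) ≤
      (1 / (4 * δ * r * n)) * (r * n * (2 * δ)) := mul_le_mul_of_nonneg_left hcard (by positivity)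
  have u3 : (1/ε) * (ε/3) = 1/3 := by field_simp
  have u4 : (1 / (4 * δ * r * n)) * (r * n * (2 * δ)) = 1/2 := by field_simp; norm_num
  linarith

end MRB
namespace MRB

/-- value of a strategy -/
noncomputable def VS {n r : ℕ} (B : Finset (Fin n)) (b : Bool) (p : Fin r → Fin n → Bool → ℝ)
    (f : (Fin r → Fin n → Bool) → Bool) (π : Strategy n r B) : ℝ :=
  ∑ α : Fin r → Fin n → Bool, (∏ i, ∏ j, p i j (α i j)) * ind (f (execP B π α) = b)

/-- extension by false -/
noncomputable def exf {n : ℕ} (B : Finset (Fin n)) (x : {j : Fin n // j ∉ B} → Bool) :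
    Fin n → Bool := fun j => if h : j ∉ B then x ⟨j, h⟩ else false

theorem exf_apply {n : ℕ} {B : Finset (Fin n)} (x : Fin n → Bool) {j : Fin n} (hj : j ∉ B) :
    exf B (fun k => x k.val) j = x j := by simp [exf, hj]

theorem nb_exf {n : ℕ} (B : Finset (Fin n)) (x : Fin n → Bool) :
    nb B (exf B (fun k => x k.val)) = nb B x := by
  ext y
  rw [mem_nb, mem_nb]
  refine forall_congr' fun j => forall_congr' fun hj => ?_
  rw [exf_apply x hj]

theorem Mx_exf {n : ℕ} (B : Finset (Fin n)) (F : (Fin n → Bool) → ℝ) (x : Fin n → Bool) :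
    Mx B F (exf B (fun k => x k.val)) = Mx B F x := by
  apply le_antisymm
  · exact Mx_le fun y hy => le_Mx F (by rwa [nb_exf] at hy)
  · exact Mx_le fun y hy => le_Mx F (by rwa [nb_exf])

/-- strategy built from a first response and continuations -/
def mkS {n r : ℕ} (B : Finset (Fin n)) (ys : ({j : Fin n // j ∉ B} → Bool) → Fin n → Bool)
    (ρ : (Fin n → Bool) → Strategy n r B) : Strategy n (r+1) B :=
  fun i => Fin.cases (motive := fun i => (Fin (i.val + 1) → ({j : Fin n // j ∉ B} → Bool)) →
      (Fin n → Bool))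
    (fun h => ys (h 0)) (fun k h => ρ (ys (h 0)) k (fun m => h m.succ)) i

theorem execP_mkS {n r : ℕ} (B : Finset (Fin n))
    (ys : ({j : Fin n // j ∉ B} → Bool) → Fin n → Bool)
    (hys : ∀ x : Fin n → Bool, ys (fun k => x k.val) ∈ nb B x)
    (ρ : (Fin n → Bool) → Strategy n r B) (x : Fin n → Bool) (α : Fin r → Fin n → Bool) :
    execP B (mkS B ys ρ) (Fin.cons x α : Fin (r+1) → Fin n → Bool) =
      (Fin.cons (ys (fun k => x k.val)) (execP B (ρ (ys (fun k => x k.val))) α) :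
        Fin (r+1) → Fin n → Bool) := by
  funext i
  refine Fin.cases ?_ (fun k => ?_) i
  · funext j
    by_cases hj : j ∈ B
    · simp only [execP, hj, if_true]; rfl
    · simp only [execP, hj, if_false]
      exact (mem_nb.mp (hys x) j hj).symm
  · funext j
    by_cases hj : j ∈ B
    · simp only [execP, hj, if_true, Fin.cons_succ]; rfl
    · simp only [execP, hj, if_false, Fin.cons_succ]

theorem strat {n : ℕ} (B : Finset (Fin n)) (b : Bool) (r : ℕ) (p : Fin r → Fin n → Bool → ℝ)
    (hp : ∀ i, IsPD (p i)) (f : (Fin r → Fin n → Bool) → Bool) :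
    ∃ π : Strategy n r B, W B b r p f ≤ VS B b p f π := by
  induction r with
  | zero =>
    refine ⟨fun i => i.elim0, ?_⟩
    have h : ∀ x y : Fin 0 → Fin n → Bool, x = y := fun x y => Subsingleton.elim _ _
    simp only [W, VS, Finset.univ_unique, Finset.sum_singleton, Finset.univ_eq_empty,
      Finset.prod_empty, one_mul]
    exact le_of_eq (congrArg (fun x => ind (f x = b)) (h _ _))
  | succ r ih =>
    choose ρ hρ using fun y : Fin n → Bool =>
      ih (fun i => p i.succ) (fun i => hp i.succ) (fun α => f (Fin.cons y α))
    set G := fun y => W B b r (fun i => p i.succ) (fun α => f (Fin.cons y α)) with hG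
    choose ys hys1 hys2 using fun x : {j : Fin n // j ∉ B} → Bool => exists_Mx B G (exf B x)
    have hys : ∀ x : Fin n → Bool, ys (fun k => x k.val) ∈ nb B x := by
      intro x
      rw [← nb_exf]; exact hys1 _
    refine ⟨mkS B ys ρ, ?_⟩
    rw [W, VS, ← (Fin.consEquiv (fun _ => Fin n → Bool)).sum_comp, Fintype.sum_prod_type, Ex]
    apply Finset.sum_le_sum
    intro x _
    simp only [Fin.consEquiv, Equiv.coe_fn_mk, Fin.prod_univ_succ, Fin.cons_zero, Fin.cons_succ,
      execP_mkS B ys hys ρ, mul_assoc]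
    rw [← Finset.mul_sum]
    apply mul_le_mul_of_nonneg_left _ (Finset.prod_nonneg fun j _ => (hp 0).1 _ _)
    change Mx B G x ≤ _
    rw [← Mx_exf, hys2]
    exact hρ _

theorem IB_ge_pi {n r : ℕ} (μs : Fin r → Fin n → Measure Bool)
    (hμ : ∀ i j, IsProbabilityMeasure (μs i j))
    (f : (Fin r → Fin n → Bool) → Bool) (B : Finset (Fin n)) (b : Bool) (π : Strategy n r B) :
    (IPi μs f B π b).toReal ≤ IB μs f B b := by
  have := hμ
  unfold IB
  apply ENNReal.toReal_mono
  · apply ne_top_of_le_ne_top ENNReal.one_ne_top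
    exact iSup_le fun π => prob_le_one
  · exact le_iSup (fun π => IPi μs f B π b) π

theorem IPi_eq {n r : ℕ} (μs : Fin r → Fin n → Measure Bool)
    (hμ : ∀ i j, IsProbabilityMeasure (μs i j))
    (f : (Fin r → Fin n → Bool) → Bool) (B : Finset (Fin n)) (b : Bool) (π : Strategy n r B) :
    (IPi μs f B π b).toReal = VS B b (fun i j c => (μs i j {c}).toReal) f π := by
  have := hμ
  classical
  unfold IPi VS
  have hS : {α | f (execP B π α) = b} =
    ((Finset.univ.filter (fun α => f (execP B π α) = b) : Finset (Fin r → Fin n → Bool)) :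
      Set (Fin r → Fin n → Bool)) := by ext; simp
  rw [hS, ← sum_measure_singleton, ENNReal.toReal_sum (fun a _ => measure_ne_top _ _),
    Finset.sum_filter]
  apply Finset.sum_congr rfl
  intro α _
  rw [Measure.pi_singleton]
  simp only [Measure.pi_singleton, ENNReal.toReal_prod, ind]
  split_ifs <;> simp

theorem IB_ge {n r : ℕ} (μs : Fin r → Fin n → Measure Bool)
    (hμ : ∀ i j, IsProbabilityMeasure (μs i j))
    (f : (Fin r → Fin n → Bool) → Bool) (B : Finset (Fin n)) (b : Bool)
    (hp : ∀ i, IsPD (fun j c => (μs i j {c}).toReal)) :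
    W B b r (fun i j c => (μs i j {c}).toReal) f ≤ IB μs f B b := by
  obtain ⟨π, hπ⟩ := strat B b r (fun i j c => (μs i j {c}).toReal) hp f
  rw [← IPi_eq μs hμ] at hπ
  exact hπ.trans (IB_ge_pi μs hμ f B b π)

theorem PDm {n : ℕ} (μ : Fin n → Measure Bool) (hμ : ∀ j, IsProbabilityMeasure (μ j)) :
    IsPD (fun j c => (μ j {c}).toReal) := by
  refine ⟨fun j b => ENNReal.toReal_nonneg, fun j => ?_⟩
  have := hμ j
  have h := sum_measure_singleton (μ := μ j) (s := (Finset.univ : Finset Bool))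
  rw [Fintype.sum_bool, Finset.coe_univ, measure_univ] at h
  rw [← ENNReal.toReal_add (measure_ne_top _ _) (measure_ne_top _ _), h]; rfl

theorem trivial_case {n r : ℕ} (μs : Fin r → Fin n → Measure Bool)
    (hμ : ∀ i j, IsProbabilityMeasure (μs i j))
    (f : (Fin r → Fin n → Bool) → Bool) :
    1 ≤ IB μs f Finset.univ (f (fun _ _ => false)) := by
  have := hμ
  refine le_trans ?_ (IB_ge_pi μs hμ f Finset.univ _ (fun _ _ _ => false))
  unfold IPi
  have : {α | f (execP Finset.univ (fun _ _ _ => false : Strategy n r Finset.univ) α) =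
      f (fun _ _ => false)} = Set.univ := by
    ext α
    simp only [Set.mem_ofPred_eq, Set.mem_univ, iff_true]
    congr 1
    funext i j
    simp [execP]
  rw [this, measure_univ]; simp

end MRB
namespace MRB

theorem two_rpow_ge (x : ℝ) (hx : 0 ≤ x) : 1 + x / 2 ≤ (2:ℝ) ^ x := by
  rw [Real.rpow_def_of_pos (by norm_num)]
  have h := Real.add_one_le_exp (Real.log 2 * x)
  have h2 := Real.log_two_gt_d9
  nlinarith

theorem two_rpow_ge1 (x : ℝ) (hx : 1 ≤ x) : x + 1 ≤ (2:ℝ) ^ x := by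
  have h := two_rpow_ge (x - 1) (by linarith)
  have : (2:ℝ) ^ x = 2 * 2 ^ (x - 1) := by
    rw [Real.rpow_sub_one (by norm_num)]; ring
  linarith

theorem two_rpow_ge8 (x : ℝ) (hx : 64 ≤ x) : 65536 * x ^ 8 ≤ (2:ℝ) ^ x := by
  have h := two_rpow_ge (x / 8 - 8) (by linarith)
  have e : (2:ℝ) ^ x = (2 ^ 8 * 2 ^ (x / 8 - 8)) ^ 8 := by
    have : (2:ℝ) ^ 8 * 2 ^ (x / 8 - 8) = 2 ^ (x / 8) := by
      rw [← Real.rpow_natCast, ← Real.rpow_add (by norm_num)]; congr 1; push_cast; ring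
    rw [this, ← Real.rpow_natCast (2 ^ (x/8)), ← Real.rpow_mul (by norm_num)]
    congr 1; push_cast; ring
  have h2 : 4 * x ≤ (2:ℝ) ^ 8 * 2 ^ (x / 8 - 8) := by linarith
  rw [e]
  have := pow_le_pow_left₀ (by linarith) h2 8
  calc 65536 * x ^ 8 = (4 * x) ^ 8 := by ring
    _ ≤ _ := this

theorem exp_le_two_rpow (x : ℝ) (hx : 0 ≤ x) : Real.exp x ≤ (2:ℝ) ^ (2 * x) := by
  rw [Real.rpow_def_of_pos (by norm_num)]
  apply Real.exp_le_exp.mpr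
  have h2 := Real.log_two_gt_d9
  nlinarith

theorem num_step {Y η ε q : ℝ} {Q : ℕ} (hq : q = Q) (hY : 64 ≤ Y) (hη : 0 < η) (hηY : 1 / η ≤ Y)
    (hε : 0 < ε) (hεY : 1 / ε ≤ 3 * Y ^ 2) (hQ1 : 1 ≤ q) (hQ : q ≤ 2 * Y) :
    (Kf Q ε η : ℝ) * Q ≤ 2 ^ (2:ℝ) ^ (2:ℝ) ^ (2:ℝ) ^ Y ∧
    1 / (η / 2 * (1 / (3 * (Kf Q ε η : ℝ)^2 * Q)) ^ (Kf Q ε η)) ≤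
      2 ^ (2:ℝ) ^ (2:ℝ) ^ (2:ℝ) ^ Y := by
  have Q0 : 0 < Q := by
    rcases Nat.eq_zero_or_pos Q with h | h
    · rw [hq, h] at hQ1; norm_num at hQ1
    · exact h
  have hK1 : 1 ≤ Kf Q ε η := Kf_pos Q0 _ _
  have hKle : (Kf Q ε η : ℝ) ≤ q * Real.exp (32 * q^2 / (η * ε)) + 1 := by
    rw [hq]
    exact (Nat.ceil_lt_add_one (by positivity)).le
  rw [← hq]
  generalize Kf Q ε η = K at *
  have hK1' : (1:ℝ) ≤ K := by exact_mod_cast hK1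
  set Z := (2:ℝ) ^ Y with hZ
  have z1 := two_rpow_ge8 Y hY
  have y2 : Y ≤ Y ^ 2 := by nlinarith
  have y5 : Y ^ 2 ≤ Y ^ 5 := pow_le_pow_right₀ (by linarith) (by norm_num)
  have y8 : Y ^ 5 ≤ Y ^ 8 := pow_le_pow_right₀ (by linarith) (by norm_num)
  have zY : Y + 2 + 768 * Y ^ 5 ≤ Z := by linarith
  have z64 : 64 ≤ Z := by linarith
  have zz := two_rpow_ge8 Z z64
  have z8 : Z ≤ Z ^ 8 := le_self_pow₀ (by linarith) (by norm_num)
  have zz5 : 65536 * Z ≤ (2:ℝ) ^ Z := by linarith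
  -- bound on K
  have a1 : 32 * q^2 / (η * ε) ≤ 384 * Y ^ 5 := by
    have : 32 * q^2 / (η * ε) = 32 * q^2 * (1/η) * (1/ε) := by field_simp
    rw [this]
    calc 32 * q^2 * (1/η) * (1/ε) ≤ 32 * (2 * Y)^2 * Y * (3 * Y^2) := by gcongr
      _ = 384 * Y ^ 5 := by ring
  have a2 : Real.exp (32 * q^2 / (η * ε)) ≤ 2 ^ (768 * Y ^ 5) := by
    refine (Real.exp_le_exp.mpr a1).trans ((exp_le_two_rpow _ (by positivity)).trans (le_of_eq ?_))
    congr 1; ring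
  have pY : Y ≤ (2:ℝ) ^ Y := by linarith
  have one2 : ∀ x : ℝ, 0 ≤ x → (1:ℝ) ≤ 2 ^ x := fun x hx =>
    Real.one_le_rpow (by norm_num) hx
  have mono2 : ∀ x y : ℝ, x ≤ y → (2:ℝ) ^ x ≤ 2 ^ y := fun x y h =>
    Real.rpow_le_rpow_of_exponent_le (by norm_num) h
  have add2 : ∀ x y : ℝ, (2:ℝ) ^ (x + y) = 2 ^ x * 2 ^ y := fun x y =>
    Real.rpow_add (by norm_num) x y
  have p5 := one2 (768 * Y ^ 5) (by positivity)
  have a3 : (K:ℝ) ≤ 2 ^ Z := by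
    calc (K:ℝ) ≤ 2 * Y * 2 ^ (768 * Y ^ 5) + 1 := hKle.trans (by gcongr)
      _ ≤ 2 * Y * 2 ^ (768 * Y ^ 5) + 2 * Y * 2 ^ (768 * Y ^ 5) := by nlinarith
      _ = (4 * Y) * 2 ^ (768 * Y ^ 5) := by ring
      _ ≤ (4 * 2 ^ Y) * 2 ^ (768 * Y ^ 5) := by gcongr
      _ = 2 ^ (Y + 2 + 768 * Y ^ 5) := by
        rw [add2, add2]
        have : (2:ℝ) ^ (2:ℝ) = 4 := by norm_num
        rw [this]; ring
      _ ≤ 2 ^ Z := mono2 _ _ zY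
  have q2 : q ≤ 2 ^ Z := by linarith
  have t1 : (2:ℝ) ^ Z * 2 ^ Z ≤ 2 ^ (2:ℝ) ^ Z := by
    rw [← add2]; exact mono2 _ _ (by linarith)
  set V := (2:ℝ) ^ Z with hV
  have v1 : 1 ≤ V := one2 Z (by linarith)
  have t2 : (2:ℝ) ^ V ≤ 2 ^ (2:ℝ) ^ V := mono2 _ _ (by
    have := two_rpow_ge1 V v1; linarith)
  refine ⟨?_, ?_⟩
  · calc (K:ℝ) * q ≤ V * V := by gcongr
      _ ≤ _ := t1.trans t2
  · have e : 1 / (η / 2 * (1 / (3 * (K:ℝ)^2 * q)) ^ K) = 2 * (1/η) * (3 * (K:ℝ)^2 * q) ^ K := by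
      have hKp : (0:ℝ) < K := by linarith
      have hqp : 0 < q := by linarith
      rw [one_div (3 * (K:ℝ)^2 * q), inv_pow]
      field_simp
    rw [e]
    have b1 : 3 * (K:ℝ)^2 * q ≤ 2 ^ (4 * Z) := by
      have : (2:ℝ) ^ (4 * Z) = V ^ 4 := by
        rw [hV, ← Real.rpow_natCast, ← Real.rpow_mul (by norm_num)]; congr 1; push_cast; ring
      rw [this]
      calc 3 * (K:ℝ)^2 * q ≤ V * V ^ 2 * V := by
            gcongr
            linarith
        _ = V ^ 4 := by ring
    have b2 : (3 * (K:ℝ)^2 * q) ^ K ≤ 2 ^ (4 * Z * V) := by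
      calc (3 * (K:ℝ)^2 * q) ^ K ≤ (2 ^ (4 * Z)) ^ K := by
            apply pow_le_pow_left₀ _ b1
            have : 0 < q := by linarith
            positivity
        _ = 2 ^ (4 * Z * K) := by rw [← Real.rpow_natCast, ← Real.rpow_mul (by norm_num)]
        _ ≤ 2 ^ (4 * Z * V) := mono2 _ _ (by gcongr)
    have b3 : 2 * (1/η) ≤ 2 ^ V := by
      have : V ≤ 2 ^ V := by have := two_rpow_ge1 V v1; linarith
      linarith
    calc 2 * (1/η) * (3 * (K:ℝ)^2 * q) ^ K ≤ 2 ^ V * 2 ^ (4 * Z * V) := by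
          have : 0 < q := by linarith
          gcongr
      _ = 2 ^ ((4 * Z + 1) * V) := by rw [← add2]; congr 1; ring
      _ ≤ _ := mono2 _ _ (le_trans (by
        apply mul_le_mul_of_nonneg_right _ (by linarith); linarith) t1)

theorem iterLog_gt {n : ℝ} {j : ℕ} (h : j < logStar n) : 1 < iterLog j n := by
  have := Nat.notMem_of_lt_sInf h
  simpa using this

theorem iterLog_pow {n : ℝ} {j : ℕ} (h : j < logStar n) :
    (2:ℝ) ^ iterLog (j+1) n = iterLog j n := by
  have := iterLog_gt h
  rw [iterLog, Real.rpow_logb (by norm_num) (by norm_num) (by linarith)]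

theorem iterLog_grow {n : ℝ} {k : ℕ} (m : ℕ) (h : k + m < logStar n) :
    iterLog (k + m) n + m ≤ iterLog k n := by
  induction m with
  | zero => simp
  | succ m ih =>
    have h1 := ih (by omega)
    have h2 := iterLog_pow (n := n) (j := k + m) (by omega)
    have h3 := iterLog_gt (n := n) (j := k + m + 1) (by omega)
    have h4 := two_rpow_ge1 _ h3.le
    rw [← add_assoc]
    push_cast
    linarith

theorem et_bound {n : ℝ} {r Q : ℕ} {ε : ℝ} (hr : 4 * r < logStar n)
    (h64 : 64 ≤ iterLog (4 * r) n) (hε : 0 < ε) (hεY : 1 / ε ≤ 3 * (iterLog (4 * r) n) ^ 2)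
    (hQ1 : 1 ≤ Q) (hQ : (Q:ℝ) ≤ 2 * iterLog (4 * r) n) (i : ℕ) (hi : i ≤ r) :
    1 / et Q ε i ≤ iterLog (4 * (r - i)) n ∧
      (i < r → (Kf Q ε (et Q ε i) : ℝ) * Q ≤ n) := by
  have Q1 : (1:ℝ) ≤ Q := by exact_mod_cast hQ1
  have hl : ∀ i ≤ r, iterLog (4 * r) n ≤ iterLog (4 * (r - i)) n := by
    intro i hi
    have := iterLog_grow (n := n) (k := 4 * (r - i)) (4 * i) (by omega)
    rw [show 4 * (r - i) + 4 * i = 4 * r by omega] at this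
    have h0 : (0:ℝ) ≤ ((4 * i : ℕ) : ℝ) := Nat.cast_nonneg _
    linarith
  have hstep : ∀ i < r, 1 / et Q ε i ≤ iterLog (4 * (r - i)) n →
      (Kf Q ε (et Q ε i) : ℝ) * Q ≤ iterLog (4 * (r - (i+1))) n ∧
      1 / et Q ε (i+1) ≤ iterLog (4 * (r - (i+1))) n := by
    intro i hi h
    have hli := hl i hi.le
    have l0 : 0 ≤ iterLog (4 * r) n := by linarith
    have := num_step (Y := iterLog (4 * (r - i)) n) (Q := Q) rfl (h64.trans hli)
      (et_pos hQ1 ε i) h hε (hεY.trans (by gcongr)) Q1 (hQ.trans (by linarith))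
    obtain ⟨k, hk⟩ : ∃ k, k = 4 * (r - (i+1)) := ⟨_, rfl⟩
    rw [show 4 * (r - i) = k + 1 + 1 + 1 + 1 by omega, iterLog_pow (by omega),
      iterLog_pow (by omega), iterLog_pow (by omega), iterLog_pow (by omega)] at this
    rw [← hk]
    exact this
  have main : ∀ i ≤ r, 1 / et Q ε i ≤ iterLog (4 * (r - i)) n := by
    intro i
    induction i with
    | zero =>
      intro _
      simp only [et, Nat.sub_zero]
      linarith
    | succ i ih => exact fun hi => (hstep i (by omega) (ih (by omega))).2
  refine ⟨main i hi, fun hi' => ?_⟩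
  have h1 := (hstep i hi' (main i hi)).1
  have := iterLog_grow (n := n) (k := 0) (4 * (r - (i+1))) (by omega)
  rw [Nat.zero_add] at this
  have h0 : (0:ℝ) ≤ ((4 * (r - (i+1)) : ℕ) : ℝ) := Nat.cast_nonneg _
  have h3 : iterLog 0 n = n := rfl
  linarith

end MRB
/-- over any product measure, any `r`-round protocol with `r < (log* n)/5` can be
biased towards some `b` by a coalition of size `O_ε(n·r·4^r / log^{(4r)} n)`. -/
theorem multi_round_biasing :
    ∀ ε : ℝ, 0 < ε → ε ≤ 1/2 →
    ∃ C : ℝ, C > 0 ∧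
    ∃ n₀ : ℕ, ∀ n : ℕ, n₀ ≤ n →
    ∀ r : ℕ, 1 ≤ r → (r : ℝ) < (logStar n : ℝ) / 5 →
    ∀ μs : Fin r → Fin n → Measure Bool, (∀ i j, IsProbabilityMeasure (μs i j)) →
    ∀ f : (Fin r → Fin n → Bool) → Bool,
    ∃ (b : Bool) (B : Finset (Fin n)),
      (B.card : ℝ) ≤ C * n * r * 4 ^ r / iterLog (4 * r) n ∧
      IB μs f B b ≥ 1 - ε := by
  intro ε hε hε2
  have hie : 0 < 1 / ε := by positivity
  refine ⟨1 / ε + 64, by linarith, 1, ?_⟩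
  intro n hn r hr hrl μs hμ f
  have h5 : 5 * r < logStar n := by
    have : (5:ℝ) * r < logStar n := by linarith
    exact_mod_cast this
  have hn' : (1:ℝ) ≤ n := by exact_mod_cast hn
  have hr' : (1:ℝ) ≤ r := by exact_mod_cast hr
  have h4 : (1:ℝ) ≤ 4 ^ r := one_le_pow₀ (by norm_num)
  have hl0 : 1 < iterLog (4 * r) n := MRB.iterLog_gt (by omega)
  have hlr : (r:ℝ) ≤ iterLog (4 * r) n := by
    have h1 := MRB.iterLog_grow (n := n) (k := 4 * r) r (by omega)
    have h2 := MRB.iterLog_gt (n := n) (j := 4 * r + r) (by omega)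
    linarith
  by_cases hL : 1 / ε + 64 ≤ iterLog (4 * r) n
  · set l := iterLog (4 * r) (n:ℝ) with hl
    obtain ⟨Q, hQdef⟩ : ∃ Q, Q = ⌈l⌉₊ := ⟨_, rfl⟩
    have q1 : l ≤ Q := hQdef ▸ Nat.le_ceil l
    have q2 : (Q:ℝ) ≤ 2 * l := by
      have := (Nat.ceil_lt_add_one (a := l) (by linarith)).le
      rw [hQdef]; linarith
    have q3 : 2 ≤ Q := by
      have : (2:ℝ) ≤ Q := by linarith
      exact_mod_cast this
    have e1 : 1 / (ε / (3 * r)) ≤ 3 * l ^ 2 := by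
      have : 1 / (ε / (3 * r)) = 3 * (r * (1 / ε)) := by field_simp
      rw [this, pow_two]
      gcongr
      linarith
    obtain ⟨b, B, hB, hW⟩ := MRB.combine q3 hr hn hε (by linarith) (fun i hi => by
        have := (MRB.et_bound (n := n) (r := r) (Q := Q) (ε := ε / (3 * r)) (by omega)
          (by linarith) (by positivity) e1 (by omega) q2 i hi.le).2 hi
        exact_mod_cast this)
      (fun i j c => (μs i j {c}).toReal) (fun i => MRB.PDm (μs i) (hμ i)) f
    refine ⟨b, B, hB.trans ?_, hW.trans (MRB.IB_ge μs hμ f B b fun i => MRB.PDm (μs i) (hμ i))⟩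
    calc 7 * r * n / (Q:ℝ) ≤ 7 * r * n / l := by gcongr
      _ ≤ (1 / ε + 64) * n * r * 4 ^ r / l := by
        refine div_le_div_of_nonneg_right ?_ (by linarith)
        have : 7 * ((r:ℝ) * n) * 1 ≤ (1 / ε + 64) * (r * n) * 4 ^ r := by
          gcongr
          linarith
        nlinarith
  · push Not at hL
    refine ⟨_, Finset.univ, ?_, le_trans (by linarith) (MRB.trivial_case μs hμ f)⟩
    rw [Finset.card_univ, Fintype.card_fin, le_div_iff₀ (by linarith)]
    calc (n:ℝ) * iterLog (4 * r) n ≤ n * (1 / ε + 64) := by gcongr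
      _ = (1 / ε + 64) * n * 1 * 1 := by ring
      _ ≤ (1 / ε + 64) * n * r * 4 ^ r := by gcongr
end

section
/- For every ε ∈ (0,1/2] and every β ∈ (0,1) there exists n_0 such that for all n ≥ n_0 the following holds: if an (n,r) coin-flipping protocol f : ({0,1}^n)^r → {0,1} over some product probability measure on ({0,1}^n)^r is ε-resilient against all coalitions of size ⌊βn⌋, then r ≥ (log* n)/5. In other words, over any product distribution, Ω(log* n) rounds are necessary for a protocol to be resilient against coalitions of linear size. -/
open MeasureTheory
open scoped ENNReal

namespace CF

variable {ι : Type} [Fintype ι] [DecidableEq ι]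

/-- expectation over a product weight -/
noncomputable def E (w : ι → Bool → ℝ) (F : (ι → Bool) → ℝ) : ℝ :=
  ∑ x, (∏ i, w i (x i)) * F x

noncomputable def A (w : ι → Bool → ℝ) (i : ι) (F : (ι → Bool) → ℝ) : (ι → Bool) → ℝ :=
  fun x => w i false * F (Function.update x i false) + w i true * F (Function.update x i true)

noncomputable def D (i : ι) (F : (ι → Bool) → ℝ) : (ι → Bool) → ℝ :=
  fun x => F (Function.update x i true) - F (Function.update x i false)

structure IsW (w : ι → Bool → ℝ) : Prop where
  nn : ∀ i b, 0 ≤ w i b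
  one : ∀ i, w i false + w i true = 1

def Indep (i : ι) (F : (ι → Bool) → ℝ) : Prop := ∀ x b, F (Function.update x i b) = F x

lemma sum_split (i : ι) (φ : (ι → Bool) → ℝ) :
    ∑ x, φ x = (1/2) * ∑ x, (φ (Function.update x i false) + φ (Function.update x i true)) := by
  have h1 : ∑ x, φ x = ∑ x, φ (Function.update x i (!(x i))) := by
    let e : (ι → Bool) ≃ (ι → Bool) :=
      { toFun := fun x => Function.update x i (!(x i))
        invFun := fun x => Function.update x i (!(x i))
        left_inv := by intro x; simp
        right_inv := by intro x; simp }
    exact (Equiv.sum_comp e φ).symm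
  have h2 : ∀ x : ι → Bool, φ (Function.update x i false) + φ (Function.update x i true)
      = φ x + φ (Function.update x i (!(x i))) := by
    intro x
    have hx : Function.update x i (x i) = x := Function.update_eq_self i x
    cases hb : x i
    · rw [hb] at hx; rw [hx]; simp
    · rw [hb] at hx; rw [hx]; simp [add_comm]
  simp_rw [h2, Finset.sum_add_distrib, ← h1]; ring

lemma prod_upd (w : ι → Bool → ℝ) (i : ι) (x : ι → Bool) (b : Bool) :
    ∏ j, w j (Function.update x i b j) = w i b * ∏ j ∈ Finset.univ.erase i, w j (x j) := by
  rw [← Finset.mul_prod_erase Finset.univ _ (Finset.mem_univ i)]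
  congr 1
  · simp
  · apply Finset.prod_congr rfl
    intro j hj
    rw [Function.update_of_ne (Finset.ne_of_mem_erase hj)]

lemma E_eq (w : ι → Bool → ℝ) (i : ι) (F : (ι → Bool) → ℝ) :
    E w F = (1/2) * ∑ x, (∏ j ∈ Finset.univ.erase i, w j (x j)) * A w i F x := by
  unfold E
  rw [sum_split i]
  congr 1
  apply Finset.sum_congr rfl
  intro x _
  rw [prod_upd, prod_upd]
  unfold A; ring

lemma A_of_indep {w : ι → Bool → ℝ} (hw : IsW w) {i : ι} {F : (ι → Bool) → ℝ} (h : Indep i F) :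
    A w i F = F := by
  funext x
  unfold A
  rw [h, h, ← add_mul, hw.one, one_mul]

lemma indep_A (w : ι → Bool → ℝ) (i : ι) (F : (ι → Bool) → ℝ) : Indep i (A w i F) := by
  intro x b; simp [A]

lemma E_A {w : ι → Bool → ℝ} (hw : IsW w) (i : ι) (F : (ι → Bool) → ℝ) :
    E w (A w i F) = E w F := by
  rw [E_eq w i, E_eq w i F, A_of_indep hw (indep_A w i F)]

lemma indep_A' (w : ι → Bool → ℝ) (i j : ι) (F : (ι → Bool) → ℝ) (h : Indep j F) :
    Indep j (A w i F) := by
  intro x b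
  by_cases hij : j = i
  · subst hij; exact indep_A w j F x b
  · simp only [A]
    rw [Function.update_comm hij, Function.update_comm hij, h, h]

lemma E_add (w : ι → Bool → ℝ) (F G : (ι → Bool) → ℝ) :
    E w (fun x => F x + G x) = E w F + E w G := by
  simp [E, mul_add, Finset.sum_add_distrib]

lemma E_sub (w : ι → Bool → ℝ) (F G : (ι → Bool) → ℝ) :
    E w (fun x => F x - G x) = E w F - E w G := by
  simp [E, mul_sub, Finset.sum_sub_distrib]

lemma E_smul (w : ι → Bool → ℝ) (c : ℝ) (F : (ι → Bool) → ℝ) :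
    E w (fun x => c * F x) = c * E w F := by
  simp only [E, Finset.mul_sum]
  apply Finset.sum_congr rfl; intros; ring

lemma E_sum {κ : Type} (s : Finset κ) (w : ι → Bool → ℝ) (F : κ → (ι → Bool) → ℝ) :
    E w (fun x => ∑ k ∈ s, F k x) = ∑ k ∈ s, E w (F k) := by
  simp only [E, Finset.mul_sum]
  rw [Finset.sum_comm]

lemma wt_nonneg {w : ι → Bool → ℝ} (hw : IsW w) (x : ι → Bool) : 0 ≤ ∏ i, w i (x i) :=
  Finset.prod_nonneg fun i _ => hw.nn _ _

lemma E_mono {w : ι → Bool → ℝ} (hw : IsW w) {F G : (ι → Bool) → ℝ} (h : ∀ x, F x ≤ G x) :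
    E w F ≤ E w G :=
  Finset.sum_le_sum fun x _ => mul_le_mul_of_nonneg_left (h x) (wt_nonneg hw x)

lemma wt_sum {w : ι → Bool → ℝ} (hw : IsW w) : ∑ x : ι → Bool, ∏ i, w i (x i) = 1 := by
  have := Finset.prod_univ_sum (fun _ : ι => (Finset.univ : Finset Bool)) w
  rw [Fintype.piFinset_univ] at this
  rw [← this]
  apply Finset.prod_eq_one
  intro i _
  rw [Fintype.sum_bool, add_comm]; exact hw.one i

lemma E_const {w : ι → Bool → ℝ} (hw : IsW w) (c : ℝ) : E w (fun _ => c) = c := by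
  unfold E
  rw [← Finset.sum_mul, wt_sum hw, one_mul]

lemma E_nonneg {w : ι → Bool → ℝ} (hw : IsW w) {F : (ι → Bool) → ℝ} (h : ∀ x, 0 ≤ F x) :
    0 ≤ E w F := by
  have := E_mono hw (F := fun _ => 0) h
  rwa [E_const hw] at this

lemma indep_all {F : (ι → Bool) → ℝ} (S : Finset ι) (h : ∀ i ∈ S, Indep i F) (x y : ι → Bool)
    (hxy : ∀ i ∉ S, x i = y i) : F x = F y := by
  induction S using Finset.induction_on generalizing x with
  | empty => congr 1; funext i; exact hxy i (by simp)
  | insert a s ha ih =>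
    rw [← h a (Finset.mem_insert_self _ _) x (y a)]
    apply ih (fun i hi => h i (Finset.mem_insert_of_mem hi))
    intro i hi
    by_cases hia : i = a
    · subst hia; simp
    · rw [Function.update_of_ne hia]; exact hxy i (by simp [hia, hi])

lemma E_congr_w (S : Finset ι) {w w' : ι → Bool → ℝ} (hw : IsW w) (hw' : IsW w')
    (hS : ∀ i ∉ S, w i = w' i) {F : (ι → Bool) → ℝ} (h : ∀ i ∈ S, Indep i F) :
    E w F = E w' F := by
  induction S using Finset.induction_on generalizing w with
  | empty => congr 1; funext i; exact hS i (by simp)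
  | insert a s ha ih =>
    have hw2 : IsW (Function.update w a (w' a)) := by
      constructor
      · intro i b
        by_cases hia : i = a
        · subst hia; simpa using hw'.nn i b
        · rw [Function.update_of_ne hia]; exact hw.nn i b
      · intro i
        by_cases hia : i = a
        · subst hia; simpa using hw'.one i
        · rw [Function.update_of_ne hia]; exact hw.one i
    rw [← ih hw2 _ (fun i hi => h i (Finset.mem_insert_of_mem hi))]
    · rw [E_eq w a, E_eq _ a, A_of_indep hw (h a (by simp)), A_of_indep hw2 (h a (by simp))]
      congr 1
      apply Finset.sum_congr rfl
      intro x _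
      congr 1
      apply Finset.prod_congr rfl
      intro j hj
      rw [Function.update_of_ne (Finset.ne_of_mem_erase hj)]
    · intro i hi
      by_cases hia : i = a
      · subst hia; simp
      · rw [Function.update_of_ne hia]; exact hS i (by simp [hia, hi])

lemma A_sq (w : ι → Bool → ℝ) (hw : IsW w) (i : ι) (G : (ι → Bool) → ℝ) :
    E w (fun x => (G x - A w i G x)^2) = E w (fun x => G x ^2) - E w (fun x => A w i G x ^ 2) := by
  have h : A w i (fun x => (G x - A w i G x)^2) = fun x =>
      A w i (fun x => G x ^ 2) x - A w i G x ^ 2 := by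
    funext x
    have h1 := indep_A w i G
    have := hw.one i
    have e1 : w i false = 1 - w i true := by linarith
    have h2 := h1 x false
    have h3 := h1 x true
    simp only [A] at h2 h3 ⊢
    rw [h2, h3, e1]
    ring
  rw [← E_A hw i, h, E_sub, E_A hw]

lemma D_A_ne (w : ι → Bool → ℝ) {i j : ι} (hij : j ≠ i) (F : (ι → Bool) → ℝ) :
    D j (A w i F) = A w i (D j F) := by
  funext x
  simp only [D, A]
  rw [Function.update_comm hij, Function.update_comm hij, Function.update_comm hij, Function.update_comm hij]
  ring

lemma D_A_eq (w : ι → Bool → ℝ) (i : ι) (F : (ι → Bool) → ℝ) :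
    D i (A w i F) = fun _ => 0 := by
  funext x
  simp [D, A]

lemma D_sub (j : ι) (F G : (ι → Bool) → ℝ) :
    D j (fun x => F x - G x) = fun x => D j F x - D j G x := by
  funext x; simp only [D]; ring

lemma energy_tel (w : ι → Bool → ℝ) (hw : IsW w) (i j : ι) (F : (ι → Bool) → ℝ) :
    E w (fun x => D j (fun x => F x - A w i F x) x ^ 2) =
      E w (fun x => D j F x ^ 2) - E w (fun x => D j (A w i F) x ^ 2) := by
  rw [D_sub]
  by_cases hij : j = i
  · subst hij
    rw [D_A_eq]
    have : E w (fun _ => (0:ℝ)^2) = 0 := by rw [E_const hw]; norm_num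
    rw [this]; simp
  · rw [D_A_ne w hij]
    exact A_sq w hw i (D j F)

lemma A_mono {w : ι → Bool → ℝ} (hw : IsW w) (i : ι) {F G : (ι → Bool) → ℝ} (h : ∀ x, F x ≤ G x)
    (x : ι → Bool) : A w i F x ≤ A w i G x := by
  unfold A
  have := hw.nn i
  gcongr
  · exact this _
  · exact h _
  · exact this _
  · exact h _

/-! two point inequalities -/

lemma ent_term {a m : ℝ} (hm : 0 < m) : a^2 * Real.log (a^2) ≤ a^2 * Real.log m + a^2 * (a^2/m - 1) := by
  by_cases ha : a = 0
  · simp [ha]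
  · have ha2 : 0 < a^2 := by positivity
    have := Real.log_le_sub_one_of_pos (div_pos ha2 hm)
    rw [Real.log_div ha2.ne' hm.ne'] at this
    nlinarith

lemma two_point {p q a b : ℝ} (hp : 0 ≤ p) (hq : 0 ≤ q) (hpq : p + q = 1) :
    p * (a^2 * Real.log (a^2)) + q * (b^2 * Real.log (b^2)) ≤
      (p * a^2 + q * b^2) * Real.log (p * a^2 + q * b^2) + (b - a)^2 := by
  rcases (show 0 ≤ p * a^2 + q * b^2 by positivity).eq_or_lt with hm | hm
  · have h1 : p * a^2 = 0 := by nlinarith [mul_nonneg hp (sq_nonneg a), mul_nonneg hq (sq_nonneg b)]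
    have h2 : q * b^2 = 0 := by nlinarith [mul_nonneg hp (sq_nonneg a), mul_nonneg hq (sq_nonneg b)]
    rw [← mul_assoc, ← mul_assoc, h1, h2]
    simp; positivity
  · set m := p * a^2 + q * b^2 with hmdef
    have h1 := mul_le_mul_of_nonneg_left (ent_term (a := a) hm) hp
    have h2 := mul_le_mul_of_nonneg_left (ent_term (a := b) hm) hq
    have key : p * (a^2 * (a^2/m - 1)) + q * (b^2 * (b^2/m - 1)) ≤ (b-a)^2 := by
      have e : p * (a^2 * (a^2/m - 1)) + q * (b^2 * (b^2/m - 1)) = (p * a^4 + q * b^4 - m^2) / m := by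
        field_simp
        rw [hmdef]; ring
      rw [e, div_le_iff₀ hm]
      have hq' : q = 1 - p := by linarith
      have : p * a^4 + q * b^4 - m^2 = p * q * (a+b)^2 * (b-a)^2 := by
        rw [hmdef, hq']; ring
      rw [this, mul_comm]
      apply mul_le_mul_of_nonneg_left _ (sq_nonneg _)
      rw [hmdef, hq']
      have hp1 : p ≤ 1 := by linarith
      nlinarith [mul_nonneg hp (sq_nonneg (p * a - (1-p) * b)), sq_nonneg (p * a - (1-p) * b)]
    have : (p * a^2 + q * b^2) * Real.log m = p * (a^2 * Real.log m) + q * (b^2 * Real.log m) := by ring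
    rw [← hmdef] at this
    nlinarith

lemma sqrt_tri {p q a b c d : ℝ} (hp : 0 ≤ p) (hq : 0 ≤ q) :
    (√(p * a^2 + q * b^2) - √(p * c^2 + q * d^2))^2 ≤ p * (a-c)^2 + q * (b-d)^2 := by
  set u := p * a^2 + q * b^2
  set v := p * c^2 + q * d^2
  have hu : 0 ≤ u := by positivity
  have hv : 0 ≤ v := by positivity
  have h : p * a * c + q * b * d ≤ √u * √v := by
    rw [← Real.sqrt_mul hu]
    apply Real.le_sqrt_of_sq_le
    have : u * v - (p * a * c + q * b * d)^2 = p * q * (a * d - b * c)^2 := by simp only [u, v]; ring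
    have : 0 ≤ p * q * (a * d - b * c)^2 := by positivity
    linarith
  have e1 := Real.sq_sqrt hu
  have e2 := Real.sq_sqrt hv
  have e3 : p * (a-c)^2 + q * (b-d)^2 = u + v - 2 * (p * a * c + q * b * d) := by simp only [u, v]; ring
  rw [e3]
  nlinarith

lemma lsi_step {w : ι → Bool → ℝ} (hw : IsW w) (i : ι) (h : (ι → Bool) → ℝ) :
    ∃ H : (ι → Bool) → ℝ, (∀ j, Indep j h → Indep j H) ∧ Indep i H ∧
      E w (fun x => H x ^ 2) = E w (fun x => h x ^ 2) ∧
      (∀ j, E w (fun x => D j H x ^ 2) ≤ E w (fun x => D j h x ^ 2)) ∧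
      E w (fun x => h x ^ 2 * Real.log (h x ^ 2)) ≤
        E w (fun x => H x ^ 2 * Real.log (H x ^ 2)) + E w (fun x => D i h x ^ 2) := by
  have hA : ∀ x, 0 ≤ A w i (fun x => h x ^ 2) x := by
    intro x; unfold A
    have := hw.nn i
    have h1 := this true
    have h2 := this false
    positivity
  have hsq : ∀ x, (√(A w i (fun x => h x ^ 2) x))^2 = A w i (fun x => h x ^ 2) x :=
    fun x => Real.sq_sqrt (hA x)
  refine ⟨fun x => √(A w i (fun x => h x ^ 2) x), ?_, ?_, ?_, ?_, ?_⟩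
  · intro j hj x b
    have : Indep j (fun x => h x ^ 2) := fun x b => by simp only [hj x b]
    simp only [indep_A' w i j _ this x b]
  · intro x b
    simp only [indep_A w i _ x b]
  · simp_rw [hsq]
    exact E_A hw i _
  · intro j
    by_cases hij : j = i
    · subst hij
      have : ∀ x, D j (fun x => √(A w j (fun x => h x ^ 2) x)) x = 0 := by
        intro x; simp only [D, indep_A w j _ x, sub_self]
      simp_rw [this]
      rw [show (fun _ : ι → Bool => (0:ℝ)^2) = fun _ => 0 by simp, E_const hw]
      exact E_nonneg hw fun x => sq_nonneg _
    · rw [← E_A hw i (fun x => D j h x ^ 2)]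
      apply E_mono hw
      intro x
      simp only [D, A]
      rw [Function.update_comm hij, Function.update_comm hij, Function.update_comm hij, Function.update_comm hij]
      exact sqrt_tri (hw.nn i _) (hw.nn i _)
  · simp_rw [hsq]
    rw [← E_A hw i, ← E_add]
    apply E_mono hw
    intro x
    simp only [A, D]
    exact two_point (hw.nn i _) (hw.nn i _) (hw.one i)

lemma lsi_S {w : ι → Bool → ℝ} (hw : IsW w) (h : (ι → Bool) → ℝ) (S : Finset ι) :
    ∃ H : (ι → Bool) → ℝ, (∀ i ∈ S, Indep i H) ∧
      E w (fun x => H x ^ 2) = E w (fun x => h x ^ 2) ∧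
      (∀ j, E w (fun x => D j H x ^ 2) ≤ E w (fun x => D j h x ^ 2)) ∧
      E w (fun x => h x ^ 2 * Real.log (h x ^ 2)) ≤
        E w (fun x => H x ^ 2 * Real.log (H x ^ 2)) + ∑ i ∈ S, E w (fun x => D i h x ^ 2) := by
  induction S using Finset.induction_on with
  | empty => exact ⟨h, by simp, rfl, fun _ => le_rfl, by simp⟩
  | insert a s ha ih =>
    obtain ⟨H, h1, h2, h3, h4⟩ := ih
    obtain ⟨H', g0, g1, g2, g3, g4⟩ := lsi_step hw a H
    refine ⟨H', ?_, g2.trans h2, fun j => (g3 j).trans (h3 j), ?_⟩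
    · intro i hi
      rcases Finset.mem_insert.1 hi with rfl | hi
      · exact g1
      · exact g0 i (h1 i hi)
    · rw [Finset.sum_insert ha]
      have := h3 a
      linarith

lemma lsi {w : ι → Bool → ℝ} (hw : IsW w) (h : (ι → Bool) → ℝ) :
    E w (fun x => h x ^ 2 * Real.log (h x ^ 2)) ≤
      E w (fun x => h x ^ 2) * Real.log (E w (fun x => h x ^ 2)) + ∑ i, E w (fun x => D i h x ^ 2) := by
  obtain ⟨H, h1, h2, h3, h4⟩ := lsi_S hw h Finset.univ
  have hc : ∀ x, H x = H (fun _ => false) := fun x => indep_all Finset.univ h1 x _ (by simp)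
  have e : H = fun _ => H (fun _ => false) := funext hc
  rw [e, E_const hw] at h2
  rw [e, E_const hw, h2] at h4
  exact h4

lemma lsi_lower {w : ι → Bool → ℝ} (hw : IsW w) (d : (ι → Bool) → ℝ) (L : ℝ) :
    2 * (L + 1) * E w (fun x => d x ^ 2) - 2 * Real.exp L * √(E w (fun x => d x ^ 2)) * E w (fun x => |d x|)
      ≤ ∑ i, E w (fun x => D i d x ^ 2) := by
  have h := lsi hw d
  set m := E w (fun x => d x ^ 2) with hm
  have hm0 : 0 ≤ m := E_nonneg hw fun x => sq_nonneg _
  rcases hm0.eq_or_lt with h0 | h0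
  · rw [← h0]; simp
    exact Finset.sum_nonneg fun i _ => E_nonneg hw fun x => sq_nonneg _
  · have key : ∀ x, (2 * (L + 1) + Real.log m) * d x ^ 2 - (2 * Real.exp L * √m) * |d x| ≤
        d x ^ 2 * Real.log (d x ^ 2) := by
      intro x
      by_cases hd : d x = 0
      · simp [hd]
      · have ha : 0 < |d x| := abs_pos.2 hd
        have hs : 0 < √m := Real.sqrt_pos.2 h0
        have h1 := Real.log_le_sub_one_of_pos (show 0 < Real.exp L * √m / |d x| by positivity)
        rw [Real.log_div (by positivity) ha.ne', Real.log_mul (by positivity) hs.ne', Real.log_exp,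
          Real.log_sqrt hm0] at h1
        have e1 : Real.log (d x ^ 2) = 2 * Real.log |d x| := by
          rw [← sq_abs, Real.log_pow]; norm_num
        rw [e1, ← sq_abs (d x)]
        have h2 := mul_le_mul_of_nonneg_left h1 (show 0 ≤ 2 * |d x|^2 by positivity)
        have e2 : 2 * |d x|^2 * (Real.exp L * √m / |d x| - 1) = 2 * Real.exp L * √m * |d x| - 2 * |d x|^2 := by
          field_simp
        rw [e2] at h2
        nlinarith
    have := E_mono hw key
    rw [E_sub, E_smul, E_smul, ← hm] at this
    nlinarith

lemma kkl_S {w : ι → Bool → ℝ} (hw : IsW w) (f : (ι → Bool) → ℝ) (hf0 : ∀ x, 0 ≤ f x)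
    (hf1 : ∀ x, f x ≤ 1) (L : ℝ)
    (hθ : ∀ i, E w (fun x => |f x - A w i f x|) ≤ Real.exp (-2 * L)) (S : Finset ι) :
    ∃ F : (ι → Bool) → ℝ, (∀ i ∈ S, Indep i F) ∧ E w F = E w f ∧ (∀ x, 0 ≤ F x) ∧ (∀ x, F x ≤ 1) ∧
      (∀ i, E w (fun x => |F x - A w i F x|) ≤ E w (fun x => |f x - A w i f x|)) ∧
      2 * (L + 1) * (E w (fun x => f x ^ 2) - E w (fun x => F x ^ 2)) ≤
        2 * ∑ i ∈ S, E w (fun x => |f x - A w i f x|) +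
        (∑ j, E w (fun x => D j f x ^ 2) - ∑ j, E w (fun x => D j F x ^ 2)) := by
  induction S using Finset.induction_on with
  | empty => exact ⟨f, by simp, rfl, hf0, hf1, fun _ => le_rfl, by simp⟩
  | insert a s ha ih =>
    obtain ⟨F, h1, h2, h3, h4, h5, h6⟩ := ih
    refine ⟨A w a F, ?_, (E_A hw a F).trans h2, ?_, ?_, ?_, ?_⟩
    · intro i hi
      rcases Finset.mem_insert.1 hi with rfl | hi
      · exact indep_A _ _ _
      · exact indep_A' _ _ _ _ (h1 i hi)
    · intro x
      have := A_mono hw a (F := fun _ => 0) h3 x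
      rwa [A_of_indep hw (fun _ _ => rfl)] at this
    · intro x
      have := A_mono hw a (G := fun _ => 1) h4 x
      rwa [A_of_indep hw (F := fun _ => 1) (fun _ _ => rfl)] at this
    · intro i
      refine le_trans ?_ (h5 i)
      rw [← E_A hw a (fun x => |F x - A w i F x|)]
      apply E_mono hw
      intro x
      by_cases hia : i = a
      · subst hia
        rw [A_of_indep hw (indep_A w i F)]
        simp only [sub_self, abs_zero]
        have := A_mono hw i (F := fun _ => 0) (G := fun x => |F x - A w i F x|) (fun x => abs_nonneg _) x
        rwa [A_of_indep hw (fun _ _ => rfl)] at this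
      · simp only [A]
        rw [Function.update_comm hia, Function.update_comm hia, Function.update_comm hia, Function.update_comm hia]
        have n0 := hw.nn a false
        have n1 := hw.nn a true
        set F00 := F (Function.update (Function.update x a false) i false)
        set F01 := F (Function.update (Function.update x a false) i true)
        set F10 := F (Function.update (Function.update x a true) i false)
        set F11 := F (Function.update (Function.update x a true) i true)
        set F0 := F (Function.update x a false)
        set F1 := F (Function.update x a true)
        have e : w a false * F0 + w a true * F1 - (w i false * (w a false * F00 + w a true * F10) +
          w i true * (w a false * F01 + w a true * F11)) =
          w a false * (F0 - (w i false * F00 + w i true * F01)) +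
          w a true * (F1 - (w i false * F10 + w i true * F11)) := by ring
        rw [e]
        refine (abs_add_le _ _).trans ?_
        rw [abs_mul, abs_mul, abs_of_nonneg n0, abs_of_nonneg n1]
    · have hl := lsi_lower hw (fun x => F x - A w a F x) L
      simp_rw [energy_tel w hw a _ F] at hl
      rw [A_sq w hw a F, Finset.sum_sub_distrib] at hl
      rw [Finset.sum_insert ha]
      set u := E w (fun x => |f x - A w a f x|) with hu
      have hu' := h5 a
      rw [← hu] at hu'
      set u' := E w (fun x => |F x - A w a F x|) with hu1
      have hu'0 : 0 ≤ u' := E_nonneg hw fun x => abs_nonneg _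
      have hd2 : E w (fun x => F x ^ 2) - E w (fun x => A w a F x ^ 2) ≤ u' := by
        rw [← A_sq w hw a F]
        apply E_mono hw
        intro x
        have b0 : 0 ≤ A w a F x := by
          have := A_mono hw a (F := fun _ => 0) h3 x
          rwa [A_of_indep hw (fun _ _ => rfl)] at this
        have b1 : A w a F x ≤ 1 := by
          have := A_mono hw a (G := fun _ => 1) h4 x
          rwa [A_of_indep hw (F := fun _ => 1) (fun _ _ => rfl)] at this
        have : |F x - A w a F x| ≤ 1 := by
          rw [abs_le]; constructor <;> linarith [h3 x, h4 x]
        rw [← sq_abs]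
        nlinarith [abs_nonneg (F x - A w a F x)]
      have hs : √(E w (fun x => F x ^ 2) - E w (fun x => A w a F x ^ 2)) ≤ Real.exp (-L) := by
        rw [Real.sqrt_le_left (Real.exp_pos _).le, ← Real.exp_nat_mul]
        refine hd2.trans (hu'.trans ((hθ a).trans (le_of_eq ?_)))
        congr 1; push_cast; ring
      have hs2 : Real.exp L * √(E w (fun x => F x ^ 2) - E w (fun x => A w a F x ^ 2)) ≤ 1 := by
        calc _ ≤ Real.exp L * Real.exp (-L) := by gcongr
          _ = 1 := by rw [← Real.exp_add]; simp
      have := mul_le_mul_of_nonneg_right hs2 hu'0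
      nlinarith

lemma kkl {w : ι → Bool → ℝ} (hw : IsW w) (f : (ι → Bool) → ℝ) (hf : ∀ x, f x = 0 ∨ f x = 1)
    (L : ℝ) (hθ : ∀ i, E w (fun x => D i f x ^ 2) ≤ Real.exp (-2 * L)) :
    2 * (L + 1) * (E w f * (1 - E w f)) ≤ 3 * ∑ j, E w (fun x => D j f x ^ 2) := by
  have hu : ∀ i, E w (fun x => |f x - A w i f x|) ≤ E w (fun x => D i f x ^ 2) := by
    intro i
    apply E_mono hw
    intro x
    have hx : f x = f (Function.update x i false) ∨ f x = f (Function.update x i true) := by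
      have hx : Function.update x i (x i) = x := Function.update_eq_self i x
      cases hb : x i
      · rw [hb] at hx; left; rw [hx]
      · rw [hb] at hx; right; rw [hx]
    have n0 := hw.nn i false
    have n1 := hw.nn i true
    have n2 := hw.one i
    simp only [A, D]
    rcases hf (Function.update x i false) with e0 | e0 <;>
    rcases hf (Function.update x i true) with e1 | e1 <;>
    rcases hx with hx | hx <;>
    rw [hx] <;> simp only [e0, e1] <;> norm_num <;> (try rw [abs_le]) <;> (try constructor) <;>
      first | linarith | (rw [n2]; simp)
  obtain ⟨F, h1, h2, h3, h4, h5, h6⟩ := kkl_S hw f (fun x => by rcases hf x with h | h <;> simp [h])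
    (fun x => by rcases hf x with h | h <;> simp [h]) L (fun i => (hu i).trans (hθ i)) Finset.univ
  have hc : ∀ x, F x = F (fun _ => false) := fun x => indep_all Finset.univ h1 x _ (by simp)
  have e : F = fun _ => F (fun _ => false) := funext hc
  have eF : F (fun _ => false) = E w f := by
    rw [← h2]; conv_rhs => rw [e]
    rw [E_const hw]
  have e2 : E w (fun x => F x ^ 2) = E w f ^ 2 := by
    rw [e, eF, E_const hw]
  have e3 : E w (fun x => f x ^ 2) = E w f := by
    congr 1; funext x; rcases hf x with h | h <;> simp [h]
  have h7 : 0 ≤ ∑ j, E w (fun x => D j F x ^ 2) :=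
    Finset.sum_nonneg fun i _ => E_nonneg hw fun x => sq_nonneg _
  have h8 : ∑ i, E w (fun x => |f x - A w i f x|) ≤ ∑ j, E w (fun x => D j f x ^ 2) :=
    Finset.sum_le_sum fun i _ => hu i
  rw [e2, e3] at h6
  have : E w f * (1 - E w f) = E w f - E w f ^ 2 := by ring
  rw [this]
  linarith


/-! coalition maximum -/

def mrg (B : Finset ι) (z x : ι → Bool) : ι → Bool := fun j => if j ∈ B then z j else x j

noncomputable def M (B : Finset ι) (F : (ι → Bool) → ℝ) : (ι → Bool) → ℝ :=
  fun x => ⨆ z, F (mrg B z x)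

lemma le_M (B : Finset ι) (F : (ι → Bool) → ℝ) (z x : ι → Bool) : F (mrg B z x) ≤ M B F x :=
  le_ciSup (f := fun z => F (mrg B z x)) (Set.finite_range _).bddAbove z

lemma mrg_self (B : Finset ι) (x : ι → Bool) : mrg B x x = x := by
  funext j; simp [mrg]

lemma self_le_M (B : Finset ι) (F : (ι → Bool) → ℝ) (x : ι → Bool) : F x ≤ M B F x := by
  have := le_M B F x x
  rwa [mrg_self] at this

lemma M_le {B : Finset ι} {F : (ι → Bool) → ℝ} {x : ι → Bool} {c : ℝ} (h : ∀ z, F (mrg B z x) ≤ c) :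
    M B F x ≤ c := ciSup_le h

lemma M_ex (B : Finset ι) (F : (ι → Bool) → ℝ) (x : ι → Bool) : ∃ z, F (mrg B z x) = M B F x :=
  exists_eq_ciSup_of_finite (f := fun z => F (mrg B z x))

lemma M_M (B C : Finset ι) (F : (ι → Bool) → ℝ) : M B (M C F) = M (B ∪ C) F := by
  funext x
  apply le_antisymm
  · apply M_le; intro z
    apply M_le; intro z'
    have : mrg C z' (mrg B z x) = mrg (B ∪ C) (mrg C z' z) x := by
      funext j; by_cases h1 : j ∈ B <;> by_cases h2 : j ∈ C <;> simp [mrg, h1, h2]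
    rw [this]; exact le_M _ _ _ _
  · apply M_le; intro z
    have : mrg (B ∪ C) z x = mrg C z (mrg B z x) := by
      funext j; by_cases h1 : j ∈ B <;> by_cases h2 : j ∈ C <;> simp [mrg, h1, h2]
    rw [this]
    exact (le_M _ _ _ _).trans (le_M _ _ _ _)

lemma M_mono {B C : Finset ι} (h : B ⊆ C) (F : (ι → Bool) → ℝ) (x : ι → Bool) : M B F x ≤ M C F x := by
  rw [← Finset.union_sdiff_of_subset h, Finset.union_comm, ← M_M]
  exact self_le_M _ _ _

lemma M_mono_F (B : Finset ι) {F G : (ι → Bool) → ℝ} (h : ∀ x, F x ≤ G x) (x : ι → Bool) :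
    M B F x ≤ M B G x := M_le fun z => (h _).trans (le_M _ _ _ _)

lemma M_bool (B : Finset ι) {F : (ι → Bool) → ℝ} (h : ∀ x, F x = 0 ∨ F x = 1) (x : ι → Bool) :
    M B F x = 0 ∨ M B F x = 1 := by
  obtain ⟨z, hz⟩ := M_ex B F x
  rw [← hz]; exact h _

lemma M_indep {B : Finset ι} {i : ι} (hi : i ∈ B) (F : (ι → Bool) → ℝ) : Indep i (M B F) := by
  intro x b
  have : ∀ z, mrg B z (Function.update x i b) = mrg B z x := by
    intro z; funext j
    by_cases h : j ∈ B
    · simp [mrg, h]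
    · have : j ≠ i := by rintro rfl; exact h hi
      simp [mrg, h, this]
  simp [M, this]

lemma M_empty (F : (ι → Bool) → ℝ) : M ∅ F = F := by
  funext x
  have : ∀ z, mrg ∅ z x = x := by intro z; funext j; simp [mrg]
  simp [M, this]

lemma M_single_ge (i : ι) (F : (ι → Bool) → ℝ) (x : ι → Bool) (b : Bool) :
    F (Function.update x i b) ≤ M {i} F x := by
  have : Function.update x i b = mrg {i} (fun _ => b) x := by
    funext j
    by_cases h : j = i
    · subst h; simp [mrg]
    · simp [mrg, h]
  rw [this]; exact le_M _ _ _ _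

lemma inc {w : ι → Bool → ℝ} (hw : IsW w) {lam : ℝ} (hl : ∀ i b, lam ≤ w i b)
    {g : (ι → Bool) → ℝ} (hg : ∀ x, g x = 0 ∨ g x = 1) (i : ι) :
    lam * E w (fun x => D i g x ^ 2) ≤ E w (M {i} g) - E w g := by
  rw [← E_A hw i g, ← E_smul, ← E_sub]
  apply E_mono hw
  intro x
  have h0 := M_single_ge i g x false
  have h1 := M_single_ge i g x true
  have n0 := hl i false
  have n1 := hl i true
  have n2 := hw.one i
  simp only [A, D]
  rcases hg (Function.update x i false) with e0 | e0 <;>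
  rcases hg (Function.update x i true) with e1 | e1 <;>
  rw [e0] at h0 ⊢ <;> rw [e1] at h1 ⊢ <;> nlinarith

/-! random process -/

def Good (v : Finset ι → ℝ) (ε θ : ℝ) (C : Finset ι) {m : ℕ} (ω : Fin m → ι) : Prop :=
  ∃ K : Finset ι, (K.card : ℝ) * θ ≤ 1 - v C ∧ 1 - ε ≤ v (C ∪ K ∪ Finset.univ.image ω)

lemma closure_ex (v : Finset ι → ℝ) (ε θ : ℝ) (hθ : 0 < θ) (C0 : Finset ι) :
    ∃ C, C0 ⊆ C ∧ v C0 + θ * ((C \ C0).card : ℝ) ≤ v C ∧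
      (∀ i, v (insert i C) < v C + θ) := by
  classical
  let T := Finset.univ.filter fun C : Finset ι => C0 ⊆ C ∧ v C0 + θ * ((C \ C0).card : ℝ) ≤ v C
  have hT : T.Nonempty := ⟨C0, by simp [T]⟩
  obtain ⟨C, hC, hmax⟩ := Finset.exists_max_image T Finset.card hT
  have hC' := (Finset.mem_filter.1 hC).2
  refine ⟨C, hC'.1, hC'.2, ?_⟩
  intro i
  by_contra hcon
  push Not at hcon
  have hi : i ∉ C := by
    intro hi
    rw [Finset.insert_eq_of_mem hi] at hcon; linarith
  have : insert i C ∈ T := by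
    simp only [T, Finset.mem_filter, Finset.mem_univ, true_and]
    refine ⟨hC'.1.trans (Finset.subset_insert _ _), ?_⟩
    have h1 : insert i C \ C0 = insert i (C \ C0) :=
      Finset.insert_sdiff_of_notMem _ (fun h => hi (hC'.1 h))
    rw [h1, Finset.card_insert_of_notMem (by simp [hi])]
    push_cast
    linarith [hC'.2]
  have := hmax _ this
  rw [Finset.card_insert_of_notMem hi] at this
  omega

open Classical in
lemma process (v : Finset ι → ℝ) (p ε θ T : ℝ) (hθ : 0 < θ) (hT : 0 ≤ T)
    (hmono : ∀ B C, B ⊆ C → v B ≤ v C) (hle : ∀ B, v B ≤ 1)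
    (hinc : ∀ C, p ≤ v C → v C < 1 - ε → (∀ i, v (insert i C) < v C + θ) →
      T ≤ ∑ i, (v (insert i C) - v C)) (m : ℕ) :
    ∀ C0, p ≤ v C0 →
    (m : ℝ) * T * ∑ ω : Fin m → ι, (if Good v ε θ C0 ω then (0:ℝ) else 1) ≤
      (Fintype.card ι : ℝ) * (Fintype.card ι : ℝ)^m * (1 - v C0) := by
  induction m with
  | zero =>
    intro C0 _
    have := hle C0
    simp
    have : (0:ℝ) ≤ Fintype.card ι := by positivity
    nlinarith [hle C0]
  | succ m ih =>
    intro C0 hC0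
    obtain ⟨C, h1, h2, h3⟩ := closure_ex v ε θ hθ C0
    have hc0 : (0:ℝ) ≤ θ * ((C \ C0).card : ℝ) := by positivity
    have hN : (0:ℝ) ≤ Fintype.card ι := by positivity
    by_cases hv : 1 - ε ≤ v C
    · have : ∀ ω : Fin (m+1) → ι, Good v ε θ C0 ω := by
        intro ω
        refine ⟨C \ C0, ?_, ?_⟩
        · linarith [hle C]
        · refine hv.trans (hmono _ _ ?_)
          rw [Finset.union_sdiff_of_subset h1]
          exact Finset.subset_union_left
      simp only [this, if_true, Finset.sum_const_zero, mul_zero]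
      have := hle C0
      have : 0 ≤ 1 - v C0 := by linarith
      positivity
    · push Not at hv
      have hp : p ≤ v C := hC0.trans (hmono _ _ h1)
      have hinc' := hinc C hp hv h3
      set N : ℝ := ((Fintype.card ι : ℕ) : ℝ) with hNdef
      set Q := ∑ ω : Fin (m+1) → ι, (if Good v ε θ C0 ω then (0:ℝ) else 1) with hQ
      have hQ1 : Q ≤ N^(m+1) := by
        calc Q ≤ ∑ ω : Fin (m+1) → ι, (1:ℝ) := Finset.sum_le_sum fun ω _ => by split_ifs <;> norm_num
          _ = N^(m+1) := by simp [hNdef]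
      have hQ2 : Q ≤ ∑ i, ∑ ω : Fin m → ι, (if Good v ε θ (insert i C) ω then (0:ℝ) else 1) := by
        rw [hQ, ← Equiv.sum_comp (Fin.consEquiv fun _ => ι), Fintype.sum_prod_type]
        apply Finset.sum_le_sum; intro i _
        apply Finset.sum_le_sum; intro ω _
        have : Good v ε θ (insert i C) ω → Good v ε θ C0 (Fin.consEquiv (fun _ => ι) (i, ω)) := by
          rintro ⟨K, hK1, hK2⟩
          refine ⟨K ∪ (C \ C0), ?_, ?_⟩
          · have a1 : ((K ∪ (C \ C0)).card : ℝ) ≤ K.card + (C \ C0).card := by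
              exact_mod_cast Finset.card_union_le _ _
            have a2 := hmono C (insert i C) (Finset.subset_insert _ _)
            nlinarith
          · refine hK2.trans (hmono _ _ ?_)
            intro j hj
            simp only [Finset.mem_union, Finset.mem_insert, Finset.mem_image, Finset.mem_univ, true_and,
              Finset.mem_sdiff, Fin.consEquiv, Equiv.coe_fn_mk] at hj ⊢
            rcases hj with ((rfl | hj) | hj) | ⟨a, rfl⟩
            · right; exact ⟨0, by simp⟩
            · by_cases hj0 : j ∈ C0
              · exact Or.inl (Or.inl hj0)
              · exact Or.inl (Or.inr (Or.inr ⟨hj, hj0⟩))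
            · exact Or.inl (Or.inr (Or.inl hj))
            · right; exact ⟨a.succ, by simp⟩
        by_cases hg : Good v ε θ (insert i C) ω
        · rw [if_pos hg, if_pos (this hg)]
        · rw [if_neg hg]; split_ifs <;> norm_num
      have hmT : (0:ℝ) ≤ m * T := by positivity
      have h5 : (m:ℝ) * T * Q ≤ ∑ i, N * N^m * (1 - v (insert i C)) := by
        refine (mul_le_mul_of_nonneg_left hQ2 hmT).trans ?_
        rw [Finset.mul_sum]
        exact Finset.sum_le_sum fun i _ => ih _ (hp.trans (hmono _ _ (Finset.subset_insert _ _)))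
      have h6 : ∑ i, N * N^m * (1 - v (insert i C)) = N * N^m * (N * (1 - v C) - ∑ i, (v (insert i C) - v C)) := by
        rw [← Finset.mul_sum]
        congr 1
        simp only [Finset.sum_sub_distrib, Finset.sum_const, Finset.card_univ, nsmul_eq_mul, ← hNdef]
        ring
      have h7 : N * N^m * (N * (1 - v C) - ∑ i, (v (insert i C) - v C)) ≤ N * N^m * (N * (1 - v C0) - T) := by
        apply mul_le_mul_of_nonneg_left _ (by positivity)
        have := mul_le_mul_of_nonneg_left (hmono _ _ h1) hN
        linarith
      have h8 := mul_le_mul_of_nonneg_left hQ1 hT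
      push_cast
      rw [pow_succ] at h8 ⊢
      nlinarith

/-! resampling -/

noncomputable def mix (δ : ℝ) (w : ι → Bool → ℝ) : ι → Bool → ℝ := fun i b => (1 - δ) * w i b + δ / 2

noncomputable def cw (ι : Type) (δ : ℝ) : ι → Bool → ℝ := fun _ b => if b then δ else 1 - δ

lemma mix_isW {δ : ℝ} (h0 : 0 ≤ δ) (h1 : δ ≤ 1) {w : ι → Bool → ℝ} (hw : IsW w) : IsW (mix δ w) := by
  constructor
  · intro i b
    have := hw.nn i b
    have : 0 ≤ 1 - δ := by linarith
    unfold mix; positivity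
  · intro i
    have := hw.one i
    unfold mix
    linear_combination (1 - δ) * this

lemma cw_isW {δ : ℝ} (h0 : 0 ≤ δ) (h1 : δ ≤ 1) : IsW (cw ι δ) := by
  constructor
  · intro i b
    cases b <;> simp [cw] <;> linarith
  · intro i; simp [cw]

def supp (z : ι → Bool) : Finset ι := Finset.univ.filter fun i => z i = true

lemma resample {δ : ℝ} (h0 : 0 ≤ δ) (h1 : δ ≤ 1) {w : ι → Bool → ℝ} (hw : IsW w) (F : (ι → Bool) → ℝ) :
    E (mix δ w) F ≤ E (cw ι δ) (fun z => E w (M (supp z) F)) := by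
  let wz : (ι → Bool) → ι → Bool → ℝ := fun z i b => if z i then 1/2 else w i b
  have hwz : ∀ z, IsW (wz z) := by
    intro z
    constructor
    · intro i b
      simp only [wz]; split_ifs
      · norm_num
      · exact hw.nn i b
    · intro i
      simp only [wz]; split_ifs
      · norm_num
      · exact hw.one i
  have e1 : E (mix δ w) F = E (cw ι δ) (fun z => E (wz z) F) := by
    unfold E
    simp_rw [Finset.mul_sum]
    rw [Finset.sum_comm]
    apply Finset.sum_congr rfl
    intro x _
    have := Finset.prod_univ_sum (fun _ : ι => (Finset.univ : Finset Bool))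
      (fun i b => cw ι δ i b * (if b then 1/2 else w i (x i)))
    rw [Fintype.piFinset_univ] at this
    have e2 : ∏ i, mix δ w i (x i) = ∏ i, ∑ b, cw ι δ i b * (if b then 1/2 else w i (x i)) := by
      apply Finset.prod_congr rfl
      intro i _
      simp [cw, mix]; ring
    rw [e2, this, Finset.sum_mul]
    apply Finset.sum_congr rfl
    intro z _
    rw [Finset.prod_mul_distrib, mul_assoc]
  rw [e1]
  apply E_mono (cw_isW h0 h1)
  intro z
  calc E (wz z) F ≤ E (wz z) (M (supp z) F) := E_mono (hwz z) (self_le_M _ _)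
    _ = E w (M (supp z) F) := by
      apply E_congr_w (supp z) (hwz z) hw
      · intro i hi
        have : z i = false := by simpa [supp] using hi
        funext b
        simp [wz, this]
      · intro i hi; exact M_indep hi F

lemma E_supp {δ : ℝ} (h0 : 0 ≤ δ) (h1 : δ ≤ 1) :
    E (cw ι δ) (fun z => ((supp z).card : ℝ)) = δ * Fintype.card ι := by
  have e : (fun z : ι → Bool => ((supp z).card : ℝ)) = fun z => ∑ i, if z i then (1:ℝ) else 0 := by
    funext z
    simp [supp]
  rw [e, E_sum]
  have : ∀ i, E (cw ι δ) (fun z => if z i then (1:ℝ) else 0) = δ := by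
    intro i
    rw [← E_A (cw_isW h0 h1) i]
    have : A (cw ι δ) i (fun z => if z i then (1:ℝ) else 0) = fun _ => δ := by
      funext z; simp [A, cw]
    rw [this, E_const (cw_isW h0 h1)]
  simp [this, mul_comm]

open Classical in
lemma resample_good {δ : ℝ} (h0 : 0 < δ) (h1 : δ ≤ 1) {w : ι → Bool → ℝ} (hw : IsW w)
    (F : (ι → Bool) → ℝ) (hF : ∀ x, F x = 0 ∨ F x = 1) {ε : ℝ} (hε : 0 < ε) (hn : 0 < Fintype.card ι)
    (h : 1 - ε ≤ E (mix δ w) F) :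
    1/2 ≤ E (cw ι δ) (fun z => if ((supp z).card : ℝ) ≤ 4 * δ * Fintype.card ι ∧
      1 - 4 * ε ≤ E w (M (supp z) F) then 1 else 0) := by
  have hn' : (0:ℝ) < Fintype.card ι := by exact_mod_cast hn
  have hc := cw_isW (ι := ι) h0.le h1
  have r := resample h0.le h1 hw F
  have key : ∀ z : ι → Bool, 1 - 1/(4*ε) * (1 - E w (M (supp z) F)) - 1/(4 * δ * Fintype.card ι) * (supp z).card ≤
      (if ((supp z).card : ℝ) ≤ 4 * δ * Fintype.card ι ∧
      1 - 4 * ε ≤ E w (M (supp z) F) then (1:ℝ) else 0) := by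
    intro z
    have hle : E w (M (supp z) F) ≤ 1 := by
      rw [← E_const hw 1]
      apply E_mono hw
      intro x
      rcases M_bool (supp z) hF x with h | h <;> simp [h]
    have a1 : 0 ≤ 1/(4*ε) * (1 - E w (M (supp z) F)) := by
      have : 0 ≤ 1 - E w (M (supp z) F) := by linarith
      positivity
    have a2 : 0 ≤ 1/(4 * δ * Fintype.card ι) * ((supp z).card:ℝ) := by positivity
    split_ifs with hc
    · linarith
    · rw [not_and_or] at hc
      rcases hc with hc | hc
      · push Not at hc
        have : 1 ≤ 1/(4 * δ * Fintype.card ι) * ((supp z).card:ℝ) := by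
          rw [one_div, inv_mul_eq_div, le_div_iff₀ (by positivity)]; linarith
        linarith
      · push Not at hc
        have : 1 ≤ 1/(4*ε) * (1 - E w (M (supp z) F)) := by
          rw [one_div, inv_mul_eq_div, le_div_iff₀ (by positivity)]; linarith
        linarith
  refine le_trans ?_ (E_mono hc key)
  rw [E_sub, E_sub, E_smul, E_smul, E_sub, E_const hc, E_supp h0.le h1]
  have b1 : 1/(4*ε) * (1 - E (cw ι δ) (fun z => E w (M (supp z) F))) ≤ 1/4 := by
    rw [one_div, inv_mul_eq_div, div_le_iff₀ (by positivity)]; linarith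
  have b2 : 1/(4 * δ * Fintype.card ι) * (δ * Fintype.card ι) = 1/4 := by field_simp
  rw [b2]; linarith


/-! one round -/

def pre (n Mm : ℕ) [NeZero Mm] (S : Finset (Fin Mm)) : Finset (Fin n) :=
  Finset.univ.filter fun x => Fin.ofNat Mm x.val ∈ S

lemma pre_card (n Mm : ℕ) [NeZero Mm] (S : Finset (Fin Mm)) :
    (pre n Mm S).card ≤ (n / Mm + 1) * S.card := by
  apply Finset.card_le_mul_card_image_of_maps_to (f := fun x : Fin n => Fin.ofNat Mm x.val)
  · intro x hx
    simpa [pre] using hx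
  · intro b _
    have : Finset.card (Finset.range (n / Mm + 1)) = n / Mm + 1 := Finset.card_range _
    rw [← this]
    apply Finset.card_le_card_of_injOn (fun x : Fin n => x.val / Mm)
    · intro x _
      simp only [Finset.coe_range, Set.mem_Iio]
      exact Nat.lt_succ_of_le (Nat.div_le_div_right x.isLt.le)
    · intro x hx y hy hxy
      simp only [Finset.coe_filter, Set.mem_setOf_eq] at hx hy
      have h1 : x.val % Mm = y.val % Mm := by
        have := congrArg Fin.val (hx.2.trans hy.2.symm)
        simpa [Fin.ofNat] using this
      simp only at hxy
      apply Fin.ext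
      rw [← Nat.div_add_mod x.val Mm, ← Nat.div_add_mod y.val Mm, hxy, h1]

def U {n Mm m : ℕ} [NeZero Mm] (a : (Fin m → Fin n) × Finset (Fin Mm)) : Finset (Fin n) :=
  pre n Mm a.2 ∪ Finset.univ.image a.1

open Classical in
lemma oneround {n : ℕ} (hn : 0 < n) {w : Fin n → Bool → ℝ} (hw : IsW w) {lam p ε L T : ℝ} (hlam : 0 < lam)
    (hl : ∀ i b, lam ≤ w i b) (hp : 0 < p) (hε : 0 < ε) (hL : 0 ≤ L) (hT : 0 < T)
    (hTL : 3 * T ≤ lam * (2 * (L + 1) * (p * ε))) (k m Mm : ℕ) [NeZero Mm]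
    (hk : 1 ≤ (k : ℝ) * (lam * Real.exp (-2 * L))) (hm : 2 * (n:ℝ) ≤ m * T)
    (f : (Fin n → Bool) → ℝ) (hf : ∀ x, f x = 0 ∨ f x = 1) (hE : p ≤ E w f) :
    (n:ℝ)^m / 2 ≤ ∑ a : (Fin m → Fin n) × Finset (Fin Mm),
      (if a.2.card ≤ k ∧ 1 - ε ≤ E w (M (U a) f) then (1:ℝ) else 0) := by
  set θ := lam * Real.exp (-2 * L) with hθ
  have hθ0 : 0 < θ := by positivity
  have hn' : (0:ℝ) < n := by exact_mod_cast hn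
  let v : Finset (Fin n) → ℝ := fun B => E w (M B f)
  have hmono : ∀ B C, B ⊆ C → v B ≤ v C := fun B C h => E_mono hw (M_mono h f)
  have hle : ∀ B, v B ≤ 1 := by
    intro B
    rw [← E_const hw 1]
    apply E_mono hw
    intro x
    rcases M_bool B hf x with h | h <;> simp [h]
  have hv0 : v ∅ = E w f := by simp only [v, M_empty]
  have hinc : ∀ C, p ≤ v C → v C < 1 - ε → (∀ i, v (insert i C) < v C + θ) →
      T ≤ ∑ i, (v (insert i C) - v C) := by
    intro C h1 h2 h3
    have hb := M_bool C hf
    have hi : ∀ i, lam * E w (fun x => D i (M C f) x ^ 2) ≤ v (insert i C) - v C := by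
      intro i
      have := inc hw hl hb i
      rw [M_M, ← Finset.insert_eq] at this
      exact this
    have hkk := kkl hw (M C f) hb L (by
      intro i
      have a1 := hi i
      have a2 := h3 i
      have a3 : lam * E w (fun x => D i (M C f) x ^ 2) ≤ lam * Real.exp (-2 * L) := by linarith
      exact le_of_mul_le_mul_left a3 hlam)
    have hsum : lam * ∑ i, E w (fun x => D i (M C f) x ^ 2) ≤ ∑ i, (v (insert i C) - v C) := by
      rw [Finset.mul_sum]; exact Finset.sum_le_sum fun i _ => hi i
    change 2 * (L+1) * (v C * (1 - v C)) ≤ _ at hkk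
    have hpe : p * ε ≤ v C * (1 - v C) := mul_le_mul h1 (by linarith) hε.le (by linarith)
    have h5 : 2 * (L+1) * (p * ε) ≤ 2 * (L+1) * (v C * (1 - v C)) :=
      mul_le_mul_of_nonneg_left hpe (by linarith)
    have h6 := mul_le_mul_of_nonneg_left (h5.trans hkk) hlam.le
    linarith
  have hproc := process v p ε θ T hθ0 hT.le hmono hle hinc m ∅ (by rw [hv0]; exact hE)
  rw [Fintype.card_fin] at hproc
  set Q := ∑ ω : Fin m → Fin n, (if Good v ε θ ∅ ω then (0:ℝ) else 1) with hQ
  have hQ0 : 0 ≤ Q := Finset.sum_nonneg fun ω _ => by split_ifs <;> norm_num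
  have hQ1 : Q ≤ (n:ℝ)^m / 2 := by
    have a1 : (n:ℝ) * n^m * (1 - v ∅) ≤ n * n^m := by
      have : (0:ℝ) ≤ n * n^m := by positivity
      have h0 : 0 ≤ v ∅ := by rw [hv0]; linarith
      nlinarith
    have a2 := mul_le_mul_of_nonneg_right hm hQ0
    have a3 : (n:ℝ) * (2 * Q) ≤ n * n^m := by linarith
    have := le_of_mul_le_mul_left a3 hn'
    linarith
  have hG : ∑ ω : Fin m → Fin n, (if Good v ε θ ∅ ω then (1:ℝ) else 0) = (n:ℝ)^m - Q := by
    rw [hQ, eq_sub_iff_add_eq, ← Finset.sum_add_distrib]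
    have : ∀ ω : Fin m → Fin n, ((if Good v ε θ ∅ ω then (1:ℝ) else 0) + if Good v ε θ ∅ ω then (0:ℝ) else 1) = 1 := by
      intro ω; split_ifs <;> norm_num
    simp [this]
  have hfin : ∑ ω : Fin m → Fin n, (if Good v ε θ ∅ ω then (1:ℝ) else 0) ≤
      ∑ a : (Fin m → Fin n) × Finset (Fin Mm),
      (if a.2.card ≤ k ∧ 1 - ε ≤ E w (M (U a) f) then (1:ℝ) else 0) := by
    rw [Fintype.sum_prod_type]
    apply Finset.sum_le_sum
    intro ω _
    have hnn : ∀ S ∈ (Finset.univ : Finset (Finset (Fin Mm))),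
      (0:ℝ) ≤ (if S.card ≤ k ∧ 1 - ε ≤ E w (M (U (ω, S)) f) then (1:ℝ) else 0) := by
      intro S _; split_ifs <;> norm_num
    split_ifs with hg
    · obtain ⟨K, hK1, hK2⟩ := hg
      let S : Finset (Fin Mm) := K.image fun x : Fin n => Fin.ofNat Mm x.val
      refine le_trans ?_ (Finset.single_le_sum hnn (Finset.mem_univ S))
      rw [if_pos]
      constructor
      · refine Finset.card_image_le.trans ?_
        have h0 : 0 ≤ v ∅ := by rw [hv0]; linarith
        have : (K.card : ℝ) * θ ≤ k * θ := by linarith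
        exact_mod_cast le_of_mul_le_mul_right this hθ0
      · refine hK2.trans (hmono _ _ ?_)
        rw [Finset.empty_union]
        apply Finset.union_subset_union_left
        intro x hx
        simp only [pre, Finset.mem_filter, Finset.mem_univ, true_and]
        exact Finset.mem_image_of_mem _ hx
    · exact Finset.sum_nonneg hnn
  linarith

/-! many rounds -/

noncomputable def EE {n : ℕ} (w : ℕ → Fin n → Bool → ℝ) : (j : ℕ) → ((Fin j → Fin n → Bool) → ℝ) → ℝ
  | 0, F => F Fin.elim0
  | j+1, F => EE w j (fun h => E (w j) (fun x => F (Fin.snoc (α := fun _ => Fin n → Bool) h x)))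

noncomputable def V {n : ℕ} (w : ℕ → Fin n → Bool → ℝ) (B : Finset (Fin n)) :
    (j : ℕ) → ((Fin j → Fin n → Bool) → ℝ) → ℝ
  | 0, F => F Fin.elim0
  | j+1, F => V w B j (fun h => E (w j) (M B (fun x => F (Fin.snoc (α := fun _ => Fin n → Bool) h x))))

variable {n : ℕ}

lemma EE_mono {w : ℕ → Fin n → Bool → ℝ} (hw : ∀ i, IsW (w i)) (j : ℕ) :
    ∀ {F G : (Fin j → Fin n → Bool) → ℝ}, (∀ h, F h ≤ G h) → EE w j F ≤ EE w j G := by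
  induction j with
  | zero => intro F G h; exact h _
  | succ j ih => intro F G h; exact ih fun h' => E_mono (hw j) fun x => h _

lemma EE_sum {κ : Type} (s : Finset κ) (w : ℕ → Fin n → Bool → ℝ) (j : ℕ) :
    ∀ (F : κ → (Fin j → Fin n → Bool) → ℝ),
    EE w j (fun h => ∑ k ∈ s, F k h) = ∑ k ∈ s, EE w j (F k) := by
  induction j with
  | zero => intro F; rfl
  | succ j ih => intro F; simp only [EE, E_sum]; rw [ih]

lemma EE_smul (w : ℕ → Fin n → Bool → ℝ) (j : ℕ) : ∀ (c : ℝ) (F : (Fin j → Fin n → Bool) → ℝ),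
    EE w j (fun h => c * F h) = c * EE w j F := by
  induction j with
  | zero => intro c F; rfl
  | succ j ih => intro c F; simp only [EE, E_smul]; rw [ih]

lemma EE_add (w : ℕ → Fin n → Bool → ℝ) (j : ℕ) : ∀ (F G : (Fin j → Fin n → Bool) → ℝ),
    EE w j (fun h => F h + G h) = EE w j F + EE w j G := by
  induction j with
  | zero => intro c F; rfl
  | succ j ih => intro c F; simp only [EE, E_add]; rw [ih]

lemma EE_const {w : ℕ → Fin n → Bool → ℝ} (hw : ∀ i, IsW (w i)) (j : ℕ) (c : ℝ) :
    EE w j (fun _ => c) = c := by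
  induction j with
  | zero => rfl
  | succ j ih => simp only [EE, E_const (hw j)]; exact ih

lemma V_mono {w : ℕ → Fin n → Bool → ℝ} (hw : ∀ i, IsW (w i)) {B C : Finset (Fin n)} (hBC : B ⊆ C) (j : ℕ) :
    ∀ {F G : (Fin j → Fin n → Bool) → ℝ}, (∀ h, F h ≤ G h) → V w B j F ≤ V w C j G := by
  induction j with
  | zero => intro F G h; exact h _
  | succ j ih =>
    intro F G h
    exact ih fun h' => E_mono (hw j) fun x => (M_mono hBC _ x).trans (M_mono_F C (fun x => h _) x)

lemma V_smul {w : ℕ → Fin n → Bool → ℝ} (hw : ∀ i, IsW (w i)) (B : Finset (Fin n)) (j : ℕ) {c : ℝ} (hc : 0 ≤ c) :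
    ∀ (F : (Fin j → Fin n → Bool) → ℝ), c * V w B j F ≤ V w B j (fun h => c * F h) := by
  induction j with
  | zero => intro F; exact le_rfl
  | succ j ih =>
    intro F
    refine (ih _).trans (V_mono hw subset_rfl j fun h => ?_)
    rw [← E_smul]
    apply E_mono (hw j)
    intro x
    obtain ⟨z, hz⟩ := M_ex B (fun x => F (Fin.snoc (α := fun _ => Fin n → Bool) h x)) x
    rw [← hz]
    exact le_M B (fun x => c * F (Fin.snoc (α := fun _ => Fin n → Bool) h x)) z x

lemma averaging {w : ℕ → Fin n → Bool → ℝ} (hw : ∀ i, IsW (w i)) (j : ℕ) {κ : Type} [Fintype κ]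
    (W : κ → ℝ) (hW : ∀ a, 0 ≤ W a) (S : ℝ) (hS : 0 < S) (hWS : ∑ a, W a = S)
    (g : (Fin j → Fin n → Bool) → ℝ) (G : κ → (Fin j → Fin n → Bool) → ℝ) (c q : ℝ) (hc : 0 ≤ c)
    (h : ∀ x, c * g x ≤ ∑ a, W a * G a x) (hq : q ≤ EE w j g) :
    ∃ a, c * q ≤ S * EE w j (G a) := by
  by_contra hcon
  push Not at hcon
  have h1 := EE_mono hw j h
  rw [EE_smul, EE_sum] at h1
  simp_rw [EE_smul] at h1
  have h2 : c * q ≤ ∑ a, W a * EE w j (G a) := (mul_le_mul_of_nonneg_left hq hc).trans h1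
  have h3 : ∑ a, W a * (c * q - S * EE w j (G a)) ≤ 0 := by
    have : ∑ a, W a * (c * q - S * EE w j (G a)) = S * (c * q) - S * ∑ a, W a * EE w j (G a) := by
      rw [← hWS, Finset.sum_mul, hWS, Finset.mul_sum, ← Finset.sum_sub_distrib]
      apply Finset.sum_congr rfl; intros; ring
    rw [this]
    nlinarith
  have h4 : ∀ a ∈ Finset.univ, 0 ≤ W a * (c * q - S * EE w j (G a)) := fun a _ =>
    mul_nonneg (hW a) (by linarith [hcon a])
  have h5 := (Finset.sum_eq_zero_iff_of_nonneg h4).1 (le_antisymm h3 (Finset.sum_nonneg h4))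
  have h6 : ∀ a, W a = 0 := by
    intro a
    rcases mul_eq_zero.1 (h5 a (Finset.mem_univ a)) with h | h
    · exact h
    · linarith [hcon a]
  simp [h6] at hWS
  linarith


noncomputable def tw : ℕ → ℝ → ℝ
  | 0, x => x
  | j+1, x => (2:ℝ) ^ (tw j x)

lemma tw_add (a b : ℕ) (x : ℝ) : tw (a + b) x = tw a (tw b x) := by
  induction a with
  | zero => simp [tw]
  | succ a ih => rw [Nat.succ_add]; simp only [tw]; rw [ih]

lemma self_le_two_rpow (x : ℝ) : x + (1/4) ≤ (2:ℝ) ^ x := by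
  -- 2^x = exp(x log 2) with tangent bound, via bernoulli on small pieces
  have h1 : (2:ℝ)^x = Real.exp (Real.log 2 * x) := Real.rpow_def_of_pos (by norm_num) x
  have hl := Real.log_two_gt_d9
  have hl2 := Real.log_two_lt_d9
  -- tangent at x = 1/2
  have h2 : (2:ℝ)^x = 2 * Real.exp (Real.log 2 * (x - 1)) := by
    rw [h1, mul_sub, Real.exp_sub, mul_one, Real.exp_log (by norm_num)]; field_simp
  have h3 := Real.add_one_le_exp (Real.log 2 * (x - 1))
  have h4 := Real.add_one_le_exp (Real.log 2 * x)
  rcases le_or_gt 1 x with h | h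
  · rw [h2]; nlinarith
  · rcases le_or_gt 0 x with h' | h'
    · rw [h1]; nlinarith
    · rcases le_or_gt (-1/4) x with h'' | h''
      · rw [h1]; nlinarith
      · rw [h1]; have := Real.exp_pos (Real.log 2 * x); linarith

lemma le_two_rpow (x : ℝ) : x ≤ (2:ℝ) ^ x := by linarith [self_le_two_rpow x]

lemma le_tw (k : ℕ) (x : ℝ) : x ≤ tw k x := by
  induction k with
  | zero => exact le_rfl
  | succ k ih => exact ih.trans (le_two_rpow _)

lemma tw_mono (k : ℕ) {x y : ℝ} (h : x ≤ y) : tw k x ≤ tw k y := by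
  induction k with
  | zero => exact h
  | succ k ih => exact Real.rpow_le_rpow_of_exponent_le (by norm_num) ih

noncomputable def kk (y : ℝ) : ℕ := ⌈2 * y * Real.exp (24 * y^4)⌉₊
noncomputable def MM (y : ℝ) : ℕ := ⌈(kk y : ℝ) * y⌉₊

lemma numeric {y : ℝ} (hy : 2000 ≤ y) : 8 * y * (2:ℝ)^(MM y) ≤ tw 3 y := by
  have hy0 : 0 < y := by linarith
  have hE1 : 1 ≤ Real.exp (24 * y^4) := Real.one_le_exp (by positivity)
  have hk : (kk y : ℝ) ≤ 2 * y * Real.exp (24 * y^4) + 1 := (Nat.ceil_lt_add_one (by positivity)).le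
  have hM : (MM y : ℝ) ≤ kk y * y + 1 := (Nat.ceil_lt_add_one (by positivity)).le
  have hbig : 25 * y^4 ≤ Real.log 2 * (2:ℝ)^y := by
    have hl := Real.log_two_gt_d9
    have h1 : (2:ℝ)^y = Real.exp (Real.log 2 * y) := Real.rpow_def_of_pos (by norm_num) y
    have h2 := Real.pow_div_factorial_le_exp (Real.log 2 * y) (by positivity) 6
    have h3 : (y/2)^6 ≤ (Real.log 2 * y)^6 := by
      apply pow_le_pow_left₀ (by positivity); nlinarith
    have hf : ((Nat.factorial 6 : ℕ) : ℝ) = 720 := by norm_num [Nat.factorial]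
    rw [hf] at h2
    have h4 : 50 * y^4 ≤ (2:ℝ)^y := by
      rw [h1]
      refine le_trans ?_ h2
      rw [le_div_iff₀ (by norm_num)]
      refine le_trans ?_ h3
      have : (y/2)^6 = y^4 * (y^2/64) := by ring
      rw [this]
      have h5 : 36000 ≤ y^2/64 := by nlinarith
      have : 0 ≤ y^4 := by positivity
      nlinarith
    have : 0 ≤ y^4 := by positivity
    nlinarith
  have h22 : Real.exp (25 * y^4) ≤ (2:ℝ)^((2:ℝ)^y) := by
    rw [Real.rpow_def_of_pos (by norm_num : (0:ℝ) < 2) ((2:ℝ)^y)]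
    exact Real.exp_le_exp.2 hbig
  have h25 : Real.exp (25 * y^4) = Real.exp (24 * y^4) * Real.exp (y^4) := by
    rw [← Real.exp_add]; congr 1; ring
  have hpoly : 2 * y^2 + 2 * y + 5 ≤ Real.exp (y^4) := by
    have := Real.add_one_le_exp (y^4)
    have h6 : 4000000 * y^2 ≤ y^4 := by
      have : y^4 = y^2 * y^2 := by ring
      rw [this]; apply mul_le_mul_of_nonneg_right _ (by positivity); nlinarith
    nlinarith
  have hsum : 3 + y + MM y ≤ (2:ℝ)^((2:ℝ)^y) := by
    refine le_trans ?_ h22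
    rw [h25]
    have a1 : 3 + y + MM y ≤ 2 * y^2 * Real.exp (24 * y^4) + 2 * y + 4 := by nlinarith
    have a2 : 2 * y^2 * Real.exp (24 * y^4) + 2 * y + 4 ≤ Real.exp (24 * y^4) * (2 * y^2 + 2 * y + 5) := by
      nlinarith
    have a3 := mul_le_mul_of_nonneg_left hpoly (Real.exp_pos (24 * y^4)).le
    linarith
  calc 8 * y * (2:ℝ)^(MM y) ≤ (2:ℝ)^(3:ℝ) * (2:ℝ)^y * (2:ℝ)^(MM y : ℝ) := by
        rw [Real.rpow_natCast]
        have := le_two_rpow y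
        norm_num
        gcongr
    _ = (2:ℝ)^(3 + y + MM y) := by
        rw [← Real.rpow_add (by norm_num), ← Real.rpow_add (by norm_num)]
    _ ≤ tw 3 y := by
        simp only [tw]
        exact Real.rpow_le_rpow_of_exponent_le (by norm_num) hsum

lemma card_arith {n Mm k s m : ℕ} {δ y cT cU cz cp ci : ℝ} (hδ : 0 < δ) (hδy : 1 ≤ δ * y)
    (hkn : (k : ℝ) + 1 ≤ 2 * δ * n) (hMM1 : (k : ℝ) * y ≤ Mm) (hMM0 : (1:ℝ) ≤ Mm)
    (hz : cz ≤ 4 * δ * n) (hm2 : (m:ℝ) ≤ δ * n + 1) (hs : s ≤ k) (c1 : cT ≤ cz + cU) (c2 : cU ≤ cp + ci)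
    (c3 : ci ≤ m) (h1 : cp ≤ (((n / Mm : ℕ):ℝ) + 1) * s) : cT ≤ 8 * δ * n := by
  have c4 : cp ≤ ((n:ℝ) / Mm + 1) * k := by
    refine h1.trans ?_
    have h2 : ((n / Mm : ℕ):ℝ) ≤ (n:ℝ) / Mm := Nat.cast_div_le
    have h3 : (s : ℝ) ≤ k := by exact_mod_cast hs
    gcongr
  have c5 : (n:ℝ) / Mm * k ≤ δ * n := by
    rw [div_mul_eq_mul_div, div_le_iff₀ (by linarith)]
    have h7 : (k : ℝ) ≤ δ * Mm := by
      have h8 := mul_le_mul_of_nonneg_left hMM1 hδ.le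
      have h9 : (0:ℝ) ≤ k := Nat.cast_nonneg _
      nlinarith
    have h9 : (0:ℝ) ≤ n := Nat.cast_nonneg _
    nlinarith
  linarith

set_option maxHeartbeats 1000000 in
open Classical in
lemma step {n : ℕ} (w : ℕ → Fin n → Bool → ℝ) (hw : ∀ i, IsW (w i)) (j : ℕ) {δ ε y : ℝ} (hy : 2000 ≤ y)
    (hδ : 0 < δ) (hδ1 : δ ≤ 1) (hε : 0 < ε) (hδy : 1 ≤ δ * y) (hεy : 1 ≤ ε * y)
    (hn : tw 3 y ≤ n) (f : (Fin (j+1) → Fin n → Bool) → ℝ) (hf : ∀ x, f x = 0 ∨ f x = 1)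
    (hE : 1 / y ≤ EE (fun i => mix δ (w i)) (j+1) f) :
    ∃ (B : Finset (Fin n)) (g : (Fin j → Fin n → Bool) → ℝ), (B.card : ℝ) ≤ 8 * δ * n ∧
      (∀ x, g x = 0 ∨ g x = 1) ∧ 1 / tw 3 y ≤ EE (fun i => mix δ (w i)) j g ∧
      ∀ h, (1 - 4 * ε) * g h ≤ E (w j) (M B (fun x => f (Fin.snoc (α := fun _ => Fin n → Bool) h x))) := by
  have hy0 : 0 < y := by linarith
  have hnum := numeric hy
  have hmw : ∀ i, IsW (mix δ (w i)) := fun i => mix_isW hδ.le hδ1 (hw i)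
  have h2M : (MM y : ℝ) < (2:ℝ)^(MM y) := by exact_mod_cast Nat.lt_two_pow_self
  have hkk1 : 2 * y * Real.exp (24 * y^4) ≤ kk y := Nat.le_ceil _
  have hkk0 : (1:ℝ) ≤ kk y := by
    have : 1 ≤ Real.exp (24 * y^4) := Real.one_le_exp (by positivity)
    nlinarith
  have hMM1 : (kk y : ℝ) * y ≤ MM y := Nat.le_ceil _
  have hkM : (kk y : ℝ) ≤ MM y := by nlinarith
  have hMM0 : (1:ℝ) ≤ MM y := by linarith
  haveI : NeZero (MM y) := ⟨by intro h; rw [h] at hMM0; norm_num at hMM0⟩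
  have hnR : 8 * y * (2:ℝ)^(MM y) ≤ n := hnum.trans hn
  have hn0 : (0:ℝ) < n := lt_of_lt_of_le (by positivity) hnR
  have hn0' : 0 < n := by exact_mod_cast hn0
  have hkn : (kk y : ℝ) + 1 ≤ 2 * δ * n := by
    have a1 : 8 * (2:ℝ)^(MM y) ≤ δ * n := by
      have := mul_le_mul_of_nonneg_left hnR hδ.le
      have h3 : (0:ℝ) < 2^(MM y) := by positivity
      nlinarith
    linarith
  let fh : (Fin j → Fin n → Bool) → (Fin n → Bool) → ℝ := fun h x => f (Fin.snoc (α := fun _ => Fin n → Bool) h x)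
  have hfh : ∀ h x, fh h x = 0 ∨ fh h x = 1 := fun h x => hf _
  -- step 1
  let g1 : (Fin j → Fin n → Bool) → ℝ := fun h => if 1/(2*y) ≤ E (mix δ (w j)) (fh h) then 1 else 0
  have hg1 : 1/(2*y) ≤ EE (fun i => mix δ (w i)) j g1 := by
    have key : ∀ h, E (mix δ (w j)) (fh h) ≤ g1 h + 1/(2*y) := by
      intro h
      have hle : E (mix δ (w j)) (fh h) ≤ 1 := by
        rw [← E_const (hmw j) 1]
        apply E_mono (hmw j)
        intro x; rcases hfh h x with e | e <;> rw [e] <;> norm_num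
      have : 0 < 1/(2*y) := by positivity
      simp only [g1]
      split_ifs with hc
      · linarith
      · push Not at hc; linarith
    have := EE_mono (w := fun i => mix δ (w i)) hmw j key
    rw [EE_add, EE_const hmw] at this
    have e : 1/y = 1/(2*y) + 1/(2*y) := by field_simp; norm_num
    have h2 : EE (fun i => mix δ (w i)) (j+1) f = EE (fun i => mix δ (w i)) j (fun h => E (mix δ (w j)) (fh h)) := rfl
    linarith
  -- step 2
  let m : ℕ := ⌈δ * n⌉₊
  have hm1 : δ * n ≤ m := Nat.le_ceil _
  have hm2 : (m:ℝ) ≤ δ * n + 1 := (Nat.ceil_lt_add_one (by positivity)).le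
  have hor : ∀ h, ((n:ℝ)^m / 2) * g1 h ≤ ∑ a : (Fin m → Fin n) × Finset (Fin (MM y)),
      1 * (if a.2.card ≤ kk y ∧ 1 - ε ≤ E (mix δ (w j)) (M (U a) (fh h)) then (1:ℝ) else 0) := by
    intro h
    simp only [one_mul]
    by_cases hc : 1/(2*y) ≤ E (mix δ (w j)) (fh h)
    · simp only [g1, if_pos hc, mul_one]
      refine oneround hn0' (hmw j) (lam := δ/2) (L := 12 * y^4) (T := 2/δ) (by positivity) ?_ (by positivity : 0 < 1/(2*y))
        hε (by positivity) (by positivity) ?_ (kk y) m (MM y) ?_ ?_ (fh h) (hfh h) hc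
      · intro i b
        have := (hw j).nn i b
        have h3 : 0 ≤ (1 - δ) * w j i b := mul_nonneg (by linarith) this
        simp only [mix]; linarith
      · have e : δ / 2 * (2 * (12 * y^4 + 1) * (1/(2*y) * ε)) = δ * ε * (12 * y^4 + 1) / (2 * y) := by
          field_simp
        rw [e, le_div_iff₀ (by positivity), ← mul_div_assoc, div_mul_eq_mul_div, div_le_iff₀ hδ]
        have h5 : 1 ≤ (δ * y)^2 * (ε * y) := by
          have : 1 ≤ (δ*y)^2 := one_le_pow₀ hδy
          nlinarith
        have h6 : δ * ε * (12 * y^4 + 1) * δ = 12 * y * ((δ * y)^2 * (ε * y)) + δ^2 * ε := by ring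
        rw [h6]
        have : 0 ≤ δ^2 * ε := by positivity
        nlinarith
      · have e : Real.exp (24 * y^4) * Real.exp (-2 * (12 * y^4)) = 1 := by
          rw [← Real.exp_add]; ring_nf; simp
        have h5 := mul_le_mul_of_nonneg_right hkk1 (show 0 ≤ δ/2 * Real.exp (-2 * (12 * y^4)) by positivity)
        have h6 : 2 * y * Real.exp (24 * y^4) * (δ/2 * Real.exp (-2 * (12 * y^4))) = δ * y := by
          calc _ = δ * y * (Real.exp (24 * y^4) * Real.exp (-2 * (12 * y^4))) := by ring
            _ = _ := by rw [e, mul_one]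
        linarith
      · rw [← mul_div_assoc, le_div_iff₀ hδ]; nlinarith
    · simp only [g1, if_neg hc, mul_zero]
      exact Finset.sum_nonneg fun a _ => by split_ifs <;> norm_num
  have hnm : (0:ℝ) < (n:ℝ)^m := by positivity
  obtain ⟨a, ha⟩ := averaging (w := fun i => mix δ (w i)) hmw j (κ := (Fin m → Fin n) × Finset (Fin (MM y)))
    (fun _ => 1) (fun _ => zero_le_one)
    ((n:ℝ)^m * 2^(MM y)) (by positivity) (by simp) g1
    (fun a h => if a.2.card ≤ kk y ∧ 1 - ε ≤ E (mix δ (w j)) (M (U a) (fh h)) then (1:ℝ) else 0)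
    ((n:ℝ)^m / 2) (1/(2*y)) (by positivity) hor hg1
  set g2 : (Fin j → Fin n → Bool) → ℝ := fun h =>
    if a.2.card ≤ kk y ∧ 1 - ε ≤ E (mix δ (w j)) (M (U a) (fh h)) then (1:ℝ) else 0 with hg2def
  have hg2 : 1/(4 * y * 2^(MM y)) ≤ EE (fun i => mix δ (w i)) j g2 := by
    have h5 : (n:ℝ)^m * (1/(4*y)) ≤ (n:ℝ)^m * (2^(MM y) * EE (fun i => mix δ (w i)) j g2) := by
      calc _ = (n:ℝ)^m / 2 * (1/(2*y)) := by field_simp; norm_num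
        _ ≤ _ := by rw [← mul_assoc]; exact ha
    have h6 := le_of_mul_le_mul_left h5 hnm
    rw [div_le_iff₀ (by positivity)] at h6 ⊢
    linarith
  have hacard : a.2.card ≤ kk y := by
    by_contra hcon
    have : g2 = fun _ => 0 := by funext h; simp [hg2def, hcon]
    rw [this, EE_const hmw] at hg2
    have : 0 < 1/(4 * y * (2:ℝ)^(MM y)) := by positivity
    linarith
  -- step 3
  have hrs : ∀ h, (1/2) * g2 h ≤ ∑ z : Fin n → Bool, (∏ i, cw (Fin n) δ i (z i)) *
      (if ((supp z).card : ℝ) ≤ 4 * δ * Fintype.card (Fin n) ∧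
        1 - 4 * ε ≤ E (w j) (M (supp z) (M (U a) (fh h))) then (1:ℝ) else 0) := by
    intro h
    by_cases hc : a.2.card ≤ kk y ∧ 1 - ε ≤ E (mix δ (w j)) (M (U a) (fh h))
    · simp only [hg2def, if_pos hc, mul_one]
      exact resample_good hδ hδ1 (hw j) (M (U a) (fh h)) (M_bool _ (hfh h)) hε (by simpa using hn0') hc.2
    · simp only [hg2def, if_neg hc, mul_zero]
      exact Finset.sum_nonneg fun z _ => mul_nonneg (wt_nonneg (cw_isW hδ.le hδ1) z) (by split_ifs <;> norm_num)
  obtain ⟨z, hz⟩ := averaging (w := fun i => mix δ (w i)) hmw j (κ := Fin n → Bool)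
    (fun z => ∏ i, cw (Fin n) δ i (z i)) (fun z => wt_nonneg (cw_isW hδ.le hδ1) z) 1 one_pos
    (wt_sum (cw_isW hδ.le hδ1)) g2
    (fun z h => if ((supp z).card : ℝ) ≤ 4 * δ * Fintype.card (Fin n) ∧
        1 - 4 * ε ≤ E (w j) (M (supp z) (M (U a) (fh h))) then (1:ℝ) else 0)
    (1/2) _ (by norm_num) hrs hg2
  rw [one_mul] at hz
  set g3 : (Fin j → Fin n → Bool) → ℝ := fun h =>
    if ((supp z).card : ℝ) ≤ 4 * δ * Fintype.card (Fin n) ∧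
        1 - 4 * ε ≤ E (w j) (M (supp z) (M (U a) (fh h))) then (1:ℝ) else 0 with hg3def
  have hg3 : 1/(8 * y * 2^(MM y)) ≤ EE (fun i => mix δ (w i)) j g3 := by
    have e : 1/2 * (1/(4 * y * (2:ℝ)^(MM y))) = 1/(8 * y * 2^(MM y)) := by field_simp; norm_num
    rwa [e] at hz
  have hzcard : ((supp z).card : ℝ) ≤ 4 * δ * n := by
    by_contra hcon
    have : g3 = fun _ => 0 := by
      funext h
      simp only [hg3def]
      rw [if_neg]
      rintro ⟨h1, _⟩
      rw [Fintype.card_fin] at h1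
      exact hcon h1
    rw [this, EE_const hmw] at hg3
    have : 0 < 1/(8 * y * (2:ℝ)^(MM y)) := by positivity
    linarith
  refine ⟨supp z ∪ U a, g3, ?_, ?_, ?_, ?_⟩
  · have c1 : ((supp z ∪ U a).card : ℝ) ≤ (supp z).card + (U a).card := by
      exact_mod_cast Finset.card_union_le _ _
    have c2 : ((U a).card : ℝ) ≤ (pre n (MM y) a.2).card + (Finset.univ.image a.1).card := by
      exact_mod_cast Finset.card_union_le _ _
    have c3 : ((Finset.univ.image a.1).card : ℝ) ≤ m := by
      have := Finset.card_image_le (s := Finset.univ) (f := a.1)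
      rw [Finset.card_univ, Fintype.card_fin] at this
      exact_mod_cast this
    have h1 : ((pre n (MM y) a.2).card : ℝ) ≤ (((n / MM y : ℕ):ℝ) + 1) * a.2.card := by
      exact_mod_cast pre_card n (MM y) a.2
    exact card_arith hδ hδy hkn hMM1 hMM0 hzcard hm2 hacard c1 c2 c3 h1
  · intro x; simp only [hg3def]; split_ifs <;> simp
  · refine le_trans ?_ hg3
    exact one_div_le_one_div_of_le (by positivity) hnum
  · intro h
    rw [← M_M]
    by_cases hc : ((supp z).card : ℝ) ≤ 4 * δ * Fintype.card (Fin n) ∧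
        1 - 4 * ε ≤ E (w j) (M (supp z) (M (U a) (fh h)))
    · simp only [hg3def, if_pos hc, mul_one]; exact hc.2
    · simp only [hg3def, if_neg hc, mul_zero]
      apply E_nonneg (hw j)
      intro x
      rcases M_bool (supp z) (M_bool (U a) (hfh h)) x with e | e
      · exact e.symm.le
      · exact le_of_le_of_eq zero_le_one e.symm

lemma main_ind {n : ℕ} (w : ℕ → Fin n → Bool → ℝ) (hw : ∀ i, IsW (w i)) {δ ε : ℝ}
    (hδ : 0 < δ) (hδ1 : δ ≤ 1) (hε : 0 < ε) (hε4 : 4 * ε ≤ 1) (j : ℕ) :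
    ∀ (y : ℝ), 2000 ≤ y → 1 ≤ δ * y → 1 ≤ ε * y → tw (3 * j) y ≤ n →
    ∀ (f : (Fin j → Fin n → Bool) → ℝ), (∀ x, f x = 0 ∨ f x = 1) →
    1 / y ≤ EE (fun i => mix δ (w i)) j f →
    ∃ B : Finset (Fin n), (B.card : ℝ) ≤ 8 * j * δ * n ∧ 1 - 4 * j * ε ≤ V w B j f := by
  induction j with
  | zero =>
    intro y hy _ _ _ f hf hE
    refine ⟨∅, by simp, ?_⟩
    simp only [EE] at hE
    simp only [V]
    have : 0 < 1/y := by positivity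
    rcases hf Fin.elim0 with h | h
    · linarith
    · rw [h]; simp
  | succ j ih =>
    intro y hy hδy hεy hn f hf hE
    have e : tw (3 * (j+1)) y = tw (3 * j) (tw 3 y) := by rw [← tw_add]; rfl
    rw [e] at hn
    have hy3 : y ≤ tw 3 y := le_tw 3 y
    obtain ⟨B, g, h1, h2, h3, h4⟩ := step w hw j hy hδ hδ1 hε hδy hεy ((le_tw _ _).trans hn) f hf hE
    obtain ⟨B', k1, k2⟩ := ih (tw 3 y) (hy.trans hy3) (hδy.trans (by gcongr)) (hεy.trans (by gcongr)) hn g h2 h3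
    refine ⟨B ∪ B', ?_, ?_⟩
    · have : ((B ∪ B').card : ℝ) ≤ B.card + B'.card := by exact_mod_cast Finset.card_union_le _ _
      push_cast; linarith
    · have a1 : V w B' j (fun h => (1 - 4 * ε) * g h) ≤ V w (B ∪ B') (j+1) f := by
        apply V_mono hw Finset.subset_union_right
        intro h
        exact (h4 h).trans (E_mono (hw j) (M_mono Finset.subset_union_left _))
      have a2 := V_smul hw B' j (c := 1 - 4 * ε) (by linarith) g
      have a3 := mul_le_mul_of_nonneg_left k2 (show 0 ≤ 1 - 4 * ε by linarith)
      have a4 : (0:ℝ) ≤ j * ε * ε := by positivity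
      push_cast
      nlinarith


/-! strategies -/

structure Play {n j : ℕ} (B : Finset (Fin n)) (e : (Fin j → Fin n → Bool) → (Fin j → Fin n → Bool)) : Prop where
  off : ∀ α i k, k ∉ B → e α i k = α i k
  causal : ∀ α α' i, (∀ i' k, i' ≤ i → k ∉ B → α i' k = α' i' k) → e α i = e α' i

lemma EE_congr {n : ℕ} (w : ℕ → Fin n → Bool → ℝ) (j : ℕ) {F G : (Fin j → Fin n → Bool) → ℝ}
    (h : ∀ x, F x = G x) : EE w j F = EE w j G := by rw [funext h]

lemma mrg_congr {n : ℕ} {B : Finset (Fin n)} {x x' : Fin n → Bool} (h : ∀ k, k ∉ B → x k = x' k) (z : Fin n → Bool) :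
    mrg B z x = mrg B z x' := by
  funext k; simp only [mrg]; split_ifs with hk
  · rfl
  · exact h k hk

noncomputable def amax {n : ℕ} (φ : (Fin n → Bool) → ℝ) : Fin n → Bool :=
  Classical.choose (exists_eq_ciSup_of_finite (f := φ))

lemma amax_spec {n : ℕ} (φ : (Fin n → Bool) → ℝ) : φ (amax φ) = ⨆ z, φ z :=
  Classical.choose_spec (exists_eq_ciSup_of_finite (f := φ))

lemma play_exists {n : ℕ} (w : ℕ → Fin n → Bool → ℝ) (B : Finset (Fin n)) (j : ℕ) :
    ∀ F : (Fin j → Fin n → Bool) → ℝ, ∃ e, Play B e ∧ V w B j F = EE w j (fun α => F (e α)) := by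
  induction j with
  | zero =>
    intro F
    refine ⟨id, ⟨fun _ _ _ _ => rfl, fun _ _ i => i.elim0⟩, rfl⟩
  | succ j ih =>
    intro F
    obtain ⟨e, he, hV⟩ := ih (fun h => E (w j) (M B (fun x => F (Fin.snoc (α := fun _ => Fin n → Bool) h x))))
    let last : (Fin j → Fin n → Bool) → (Fin n → Bool) → (Fin n → Bool) := fun h x =>
      mrg B (amax (fun z => F (Fin.snoc (α := fun _ => Fin n → Bool) h (mrg B z x)))) x
    let e' : (Fin (j+1) → Fin n → Bool) → (Fin (j+1) → Fin n → Bool) := fun α =>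
      Fin.snoc (α := fun _ => Fin n → Bool) (e (fun i => α i.castSucc)) (last (e (fun i => α i.castSucc)) (α (Fin.last j)))
    refine ⟨e', ⟨?_, ?_⟩, ?_⟩
    · intro α i k hk
      induction i using Fin.lastCases with
      | last => simp [e', last, mrg, hk]
      | cast i => simp only [e', Fin.snoc_castSucc]; exact he.off _ i k hk
    · intro α α' i h
      induction i using Fin.lastCases with
      | last =>
        simp only [e', Fin.snoc_last]
        have h1 : e (fun i => α i.castSucc) = e (fun i => α' i.castSucc) := by
          funext i
          apply he.causal
          intro i' k _ hk
          exact h _ k (Fin.le_last _) hk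
        have h2 : ∀ z, mrg B z (α (Fin.last j)) = mrg B z (α' (Fin.last j)) :=
          mrg_congr (fun k hk => h _ k le_rfl hk)
        rw [h1]
        simp only [last, h2]
      | cast i =>
        simp only [e', Fin.snoc_castSucc]
        apply he.causal
        intro i' k hi hk
        exact h _ k (by simpa using hi) hk
    · simp only [V, EE]
      rw [hV]
      apply EE_congr
      intro h
      congr 1
      funext x
      simp only [e', Fin.snoc_castSucc, Fin.snoc_last]
      exact (amax_spec (fun z => F (Fin.snoc (α := fun _ => Fin n → Bool) (e h) (mrg B z x)))).symm

lemma play_strategy {n r : ℕ} {B : Finset (Fin n)} {e : (Fin r → Fin n → Bool) → (Fin r → Fin n → Bool)}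
    (he : Play B e) : ∃ π : Strategy n r B, ∀ α, execP B π α = e α := by
  refine ⟨fun i d => e (fun i' k => if h : i'.val < i.val + 1 then (if hk : k ∉ B then d ⟨i'.val, h⟩ ⟨k, hk⟩ else false) else false) i, ?_⟩
  intro α
  funext i k
  simp only [execP]
  split_ifs with hk
  · refine congrFun (he.causal _ _ i ?_) k
    intro i' k' hi hk'
    have : i'.val < i.val + 1 := by have : i'.val ≤ i.val := hi; omega
    simp [this, hk']
  · exact (he.off α i k hk).symm

/-! measures -/

lemma EE_eq {n : ℕ} (w : ℕ → Fin n → Bool → ℝ) (j : ℕ) : ∀ F : (Fin j → Fin n → Bool) → ℝ,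
    EE w j F = ∑ α, (∏ i : Fin j, ∏ k, w i k (α i k)) * F α := by
  induction j with
  | zero =>
    intro F
    simp only [EE]
    rw [Fintype.sum_unique]
    simp
    congr 1
  | succ j ih =>
    intro F
    simp only [EE]
    rw [ih]
    rw [← Equiv.sum_comp (Fin.snocEquiv (fun _ => Fin n → Bool)), Fintype.sum_prod_type, Finset.sum_comm]
    apply Finset.sum_congr rfl
    intro h _
    unfold E
    rw [Finset.mul_sum]
    apply Finset.sum_congr rfl
    intro x _
    simp only [Fin.snocEquiv, Equiv.coe_fn_mk]
    rw [Fin.prod_univ_castSucc]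
    simp only [Fin.snoc_castSucc, Fin.snoc_last, Fin.val_castSucc, Fin.val_last]
    ring

noncomputable def wOf {n r : ℕ} (μs : Fin r → Fin n → Measure Bool) (i : ℕ) (k : Fin n) (b : Bool) : ℝ :=
  if h : i < r then (μs ⟨i, h⟩ k {b}).toReal else 1/2

lemma wOf_isW {n r : ℕ} (μs : Fin r → Fin n → Measure Bool) (hμ : ∀ i j, IsProbabilityMeasure (μs i j)) (i : ℕ) :
    IsW (wOf μs i) := by
  constructor
  · intro k b; unfold wOf; split_ifs
    · exact ENNReal.toReal_nonneg
    · norm_num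
  · intro k; unfold wOf; split_ifs with h
    · have := hμ ⟨i, h⟩ k
      rw [← ENNReal.toReal_add (measure_ne_top _ _) (measure_ne_top _ _), ← measure_union (by simp) (measurableSet_singleton _)]
      have e : ({false} ∪ {true} : Set Bool) = Set.univ := by ext b; cases b <;> simp
      rw [e, measure_univ]; rfl
    · norm_num

lemma meas_eq {n r : ℕ} (μs : Fin r → Fin n → Measure Bool) (hμ : ∀ i j, IsProbabilityMeasure (μs i j))
    (S : Set (Fin r → Fin n → Bool)) [DecidablePred (· ∈ S)] :
    ((Measure.pi fun i => Measure.pi fun j => μs i j) S).toReal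
      = EE (wOf μs) r (fun α => if α ∈ S then 1 else 0) := by
  rw [EE_eq]
  have h1 : S = ((Finset.univ.filter (· ∈ S) : Finset (Fin r → Fin n → Bool)) : Set _) := by ext; simp
  conv_lhs => rw [h1]
  rw [← sum_measure_singleton, ENNReal.toReal_sum (fun _ _ => measure_ne_top _ _), Finset.sum_filter]
  apply Finset.sum_congr rfl
  intro α _
  rw [mul_ite, mul_one, mul_zero]
  congr 1
  rw [Measure.pi_singleton, ENNReal.toReal_prod]
  apply Finset.prod_congr rfl
  intro i _
  rw [Measure.pi_singleton, ENNReal.toReal_prod]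
  apply Finset.prod_congr rfl
  intro k _
  simp [wOf]

lemma V_le_IB {n r : ℕ} (μs : Fin r → Fin n → Measure Bool) (hμ : ∀ i j, IsProbabilityMeasure (μs i j))
    (f : (Fin r → Fin n → Bool) → Bool) (B : Finset (Fin n)) (b : Bool) :
    V (wOf μs) B r (fun α => if f α = b then 1 else 0) ≤ IB μs f B b := by
  classical
  obtain ⟨e, he, hV⟩ := play_exists (wOf μs) B r (fun α => if f α = b then 1 else 0)
  obtain ⟨π, hπ⟩ := play_strategy he
  rw [hV]
  have h1 : EE (wOf μs) r (fun α => if f (e α) = b then 1 else 0) = (IPi μs f B π b).toReal := by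
    unfold IPi
    rw [meas_eq μs hμ]
    apply EE_congr
    intro x
    simp [hπ]
  rw [h1]
  unfold IB
  apply ENNReal.toReal_mono
  · refine ne_top_of_le_ne_top ENNReal.one_ne_top (iSup_le fun π => ?_)
    exact prob_le_one
  · exact le_iSup (fun π => IPi μs f B π b) π

lemma protocol_bound {ε β : ℝ} (hε : 0 < ε) (hε1 : ε ≤ 1/2) (hβ : 0 < β) (hβ1 : β < 1) {n r : ℕ}
    (hn : tw (3 * r) ((2000 + 8/β + 4/ε) * (r + 1)) ≤ n)
    (μs : Fin r → Fin n → Measure Bool) (hμ : ∀ i j, IsProbabilityMeasure (μs i j))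
    (f : (Fin r → Fin n → Bool) → Bool) :
    ∃ B : Finset (Fin n), B.card ≤ ⌊β * (n : ℝ)⌋₊ ∧ ∃ b : Bool, 1 - ε ≤ IB μs f B b := by
  have hw := wOf_isW μs hμ
  set w := wOf μs with hwdef
  have hr : (0:ℝ) ≤ r := Nat.cast_nonneg r
  have hr1 : (0:ℝ) < r + 1 := by linarith
  set δ : ℝ := β / (8 * (r+1)) with hδdef
  set ε1 : ℝ := ε / (4 * (r+1)) with hεdef
  have hδ : 0 < δ := by positivity
  have hε0 : 0 < ε1 := by positivity
  have hδ1 : δ ≤ 1 := by rw [hδdef, div_le_one (by positivity)]; linarith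
  have hε4 : 4 * ε1 ≤ 1 := by
    rw [hεdef, ← mul_div_assoc, div_le_one (by positivity)]; linarith
  set y : ℝ := (2000 + 8/β + 4/ε) * (r + 1) with hydef
  have p1 : 0 < 8/β := by positivity
  have p2 : 0 < 4/ε := by positivity
  have hy : 2000 ≤ y := by rw [hydef]; nlinarith
  have hδy : 1 ≤ δ * y := by
    have : δ * y = β * (2000 + 4/ε) / 8 + 1 := by rw [hδdef, hydef]; field_simp; ring
    rw [this]
    have : 0 < β * (2000 + 4/ε) / 8 := by positivity
    linarith
  have hεy : 1 ≤ ε1 * y := by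
    have : ε1 * y = ε * (2000 + 8/β) / 4 + 1 := by rw [hεdef, hydef]; field_simp
    rw [this]
    have : 0 < ε * (2000 + 8/β) / 4 := by positivity
    linarith
  have hmw : ∀ i, IsW (mix δ (w i)) := fun i => mix_isW hδ.le hδ1 (hw i)
  have hsum : EE (fun i => mix δ (w i)) r (fun α => if f α = true then (1:ℝ) else 0)
      + EE (fun i => mix δ (w i)) r (fun α => if f α = false then (1:ℝ) else 0) = 1 := by
    rw [← EE_add]
    refine Eq.trans ?_ (EE_const hmw r 1)
    apply EE_congr
    intro x
    cases f x <;> simp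
  have hb : ∃ b : Bool, 1/y ≤ EE (fun i => mix δ (w i)) r (fun α => if f α = b then (1:ℝ) else 0) := by
    have : 1/y ≤ 1/2 := one_div_le_one_div_of_le (by norm_num) (by linarith)
    rcases le_total (1/2) (EE (fun i => mix δ (w i)) r (fun α => if f α = true then (1:ℝ) else 0)) with h | h
    · exact ⟨true, by linarith⟩
    · exact ⟨false, by linarith⟩
  obtain ⟨b, hb⟩ := hb
  obtain ⟨B, h1, h2⟩ := main_ind w hw hδ hδ1 hε0 hε4 r y hy hδy hεy hn (fun α => if f α = b then (1:ℝ) else 0)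
    (fun x => by split_ifs <;> simp) hb
  refine ⟨B, Nat.le_floor (h1.trans ?_), b, le_trans ?_ (h2.trans (V_le_IB μs hμ f B b))⟩
  · have : 8 * r * δ ≤ β := by
      rw [hδdef, ← mul_div_assoc, div_le_iff₀ (by positivity)]; nlinarith
    exact mul_le_mul_of_nonneg_right this (Nat.cast_nonneg n)
  · have : 4 * r * ε1 ≤ ε := by
      rw [hεdef, ← mul_div_assoc, div_le_iff₀ (by positivity)]; nlinarith
    linarith

lemma tw_iterLog (k : ℕ) (x : ℝ) (h : ∀ j ≤ k, 1 < iterLog j x) : tw k (iterLog k x) = x := by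
  induction k with
  | zero => rfl
  | succ k ih =>
    have h1 := ih (fun j hj => h j (by omega))
    have e : tw (k+1) (iterLog (k+1) x) = tw k (tw 1 (iterLog (k+1) x)) := tw_add k 1 _
    rw [e]
    have : tw 1 (iterLog (k+1) x) = iterLog k x := by
      simp only [tw, iterLog]
      exact Real.rpow_logb (by norm_num) (by norm_num) (by have := h k (by omega); linarith)
    rw [this, h1]

lemma tw_ge (k : ℕ) : (k:ℝ)/4 + 1 ≤ tw k 1 := by
  induction k with
  | zero => simp [tw]
  | succ k ih =>
    have := self_le_two_rpow (tw k 1)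
    simp only [tw]; push_cast; linarith

lemma tw_ev (C : ℝ) : ∃ r0 : ℕ, ∀ r : ℕ, r0 ≤ r → C * (r + 1) ≤ tw (2 * r) 1 := by
  obtain ⟨r0, hr0⟩ := exists_nat_ge (16 * |C| + 16)
  refine ⟨r0, fun r hr => ?_⟩
  have h0 : (r0:ℝ) ≤ r := by exact_mod_cast hr
  have hC := abs_nonneg C
  have hr' : 16 * |C| + 16 ≤ (r:ℝ) := hr0.trans h0
  have h1 : 1 ≤ r := by
    have : (1:ℝ) ≤ r := by linarith
    exact_mod_cast this
  have e : tw (2 * r) 1 = tw 1 (tw (2*r-1) 1) := by rw [← tw_add]; congr 1; omega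
  rw [e]
  have h2 : (r:ℝ)/2 ≤ tw (2*r-1) 1 := by
    have h3 := tw_ge (2*r-1)
    have : ((2*r-1 : ℕ):ℝ) = 2*r-1 := by rw [Nat.cast_sub (by omega)]; push_cast; ring
    rw [this] at h3; linarith
  have h4 := tw_mono 1 h2
  refine le_trans ?_ h4
  simp only [tw]
  have h5 : (2:ℝ)^((r:ℝ)/2) = (2:ℝ)^((r:ℝ)/4) * (2:ℝ)^((r:ℝ)/4) := by
    rw [← Real.rpow_add (by norm_num)]; congr 1; ring
  have h6 := self_le_two_rpow ((r:ℝ)/4)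
  have h7 : (r:ℝ)/4 * (r/4) ≤ (2:ℝ)^((r:ℝ)/4) * (2:ℝ)^((r:ℝ)/4) := by
    apply mul_le_mul <;> first | positivity | linarith
  rw [h5]
  refine le_trans ?_ h7
  have h8 : C * (r+1) ≤ |C| * (r+1) := mul_le_mul_of_nonneg_right (le_abs_self C) (by positivity)
  nlinarith

lemma tw_mono_height {a b : ℕ} (h : a ≤ b) (x : ℝ) : tw a x ≤ tw b x := by
  obtain ⟨c, rfl⟩ := Nat.exists_eq_add_of_le h
  rw [tw_add]
  exact tw_mono a (le_tw c x)

lemma logstar_tw (C : ℝ) (hC : 0 ≤ C) : ∃ n0 : ℕ, ∀ n : ℕ, n0 ≤ n → ∀ r : ℕ, 5 * r < logStar (n:ℝ) →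
    tw (3 * r) (C * (r+1)) ≤ n := by
  obtain ⟨r0, hr0⟩ := tw_ev C
  obtain ⟨n0, hn0⟩ := exists_nat_ge (tw (3 * r0) (C * (r0+1)))
  refine ⟨n0, fun n hn r hr => ?_⟩
  rcases le_total r0 r with h | h
  · have h1 : ∀ j ≤ 5 * r, 1 < iterLog j (n:ℝ) := by
      intro j hj
      have := Nat.notMem_of_lt_sInf (s := {j : ℕ | iterLog j (n:ℝ) ≤ 1}) (lt_of_le_of_lt hj hr)
      simpa using this
    have h2 := tw_iterLog (5 * r) n h1
    rw [← h2, show 5 * r = 3 * r + 2 * r by ring, tw_add]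
    apply tw_mono
    refine (hr0 r h).trans (tw_mono _ ?_)
    rw [← show 5 * r = 3 * r + 2 * r by ring]
    exact (h1 _ le_rfl).le
  · have h0 : (n0:ℝ) ≤ n := by exact_mod_cast hn
    have h' : (r:ℝ) ≤ r0 := by exact_mod_cast h
    refine le_trans (le_trans (tw_mono_height (by omega) _) (tw_mono _ ?_)) (hn0.trans h0)
    gcongr

end CF

/-- over any product measure, if an `(n,r)` protocol is `ε`-resilient against all
coalitions of size `⌊βn⌋`, then `r ≥ (log* n)/5`; i.e., `Ω(log* n)` rounds are necessary for
resilience against coalitions of linear size. -/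
theorem rounds_lower_bound :
    ∀ ε : ℝ, 0 < ε → ε ≤ 1/2 →
    ∀ β : ℝ, 0 < β → β < 1 →
    ∃ n₀ : ℕ, ∀ n : ℕ, n₀ ≤ n →
    ∀ r : ℕ,
    ∀ μs : Fin r → Fin n → Measure Bool, (∀ i j, IsProbabilityMeasure (μs i j)) →
    ∀ f : (Fin r → Fin n → Bool) → Bool,
    (∀ B : Finset (Fin n), B.card ≤ ⌊β * (n : ℝ)⌋₊ → ∀ b : Bool, IB μs f B b < 1 - ε) →
    (logStar (n : ℝ) : ℝ) / 5 ≤ (r : ℝ) := by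
  intro ε hε hε1 β hβ hβ1
  obtain ⟨n0, hn0⟩ := CF.logstar_tw (2000 + 8/β + 4/ε) (by positivity)
  refine ⟨n0, fun n hn r μs hμ f hres => ?_⟩
  by_contra hcon
  have hlt : (r:ℝ) * 5 < (logStar (n:ℝ) : ℝ) := by
    rw [not_le, lt_div_iff₀ (by norm_num)] at hcon
    exact hcon
  have hlt2 : 5 * r < logStar (n:ℝ) := by
    have : r * 5 < logStar (n:ℝ) := by exact_mod_cast hlt
    omega
  obtain ⟨B, hB, b, hb⟩ := CF.protocol_bound hε hε1 hβ hβ1 (hn0 n hn r hlt2) μs hμ f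
  exact absurd (hres B hB b) (not_lt.2 hb)
end
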